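/- arXiv:1902.02378 — 2 statements merged into one kernel-verified Lean document; each statement's English description precedes it below -/
import Mathlib

section
/- If R is a retract of F_n and H is a subgroup of F_n with rk(H) ≤ 3, then rk(H ∩ R) ≤ rk(H). -/
/-- `R` is a retract of the ambient group: there is an endomorphism with image `R`
restricting to the identity on `R` (equivalently, an idempotent endomorphism with image `R`). -/
def IsRetract {G : Type*} [Group G] (R : Subgroup G) : Prop :=
  ∃ r : G →* G, r.range = R ∧ ∀ x ∈ R, r x = x

/-- The subgroup `H` is free of rank `m`. -/
def HasFreeRank {G : Type*} [Group G] (H : Subgroup G) (m : ℕ) : Prop :=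
  ∃ φ : FreeGroup (Fin m) →* G, Function.Injective φ ∧ φ.range = H

namespace FreeGroupGraph

variable {ι Z : Type*} [MulAction (FreeGroup ι) Z]

/-- The permutation of `Z × ℚ` lifting the action of the `i`-th generator on `Z`, where an edge
`(z, i)` of the Schreier graph shifts the second coordinate by `w z i`. -/
def edgePerm (w : Z → ι → ℚ) (i : ι) : Equiv.Perm (Z × ℚ) where
  toFun p := (FreeGroup.of i • p.1, p.2 + w p.1 i)
  invFun p := ((FreeGroup.of i)⁻¹ • p.1, p.2 - w ((FreeGroup.of i)⁻¹ • p.1) i)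
  left_inv p := by simp
  right_inv p := by simp

/-- The sum of the cochain `w` along the path from `z` to `g • z` in the Schreier graph. -/
def pathSum (w : Z → ι → ℚ) (g : FreeGroup ι) (z : Z) : ℚ :=
  (FreeGroup.lift (edgePerm w) g (z, 0)).2

theorem lift_edgePerm_apply (w : Z → ι → ℚ) (g : FreeGroup ι) (z : Z) (a : ℚ) :
    FreeGroup.lift (edgePerm w) g (z, a) = (g • z, a + pathSum w g z) := by
  suffices h : ∃ P : Z → ℚ, ∀ z a,
      FreeGroup.lift (edgePerm w) g (z, a) = (g • z, a + P z) by
    obtain ⟨P, hP⟩ := h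
    simp [pathSum, hP]
  induction g using FreeGroup.induction_on with
  | C1 => exact ⟨0, by simp⟩
  | of i => exact ⟨fun z => w z i, by simp [edgePerm]⟩
  | inv_of i _ =>
    refine ⟨fun z => -w ((FreeGroup.of i)⁻¹ • z) i, fun z a => ?_⟩
    rw [map_inv, FreeGroup.lift_apply_of, Equiv.Perm.inv_def]
    simp [edgePerm, sub_eq_add_neg]
  | mul g h hg hh =>
    obtain ⟨P, hP⟩ := hg
    obtain ⟨P', hP'⟩ := hh
    refine ⟨fun z => P' z + P (h • z), fun z a => ?_⟩
    simp [hP, hP', mul_smul, add_assoc]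

@[simp]
theorem pathSum_of (w : Z → ι → ℚ) (i : ι) (z : Z) :
    pathSum w (FreeGroup.of i) z = w z i := by
  simp [pathSum, edgePerm]

theorem pathSum_mul (w : Z → ι → ℚ) (g h : FreeGroup ι) (z : Z) :
    pathSum w (g * h) z = pathSum w g (h • z) + pathSum w h z := by
  have := lift_edgePerm_apply w (g * h) z 0
  rw [map_mul, Equiv.Perm.mul_apply, lift_edgePerm_apply, lift_edgePerm_apply] at this
  have := congrArg Prod.snd this
  simp only [zero_add] at this
  rw [← this, add_comm]

@[simp]
theorem pathSum_one (w : Z → ι → ℚ) (z : Z) : pathSum w 1 z = 0 := by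
  simp [pathSum]

theorem pathSum_inv (w : Z → ι → ℚ) (g : FreeGroup ι) (z : Z) :
    pathSum w g⁻¹ z = -pathSum w g (g⁻¹ • z) := by
  have := pathSum_mul w g g⁻¹ z
  simp only [mul_inv_cancel, pathSum_one] at this
  linarith

/-- A cocycle is determined by its values on the generators. -/
theorem eq_pathSum (w : Z → ι → ℚ) (P : FreeGroup ι → Z → ℚ)
    (hof : ∀ i z, P (FreeGroup.of i) z = w z i)
    (hmul : ∀ g h z, P (g * h) z = P g (h • z) + P h z) (g : FreeGroup ι) (z : Z) :
    P g z = pathSum w g z := by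
  have hone : ∀ z, P 1 z = 0 := fun z => by simpa using hmul 1 1 z
  induction g using FreeGroup.induction_on generalizing z with
  | C1 => simp [hone]
  | of i => simp [hof]
  | inv_of i _ =>
    have := hmul (FreeGroup.of i) (FreeGroup.of i)⁻¹ z
    simp only [mul_inv_cancel, hone, hof] at this
    rw [pathSum_inv, pathSum_of]
    linarith
  | mul g h hg hh => rw [hmul, pathSum_mul, hg, hh]

/-- `pathSum` as a linear functional of the cochain. -/
def pathSumLinear (g : FreeGroup ι) (z : Z) : (Z → ι → ℚ) →ₗ[ℚ] ℚ where
  toFun w := pathSum w g z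
  map_add' w w' := by
    symm
    refine eq_pathSum (w + w') (fun g z => pathSum w g z + pathSum w' g z) (by simp) ?_ g z
    intro g h z
    simp only [pathSum_mul]
    ring
  map_smul' c w := by
    symm
    refine eq_pathSum (c • w) (fun g z => c • pathSum w g z) (by simp) ?_ g z
    intro g h z
    simp only [pathSum_mul, smul_add]

@[simp]
theorem pathSumLinear_apply (g : FreeGroup ι) (z : Z) (w : Z → ι → ℚ) :
    pathSumLinear g z w = pathSum w g z := rfl

/-- A cochain on a connected Schreier graph all of whose periods vanish is a coboundary. -/
theorem exists_potential (w : Z → ι → ℚ) (z₀ : Z)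
    (htrans : ∀ z, ∃ g : FreeGroup ι, g • z₀ = z)
    (hper : ∀ g : FreeGroup ι, g • z₀ = z₀ → pathSum w g z₀ = 0) :
    ∃ f : Z → ℚ, ∀ z i, w z i = f (FreeGroup.of i • z) - f z := by
  choose t ht using htrans
  have key : ∀ g, pathSum w (t (g • z₀)) z₀ = pathSum w g z₀ := by
    intro g
    have h1 : (g⁻¹ * t (g • z₀)) • z₀ = z₀ := by rw [mul_smul, ht, inv_smul_smul]
    have h2 := pathSum_mul w g (g⁻¹ * t (g • z₀)) z₀
    rw [hper _ h1, h1, mul_inv_cancel_left] at h2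
    simpa using h2
  refine ⟨fun z => pathSum w (t z) z₀, fun z i => ?_⟩
  have h := key (FreeGroup.of i * t z)
  rw [mul_smul, ht, pathSum_mul, ht, pathSum_of] at h
  simp [h]

/-- Every character of a vertex group is the period map of some cochain. -/
theorem exists_cochain (z₀ : Z) (χ : MulAction.stabilizer (FreeGroup ι) z₀ →* Multiplicative ℚ) :
    ∃ w : Z → ι → ℚ, ∀ g : MulAction.stabilizer (FreeGroup ι) z₀,
      pathSum w (g : FreeGroup ι) z₀ = (χ g).toAdd := by
  classical
  let t : Z → FreeGroup ι := fun z => if h : ∃ g : FreeGroup ι, g • z₀ = z then h.choose else 1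
  have ht : ∀ g : FreeGroup ι, t (g • z₀) • z₀ = g • z₀ := by
    intro g
    have h : ∃ g' : FreeGroup ι, g' • z₀ = g • z₀ := ⟨g, rfl⟩
    simp only [t, dif_pos h]
    exact h.choose_spec
  have hs : ∀ g : FreeGroup ι, (t (g • z₀))⁻¹ * g ∈ MulAction.stabilizer (FreeGroup ι) z₀ := by
    intro g
    rw [MulAction.mem_stabilizer_iff, mul_smul, inv_smul_eq_iff, ht]
  let f : FreeGroup ι → ℚ := fun g => (χ ⟨_, hs g⟩).toAdd
  have hf : ∀ (g : FreeGroup ι) (s : MulAction.stabilizer (FreeGroup ι) z₀),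
      f (g * s) = f g + (χ s).toAdd := by
    intro g s
    simp only [f, ← toAdd_mul, ← map_mul]
    congr 2
    apply Subtype.ext
    have : (s : FreeGroup ι) • z₀ = z₀ := s.2
    simp [mul_smul, this, mul_assoc]
  let w : Z → ι → ℚ := fun z i => f (FreeGroup.of i * t z) - f (t z)
  have key : ∀ g h : FreeGroup ι, pathSum w g (h • z₀) = f (g * h) - f h := by
    intro g
    have hof : ∀ i (h : FreeGroup ι),
        pathSum w (FreeGroup.of i) (h • z₀) = f (FreeGroup.of i * h) - f h := by
      intro i h
      rw [pathSum_of]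
      have e1 := hf (t (h • z₀)) ⟨_, hs h⟩
      have e2 := hf (FreeGroup.of i * t (h • z₀)) ⟨_, hs h⟩
      simp only [mul_assoc, mul_inv_cancel_left] at e1 e2
      simp only [w, e1, e2]
      ring
    induction g using FreeGroup.induction_on with
    | C1 => simp
    | of i => exact hof i
    | inv_of i _ =>
      intro h
      rw [pathSum_inv, ← mul_smul, hof]
      simp
    | mul g g' hg hg' =>
      intro h
      rw [pathSum_mul, ← mul_smul, hg, hg', mul_assoc]
      ring
  refine ⟨w, fun g => ?_⟩
  have h1 := key g 1
  have h2 := hf 1 g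
  rw [one_smul, mul_one] at h1
  rw [one_mul] at h2
  rw [h1, h2]
  ring

section Counting

variable [DecidableEq Z]

/-- The endpoints of a finite set of edges of the Schreier graph. -/
def endpoints (Q : Finset (Z × ι)) : Finset Z :=
  Q.image Prod.fst ∪ Q.image fun q => FreeGroup.of q.2 • q.1

theorem tail_mem_endpoints {Q : Finset (Z × ι)} {q : Z × ι} (hq : q ∈ Q) :
    q.1 ∈ endpoints Q :=
  Finset.mem_union_left _ (Finset.mem_image_of_mem _ hq)

theorem head_mem_endpoints {Q : Finset (Z × ι)} {q : Z × ι} (hq : q ∈ Q) :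
    FreeGroup.of q.2 • q.1 ∈ endpoints Q :=
  Finset.mem_union_right _ (Finset.mem_image.2 ⟨q, hq, rfl⟩)

/-- The coboundary map of a finite subgraph of the Schreier graph. -/
def coboundary (Q : Finset (Z × ι)) : (endpoints Q → ℚ) →ₗ[ℚ] (Q → ℚ) where
  toFun f q := f ⟨_, head_mem_endpoints q.2⟩ - f ⟨_, tail_mem_endpoints q.2⟩
  map_add' f f' := by
    ext q
    simp only [Pi.add_apply]
    ring
  map_smul' c f := by
    ext q
    simp [mul_sub]

variable [DecidableEq ι]

/-- Extension by zero of a function on a finite set of edges. -/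
def extendEdges (Q : Finset (Z × ι)) : (Q → ℚ) →ₗ[ℚ] (Z → ι → ℚ) where
  toFun w z i := if h : (z, i) ∈ Q then w ⟨(z, i), h⟩ else 0
  map_add' w w' := by
    ext z i
    by_cases h : (z, i) ∈ Q <;> simp [h]
  map_smul' c w := by
    ext z i
    by_cases h : (z, i) ∈ Q <;> simp [h]

/-- The periods of a cochain supported on `Q` along a family of group elements. -/
def periods {J : Type*} (Q : Finset (Z × ι)) (κ : J → FreeGroup ι) (z₀ : Z) :
    (Q → ℚ) →ₗ[ℚ] (J → ℚ) :=
  LinearMap.pi fun j => (pathSumLinear (κ j) z₀).comp (extendEdges Q)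

/-- In the Schreier graph of a subgroup generated by `m` elements, finite nonempty subgraphs have
cyclomatic excess less than `m`. -/
theorem card_edges_lt (z₀ : Z) (htrans : ∀ z, ∃ g : FreeGroup ι, g • z₀ = z) {m : ℕ}
    (κ : Fin m → FreeGroup ι)
    (hκ : MulAction.stabilizer (FreeGroup ι) z₀ = Subgroup.closure (Set.range κ))
    (Q : Finset (Z × ι)) (hQ : Q.Nonempty) :
    Q.card < (endpoints Q).card + m := by
  have hker : LinearMap.ker (periods Q κ z₀) ≤ LinearMap.range (coboundary Q) := by
    intro w hw
    have hw0 : ∀ j, pathSum (extendEdges Q w) (κ j) z₀ = 0 := fun j => congrFun hw j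
    obtain ⟨f, hf⟩ := exists_potential (extendEdges Q w) z₀ htrans (by
      intro g hg
      have hg' : g ∈ Subgroup.closure (Set.range κ) := hκ ▸ hg
      have hle : Subgroup.closure (Set.range κ) ≤ MulAction.stabilizer (FreeGroup ι) z₀ := hκ.ge
      induction hg' using Subgroup.closure_induction with
      | mem x hx =>
        obtain ⟨j, rfl⟩ := hx
        exact hw0 j
      | one => simp
      | mul x y hx hy ihx ihy =>
        rw [pathSum_mul, hle hy, ihx (hle hx), ihy (hle hy), add_zero]
      | inv x hx ih =>
        rw [pathSum_inv, (hle (inv_mem hx) : x⁻¹ • z₀ = z₀), ih (hle hx), neg_zero])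
    refine ⟨fun v => f v, ?_⟩
    ext ⟨⟨z, i⟩, hq⟩
    have := hf z i
    simp only [extendEdges, LinearMap.coe_mk, AddHom.coe_mk, dif_pos hq] at this
    simp [coboundary, this]
  have h1 := (periods Q κ z₀).finrank_range_add_finrank_ker
  have h2 := (coboundary Q).finrank_range_add_finrank_ker
  have h3 := Submodule.finrank_mono hker
  have h4 := (LinearMap.range (periods Q κ z₀)).finrank_le
  have h5 : 0 < Module.finrank ℚ (LinearMap.ker (coboundary Q)) := by
    obtain ⟨q, hq⟩ := hQ
    have hne : (1 : endpoints Q → ℚ) ≠ 0 := fun h => by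
      simpa using congrFun h ⟨_, tail_mem_endpoints hq⟩
    have hmem : (1 : endpoints Q → ℚ) ∈ LinearMap.ker (coboundary Q) := by
      ext q
      simp [coboundary]
    rw [Module.finrank_pos_iff]
    exact ⟨⟨⟨1, hmem⟩, 0, fun h => hne (congrArg Subtype.val h)⟩⟩
  simp only [Module.finrank_fintype_fun_eq_card, Fintype.card_coe, Fintype.card_fin] at h1 h2 h4
  omega

/-- A finite connected set of edges carrying the path from `z` to `g • z`. -/
theorem exists_path (g : FreeGroup ι) (z : Z) : ∃ Q : Finset (Z × ι),
    (∀ w : Z → ι → ℚ, (∀ q ∈ Q, w q.1 q.2 = 0) → pathSum w g z = 0) ∧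
    ∀ f : Z → ℚ, (∀ q ∈ Q, f (FreeGroup.of q.2 • q.1) = f q.1) →
      f (g • z) = f z ∧ ∀ q ∈ Q, f q.1 = f z := by
  induction g using FreeGroup.induction_on generalizing z with
  | C1 => exact ⟨∅, by simp⟩
  | of i => exact ⟨{(z, i)}, by simp⟩
  | inv_of i _ =>
    refine ⟨{((FreeGroup.of i)⁻¹ • z, i)}, by simp [pathSum_inv], fun f hf => ?_⟩
    have := hf _ (Finset.mem_singleton_self _)
    simp only [smul_inv_smul] at this
    simp [this]
  | mul g h hg hh =>
    obtain ⟨Q, hQ, hQ'⟩ := hh z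
    obtain ⟨P, hP, hP'⟩ := hg (h • z)
    refine ⟨Q ∪ P, fun w hw => ?_, fun f hf => ?_⟩
    · rw [pathSum_mul, hP w fun q hq => hw q (Finset.mem_union_right _ hq),
        hQ w fun q hq => hw q (Finset.mem_union_left _ hq), add_zero]
    · obtain ⟨a, b⟩ := hQ' f fun q hq => hf q (Finset.mem_union_left _ hq)
      obtain ⟨hend, htail⟩ := hP' f fun q hq => hf q (Finset.mem_union_right _ hq)
      refine ⟨by rw [mul_smul, hend, a], fun q hq => ?_⟩
      rcases Finset.mem_union.1 hq with hq | hq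
      · exact b q hq
      · rw [htail q hq, a]

/-- If the vertex group of `z₀` has `m` homologically independent elements, then the Schreier graph
has a finite subgraph with cyclomatic excess at least `m - 1`. -/
theorem exists_edges (z₀ : Z) {m : ℕ} (κ : Fin m → FreeGroup ι) (hκ : ∀ j, κ j • z₀ = z₀)
    (w : Fin m → Z → ι → ℚ) (hw : ∀ a b, pathSum (w a) (κ b) z₀ = if a = b then 1 else 0) :
    ∃ Q : Finset (Z × ι), (endpoints Q).card + m ≤ Q.card + 1 := by
  choose P hP hP' using fun j => exists_path (κ j) z₀
  let Q := Finset.univ.biUnion P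
  have hPQ : ∀ j, P j ⊆ Q := fun j => Finset.subset_biUnion_of_mem P (Finset.mem_univ j)
  have hext : ∀ (v : Z → ι → ℚ) (u : Q → ℚ), (∀ q : Q, u q = v q.1.1 q.1.2) →
      ∀ j, periods Q κ z₀ u j = pathSum v (κ j) z₀ := by
    intro v u huv j
    have h := hP j (extendEdges Q u - v) fun q hq => by
      simp [extendEdges, hPQ j hq, huv]
    rw [← pathSumLinear_apply, map_sub, sub_eq_zero] at h
    exact h
  have hsurj : LinearMap.range (periods Q κ z₀) = ⊤ := by
    rw [LinearMap.range_eq_top]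
    intro c
    refine ⟨∑ a, c a • fun q : Q => w a q.1.1 q.1.2, ?_⟩
    ext j
    rw [map_sum, Finset.sum_apply]
    simp only [map_smul, Pi.smul_apply]
    rw [Finset.sum_congr rfl fun a _ => by rw [hext (w a) _ (fun _ => rfl) j, hw]]
    simp
  let E : (endpoints Q → ℚ) → Z → ℚ := fun f z => if h : z ∈ endpoints Q then f ⟨z, h⟩ else 0
  have hE : ∀ f (v : endpoints Q), E f v = f v := fun f v => by simp [E]
  have hrange : LinearMap.range (coboundary Q) ≤ LinearMap.ker (periods Q κ z₀) := by
    rintro _ ⟨f, rfl⟩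
    ext j
    rw [hext (fun z i => E f (FreeGroup.of i • z) - E f z) _ fun q => by
      simp [coboundary, ← hE]]
    rw [← eq_pathSum _ (fun g z => E f (g • z) - E f z) (by simp) fun g h z => by
      simp only [mul_smul]; ring]
    simp [hκ]
  have hker : LinearMap.ker (coboundary Q) ≤ Submodule.span ℚ {1} := by
    intro f hf
    have hedge : ∀ q ∈ Q, E f (FreeGroup.of q.2 • q.1) = E f q.1 := by
      intro q hq
      have := congrFun hf ⟨q, hq⟩
      simp only [coboundary, LinearMap.coe_mk, AddHom.coe_mk, ← hE, Pi.zero_apply] at this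
      linarith
    have htail : ∀ q ∈ Q, E f q.1 = E f z₀ := by
      intro q hq
      obtain ⟨j, -, hj⟩ := Finset.mem_biUnion.1 hq
      exact (hP' j _ fun q hq => hedge q (hPQ j hq)).2 q hj
    rw [Submodule.mem_span_singleton]
    refine ⟨E f z₀, ?_⟩
    ext v
    rw [← hE f v]
    obtain ⟨v, hv⟩ := v
    simp only [endpoints, Finset.mem_union, Finset.mem_image] at hv
    rcases hv with ⟨q, hq, rfl⟩ | ⟨q, hq, rfl⟩
    · simp [htail q hq]
    · simp [hedge q hq, htail q hq]
  refine ⟨Q, ?_⟩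
  have h1 := (periods Q κ z₀).finrank_range_add_finrank_ker
  have h2 := (coboundary Q).finrank_range_add_finrank_ker
  have h3 := Submodule.finrank_mono hrange
  have h4 := (Submodule.finrank_mono hker).trans (finrank_span_le_card {1})
  rw [hsurj, finrank_top] at h1
  simp only [Module.finrank_fintype_fun_eq_card, Fintype.card_coe, Fintype.card_fin,
    Set.toFinset_singleton, Finset.card_singleton] at h1 h2 h4
  omega

end Counting

section Excess

open Module

variable {ι V W : Type*} [AddCommGroup V] [Module ℚ V] [AddCommGroup W] [Module ℚ W]

/-- The vertex spaces spanned by a family `U` of edge spaces over the graph with vertex set `G` and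
edges `q → s i * q`, for the tail maps `a` and the head maps `b`. -/
def vertexHull {G : Type*} [Group G] (s : ι → G) (a b : ι → V →ₗ[ℚ] W)
    (U : G → ι → Submodule ℚ V) (q : G) : Submodule ℚ W :=
  ⨆ i, (U q i).map (a i) ⊔ (U ((s i)⁻¹ * q) i).map (b i)

theorem vertexHull_mono {G : Type*} [Group G] (s : ι → G) (a b : ι → V →ₗ[ℚ] W)
    {U U' : G → ι → Submodule ℚ V} (h : U ≤ U') (q : G) :
    vertexHull s a b U q ≤ vertexHull s a b U' q :=
  iSup_mono fun _ => sup_le_sup (Submodule.map_mono (h _ _)) (Submodule.map_mono (h _ _))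

theorem vertexHull_sup {G : Type*} [Group G] (s : ι → G) (a b : ι → V →ₗ[ℚ] W)
    (U U' : G → ι → Submodule ℚ V) (q : G) :
    vertexHull s a b (U ⊔ U') q = vertexHull s a b U q ⊔ vertexHull s a b U' q := by
  simp only [vertexHull, Pi.sup_apply, Submodule.map_sup, ← iSup_sup_eq]
  exact iSup_congr fun i => sup_sup_sup_comm _ _ _ _

variable [Fintype ι] [FiniteDimensional ℚ V]

instance {G : Type*} [Group G] (s : ι → G) (a b : ι → V →ₗ[ℚ] W)
    (U : G → ι → Submodule ℚ V) (q : G) : FiniteDimensional ℚ (vertexHull s a b U q) := by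
  unfold vertexHull
  infer_instance

/-- If the boundary map `u ↦ ∑ i, (b i (u i) - a i (u i))` is injective, then no family of edge
spaces over the Cayley graph of a finite group has positive excess: by supermodularity, a family of
maximal excess and maximal dimension is invariant under translations. -/
theorem sum_finrank_le_of_group {G : Type*} [Group G] [Fintype G] (s : ι → G)
    (a b : ι → V →ₗ[ℚ] W) (hinj : ∀ u : ι → V, ∑ i, (b i (u i) - a i (u i)) = 0 → u = 0)
    (U₀ : G → ι → Submodule ℚ V) :
    ∑ q, ∑ i, finrank ℚ (U₀ q i) ≤ ∑ q, finrank ℚ (vertexHull s a b U₀ q) := by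
  let d : (G → ι → Submodule ℚ V) → ℤ := fun U => ∑ q, ∑ i, (finrank ℚ (U q i) : ℤ)
  let h : (G → ι → Submodule ℚ V) → ℤ := fun U => ∑ q, (finrank ℚ (vertexHull s a b U q) : ℤ)
  let D : ℤ := ∑ _q : G, ∑ _i : ι, (finrank ℚ V : ℤ)
  let Φ : (G → ι → Submodule ℚ V) → ℤ := fun U => (D + 1) * (d U - h U) + d U
  have hD : 0 ≤ D := by positivity
  have hd0 : ∀ U, 0 ≤ d U := fun U => by positivity
  have hh0 : ∀ U, 0 ≤ h U := fun U => by positivity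
  have hdD : ∀ U, d U ≤ D := fun U => Finset.sum_le_sum fun q _ => Finset.sum_le_sum fun i _ =>
    Int.ofNat_le.2 (U q i).finrank_le
  have hdsup : ∀ U U', d (U ⊔ U') + d (U ⊓ U') = d U + d U' := by
    intro U U'
    simp only [d, ← Finset.sum_add_distrib]
    refine Finset.sum_congr rfl fun q _ => Finset.sum_congr rfl fun i _ => ?_
    exact_mod_cast Submodule.finrank_sup_add_finrank_inf_eq (U q i) (U' q i)
  have hhsup : ∀ U U', h (U ⊔ U') + h (U ⊓ U') ≤ h U + h U' := by
    intro U U'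
    simp only [h, ← Finset.sum_add_distrib]
    refine Finset.sum_le_sum fun q _ => ?_
    have h1 := Submodule.finrank_sup_add_finrank_inf_eq
      (vertexHull s a b U q) (vertexHull s a b U' q)
    have h2 : finrank ℚ (vertexHull s a b (U ⊓ U') q) ≤
        finrank ℚ (vertexHull s a b U q ⊓ vertexHull s a b U' q : Submodule ℚ W) :=
      Submodule.finrank_mono (le_inf (vertexHull_mono s a b inf_le_left q)
        (vertexHull_mono s a b inf_le_right q))
    rw [vertexHull_sup]
    omega
  by_contra! hcon
  have hcon' : 1 ≤ d U₀ - h U₀ := by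
    have : h U₀ < d U₀ := by
      simp only [h, d]
      exact_mod_cast hcon
    omega
  obtain ⟨-, ⟨U, rfl⟩, hmax⟩ := Int.exists_greatest_of_bdd (P := fun z => ∃ U, Φ U = z)
    ⟨(D + 1) * D + D, by
      rintro _ ⟨U, rfl⟩
      have := hdD U
      have := hh0 U
      have : (D + 1) * (d U - h U) ≤ (D + 1) * D := by gcongr; omega
      simp only [Φ]
      omega⟩ ⟨_, U₀, rfl⟩
  have hmax' : ∀ U', Φ U' ≤ Φ U := fun U' => hmax _ ⟨U', rfl⟩
  have hpos : 1 ≤ d U - h U := by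
    have h1 := hmax' U₀
    simp only [Φ] at h1
    have := hdD U
    have := hd0 U₀
    by_contra! hlt
    nlinarith
  have hinv : ∀ g : G, (fun q => U (q * g)) ≤ U := by
    intro g
    let U' : G → ι → Submodule ℚ V := fun q => U (q * g)
    have hdU' : d U' = d U :=
      Fintype.sum_equiv (Equiv.mulRight g) _ _ fun q => rfl
    have hhU' : h U' = h U :=
      Fintype.sum_equiv (Equiv.mulRight g) _ _ fun q => by
        have : vertexHull s a b U' q = vertexHull s a b U (q * g) :=
          iSup_congr fun i => by
            simp only [U']
            rw [mul_assoc]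
        rw [this, Equiv.coe_mulRight]
    have h1 := hdsup U U'
    have h2 := hhsup U U'
    have h3 := hmax' (U ⊔ U')
    have h4 := hmax' (U ⊓ U')
    have h5 : d U ≤ d (U ⊔ U') := Finset.sum_le_sum fun q _ => Finset.sum_le_sum fun i _ =>
      Int.ofNat_le.2 (Submodule.finrank_mono le_sup_left)
    have h6 : d (U ⊔ U') ≤ d U := by
      simp only [Φ] at h3 h4
      have := hdD (U ⊓ U')
      have := hd0 (U ⊓ U')
      have := hdD U
      by_contra! hlt
      have e1 : d (U ⊔ U') - h (U ⊔ U') < d U - h U := by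
        by_contra! hge
        nlinarith
      have e2 : d U - h U < d (U ⊓ U') - h (U ⊓ U') := by omega
      nlinarith
    intro q i
    have h7 : ∀ q i, (finrank ℚ (U q i) : ℤ) ≤ finrank ℚ ((U ⊔ U') q i) := fun q i =>
      Int.ofNat_le.2 (Submodule.finrank_mono le_sup_left)
    have h8 := (Finset.sum_eq_sum_iff_of_le fun q _ =>
      Finset.sum_le_sum fun i _ => h7 q i).1 (le_antisymm h5 h6) q (Finset.mem_univ q)
    have h9 := (Finset.sum_eq_sum_iff_of_le fun i _ => h7 q i).1 h8 i (Finset.mem_univ i)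
    have h10 : U q i = (U ⊔ U') q i :=
      Submodule.eq_of_le_of_finrank_eq le_sup_left (by exact_mod_cast h9)
    rw [h10]
    exact le_sup_right
  have hconst : ∀ q, U q = U 1 := fun q => le_antisymm
    (by simpa using hinv q 1) (by simpa using hinv q⁻¹ q)
  have hbound : ∀ q, ∑ i, finrank ℚ (U q i) ≤ finrank ℚ (vertexHull s a b U q) := by
    intro q
    let B : ((i : ι) → U q i) →ₗ[ℚ] W :=
      ∑ i, ((b i - a i).comp (U q i).subtype).comp (LinearMap.proj i)
    have hB : ∀ u, B u = ∑ i, (b i (u i) - a i (u i)) := fun u => by simp [B]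
    have hBmem : ∀ u, B u ∈ vertexHull s a b U q := by
      intro u
      rw [hB]
      refine Submodule.sum_mem _ fun i _ => Submodule.sub_mem _ ?_ ?_
      · refine Submodule.mem_iSup_of_mem i (Submodule.mem_sup_right ⟨u i, ?_, rfl⟩)
        rw [hconst, ← hconst q]
        exact (u i).2
      · exact Submodule.mem_iSup_of_mem i (Submodule.mem_sup_left ⟨u i, (u i).2, rfl⟩)
    have hBinj : Function.Injective (B.codRestrict _ hBmem) := by
      rw [← LinearMap.ker_eq_bot, LinearMap.ker_codRestrict, LinearMap.ker_eq_bot']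
      intro u hu
      rw [hB] at hu
      have := hinj (fun i => u i) hu
      ext i
      simpa using congrFun this i
    have := LinearMap.finrank_le_finrank_of_injective hBinj
    rwa [Module.finrank_pi_fintype] at this
  have hle : d U ≤ h U := Finset.sum_le_sum fun q _ => by exact_mod_cast hbound q
  omega

/-- The excess inequality over a finite graph whose edges of each label form a permutation. -/
theorem sum_finrank_le_of_fintype {Y : Type*} [Fintype Y] (σ : ι → Equiv.Perm Y)
    (a b : ι → V →ₗ[ℚ] W) (hinj : ∀ u : ι → V, ∑ i, (b i (u i) - a i (u i)) = 0 → u = 0)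
    (U : Y → ι → Submodule ℚ V) (T : Y → Submodule ℚ W) [∀ y, FiniteDimensional ℚ (T y)]
    (ha : ∀ y i, (U y i).map (a i) ≤ T y) (hb : ∀ y i, (U y i).map (b i) ≤ T (σ i y)) :
    ∑ y, ∑ i, finrank ℚ (U y i) ≤ ∑ y, finrank ℚ (T y) := by
  classical
  have key : ∀ y : Y, ∑ q : Equiv.Perm Y, ∑ i, finrank ℚ (U (q y) i) ≤
      ∑ q : Equiv.Perm Y, finrank ℚ (T (q y)) := by
    intro y
    refine (sum_finrank_le_of_group σ a b hinj fun q => U (q y)).trans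
      (Finset.sum_le_sum fun q _ => Submodule.finrank_mono (iSup_le fun i => sup_le (ha _ _) ?_))
    simpa using hb ((σ i)⁻¹ (q y)) i
  have hsum : ∀ f : Y → ℕ, ∑ y, ∑ q : Equiv.Perm Y, f (q y) =
      Fintype.card (Equiv.Perm Y) * ∑ y, f y := by
    intro f
    rw [Finset.sum_comm, Finset.sum_congr rfl fun q _ => Equiv.sum_comp q f]
    simp
  have h := Finset.sum_le_sum fun y (_ : y ∈ Finset.univ) => key y
  rw [hsum fun y => ∑ i, finrank ℚ (U y i), hsum fun y => finrank ℚ (T y)] at h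
  exact Nat.le_of_mul_le_mul_left h Fintype.card_pos

/-- The excess inequality for finitely supported families of edge spaces. -/
theorem sum_finrank_le {Y : Type*} (τ : ι → Equiv.Perm Y) (a b : ι → V →ₗ[ℚ] W)
    (hinj : ∀ u : ι → V, ∑ i, (b i (u i) - a i (u i)) = 0 → u = 0)
    (U : Y → ι → Submodule ℚ V) (T : Y → Submodule ℚ W) [∀ y, FiniteDimensional ℚ (T y)]
    (ha : ∀ y i, (U y i).map (a i) ≤ T y) (hb : ∀ y i, (U y i).map (b i) ≤ T (τ i y))
    (S : Finset Y) (hS : ∀ y i, U y i ≠ ⊥ → τ i y ∈ S) :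
    ∑ y ∈ S, ∑ i, finrank ℚ (U y i) ≤ ∑ y ∈ S, finrank ℚ (T y) := by
  classical
  let e : ∀ i, {y : S // τ i y ∈ S} ≃ {y : S // (τ i)⁻¹ y ∈ S} := fun i =>
    { toFun := fun y => ⟨⟨τ i y, y.2⟩, by simp⟩
      invFun := fun y => ⟨⟨(τ i)⁻¹ y, y.2⟩, by simp⟩
      left_inv := fun y => by simp
      right_inv := fun y => by simp }
  have h := sum_finrank_le_of_fintype (fun i => (e i).extendSubtype) a b hinj
    (fun y : S => U y) (fun y : S => T y) (fun y i => ha y i) (fun y i => by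
      by_cases hU : U y i = ⊥
      · simp [hU]
      · rw [Equiv.extendSubtype_apply_of_mem (e i) y (hS y i hU)]
        exact hb y i)
  rwa [Finset.sum_coe_sort S fun y => ∑ i, finrank ℚ (U y i),
    Finset.sum_coe_sort S fun y => finrank ℚ (T y)] at h

end Excess

section Retract

variable {ι X : Type*}

/-- The finitely supported functions on `S` whose coefficients sum to zero. -/
noncomputable def augmentation (S : Finset X) : Submodule ℚ (X →₀ ℚ) :=
  Finsupp.supported ℚ ℚ (S : Set X) ⊓
    LinearMap.ker (Finsupp.linearCombination ℚ fun _ : X => (1 : ℚ))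

theorem augmentation_mono {S S' : Finset X} (h : S ⊆ S') : augmentation S ≤ augmentation S' :=
  inf_le_inf_right _ (Finsupp.supported_mono (Finset.coe_subset.2 h))

theorem finrank_supported (S : Finset X) :
    Module.finrank ℚ (Finsupp.supported ℚ ℚ (S : Set X)) = S.card := by
  rw [(Finsupp.supportedEquivFinsupp (S : Set X)).finrank_eq, Module.finrank_finsupp_self]
  simp

instance (S : Finset X) : FiniteDimensional ℚ (Finsupp.supported ℚ ℚ (S : Set X)) :=
  Module.Finite.equiv (Finsupp.supportedEquivFinsupp (S : Set X)).symm

instance (S : Finset X) : FiniteDimensional ℚ (augmentation S) :=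
  Submodule.finiteDimensional_of_le (inf_le_left : _ ≤ Finsupp.supported ℚ ℚ (S : Set X))

theorem finrank_augmentation (S : Finset X) :
    S.card = Module.finrank ℚ (augmentation S) + if S.Nonempty then 1 else 0 := by
  let ε := (Finsupp.linearCombination ℚ fun _ : X => (1 : ℚ)).domRestrict
    (Finsupp.supported ℚ ℚ (S : Set X))
  have h := ε.finrank_range_add_finrank_ker
  have hker : Module.finrank ℚ (LinearMap.ker ε) = Module.finrank ℚ (augmentation S) := by
    rw [augmentation, ← Submodule.map_comap_subtype, Submodule.finrank_map_subtype_eq]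
    rfl
  rw [finrank_supported, hker] at h
  split_ifs with hS
  · obtain ⟨x, hx⟩ := hS
    have hr : LinearMap.range ε = ⊤ := by
      rw [LinearMap.range_eq_top]
      intro c
      exact ⟨⟨Finsupp.single x c, Finsupp.single_mem_supported ℚ c hx⟩, by simp [ε]⟩
    rw [hr, finrank_top, Module.finrank_self] at h
    omega
  · rw [Finset.not_nonempty_iff_eq_empty] at hS
    subst hS
    rw [Finset.card_empty] at h ⊢
    omega

/-- For the Schreier graph of a retract, the boundary map is injective on the edge chains whose
coefficients sum to zero on every label. -/
theorem eq_zero_of_boundary_eq_zero [Fintype ι] [MulAction (FreeGroup ι) X] (x₀ : X)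
    (htrans : ∀ x, ∃ g : FreeGroup ι, g • x₀ = x) (r : FreeGroup ι →* FreeGroup ι)
    (hr : ∀ g, r g • x₀ = x₀) (hfix : ∀ g : FreeGroup ι, g • x₀ = x₀ → r g = g)
    (u : ι → X →₀ ℚ) (hε : ∀ i, Finsupp.linearCombination ℚ (fun _ : X => (1 : ℚ)) (u i) = 0)
    (hu : ∑ i, (Finsupp.mapDomain (FreeGroup.of i • ·) (u i) - u i) = 0) : u = 0 := by
  classical
  have hdecomp : ∀ w : X → ι → ℚ, ∃ (c : ι → ℚ) (f : X → ℚ),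
      ∀ x i, w x i = c i + (f (FreeGroup.of i • x) - f x) := by
    intro w
    obtain ⟨f, hf⟩ := exists_potential
      (fun x i => w x i - pathSum w (r (FreeGroup.of i)) x₀) x₀ htrans (by
        intro g hg
        rw [← eq_pathSum _ (fun g x => pathSum w g x - pathSum w (r g) x₀) (by simp)
          fun g h x => by
            simp only [map_mul, pathSum_mul, hr]
            ring]
        simp [hfix g hg])
    exact ⟨fun i => pathSum w (r (FreeGroup.of i)) x₀, f, fun x i => by rw [← hf]; ring⟩
  have hpair : ∀ w : X → ι → ℚ,
      ∑ i, Finsupp.linearCombination ℚ (fun x => w x i) (u i) = 0 := by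
    intro w
    obtain ⟨c, f, hcf⟩ := hdecomp w
    have h := congrArg (Finsupp.linearCombination ℚ f) hu
    simp only [map_sum, map_sub, Finsupp.linearCombination_mapDomain, map_zero] at h
    rw [← h]
    refine Finset.sum_congr rfl fun i _ => ?_
    have h1 := hε i
    simp only [Finsupp.linearCombination_apply, Finsupp.sum, Function.comp_apply, smul_eq_mul,
      mul_one, hcf, mul_add, mul_sub, Finset.sum_add_distrib, Finset.sum_sub_distrib] at h1 ⊢
    rw [← Finset.sum_mul, h1]
    ring
  ext j x
  have h := hpair fun y i => if i = j ∧ y = x then 1 else 0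
  rw [Finset.sum_eq_single j (fun i _ hi => by simp [hi, Finsupp.linearCombination_apply])
    (by simp)] at h
  simpa [Finsupp.linearCombination_apply, Finsupp.sum] using h

/-- Forgetting the first coordinate does not decrease the cyclomatic excess of a finite subgraph of
a product, provided the boundary map of the first factor is injective on the edge chains whose
coefficients sum to zero on every label. -/
theorem card_add_card_endpoints_image_le {Y : Type*} [Fintype ι] [DecidableEq ι] [DecidableEq X]
    [DecidableEq Y] [MulAction (FreeGroup ι) X] [MulAction (FreeGroup ι) Y]
    (hinj : ∀ u : ι → X →₀ ℚ,
      (∀ i, Finsupp.linearCombination ℚ (fun _ : X => (1 : ℚ)) (u i) = 0) →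
      ∑ i, (Finsupp.mapDomain (FreeGroup.of i • ·) (u i) - u i) = 0 → u = 0)
    (Q : Finset ((X × Y) × ι)) :
    Q.card + (endpoints (Q.image fun q => (q.1.2, q.2))).card ≤
      (Q.image fun q => (q.1.2, q.2)).card + (endpoints Q).card := by
  set Q' := Q.image fun q => (q.1.2, q.2) with hQ'
  set E := endpoints Q with hE
  have hE' : endpoints Q' = E.image Prod.snd := by
    simp only [hE, hQ', endpoints, Finset.image_union, Finset.image_image]
    rfl
  set X₁ := Q.image fun q => q.1.1
  let S : Y → ι → Finset X := fun y i =>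
    X₁.filter fun x => ((x, y), i) ∈ Q
  let R : Y → Finset X := fun y => (E.image Prod.fst).filter fun x => (x, y) ∈ E
  have hS : ∀ x y i, x ∈ S y i ↔ ((x, y), i) ∈ Q := fun x y i => by
    simp only [S, X₁, Finset.mem_filter, Finset.mem_image, and_iff_right_iff_imp]
    exact fun h => ⟨_, h, rfl⟩
  have hR : ∀ x y, x ∈ R y ↔ (x, y) ∈ E := fun x y => by
    simp only [R, Finset.mem_filter, Finset.mem_image, and_iff_right_iff_imp]
    exact fun h => ⟨_, h, rfl⟩
  have hSne : ∀ y i, (S y i).Nonempty ↔ (y, i) ∈ Q' := fun y i => by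
    simp [Finset.Nonempty, hS, hQ']
  have hRne : ∀ y, (R y).Nonempty ↔ y ∈ endpoints Q' := fun y => by
    simp [Finset.Nonempty, hR, hE']
  have hSR : ∀ y i, S y i ⊆ R y := fun y i x hx =>
    (hR x y).2 (tail_mem_endpoints ((hS x y i).1 hx))
  have hSR' : ∀ y i x, x ∈ S y i → FreeGroup.of i • x ∈ R (FreeGroup.of i • y) :=
    fun y i x hx => (hR _ _).2 (head_mem_endpoints ((hS x y i).1 hx))
  have hcardQ : Q.card = ∑ y ∈ endpoints Q', ∑ i, (S y i).card := by
    rw [Finset.card_eq_sum_card_fiberwise (f := fun q => (q.1.2, q.2))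
      (t := endpoints Q' ×ˢ Finset.univ) fun q hq => by
        have := tail_mem_endpoints (Finset.mem_image_of_mem (fun q => (q.1.2, q.2)) hq)
        simpa using this, Finset.sum_product]
    refine Finset.sum_congr rfl fun y _ => Finset.sum_congr rfl fun i _ => ?_
    refine Finset.card_bij' (fun q _ => q.1.1) (fun x _ => ((x, y), i)) ?_ ?_ ?_ ?_
    · rintro ⟨⟨x, y'⟩, i'⟩ hq
      simp only [Finset.mem_filter, Prod.mk.injEq] at hq
      obtain ⟨hq, rfl, rfl⟩ := hq
      exact (hS _ _ _).2 hq
    · intro x hx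
      simpa using (hS _ _ _).1 hx
    · rintro ⟨⟨x, y'⟩, i'⟩ hq
      simp only [Finset.mem_filter, Prod.mk.injEq] at hq
      obtain ⟨hq, rfl, rfl⟩ := hq
      rfl
    · intro x _
      rfl
  have hcardQ' : Q'.card = ∑ y ∈ endpoints Q', ∑ i, if (S y i).Nonempty then 1 else 0 := by
    simp only [hSne]
    rw [← Finset.sum_product', Finset.sum_ite_mem (endpoints Q' ×ˢ Finset.univ) Q' fun _ => 1,
      Finset.inter_eq_right.2 fun q hq => by simpa using tail_mem_endpoints hq]
    simp
  have hcardE : E.card = ∑ y ∈ endpoints Q', (R y).card := by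
    rw [Finset.card_eq_sum_card_fiberwise (f := Prod.snd) (t := endpoints Q') fun q hq => by
      rw [hE']
      exact Finset.mem_image_of_mem _ hq]
    refine Finset.sum_congr rfl fun y _ => ?_
    refine Finset.card_bij' (fun q _ => q.1) (fun x _ => (x, y)) ?_ ?_ ?_ ?_
    · rintro ⟨x, y'⟩ hq
      simp only [Finset.mem_filter] at hq
      obtain ⟨hq, rfl⟩ := hq
      exact (hR _ _).2 hq
    · intro x hx
      simpa using (hR _ _).1 hx
    · rintro ⟨x, y'⟩ hq
      simp only [Finset.mem_filter] at hq
      obtain ⟨hq, rfl⟩ := hq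
      rfl
    · intro x _
      rfl
  let U : Y → ι → Submodule ℚ (augmentation X₁) := fun y i =>
    (augmentation (S y i)).comap (augmentation X₁).subtype
  have hU : ∀ y i, Module.finrank ℚ (U y i) = Module.finrank ℚ (augmentation (S y i)) :=
    fun y i => (Submodule.comapSubtypeEquivOfLe
      (augmentation_mono (Finset.filter_subset _ _))).finrank_eq
  have hUne : ∀ y i, U y i ≠ ⊥ → (S y i).Nonempty := by
    intro y i h
    by_contra! hne
    refine h (Submodule.finrank_eq_zero.1 ?_)
    have := finrank_augmentation (S y i)
    rw [hU]
    simp only [hne, Finset.card_empty] at this ⊢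
    omega
  have hmain := sum_finrank_le (fun i => MulAction.toPerm (FreeGroup.of i))
    (fun _ => (augmentation X₁).subtype)
    (fun i => (Finsupp.lmapDomain ℚ ℚ fun x : X => FreeGroup.of i • x) ∘ₗ
      (augmentation X₁).subtype)
    (fun u hu => by
      have := hinj (fun i => u i) (fun i => (u i).2.2) (by simpa using hu)
      ext1 i
      exact Subtype.ext (congrFun this i))
    U (fun y => augmentation (R y))
    (fun y i => by
      rintro _ ⟨v, hv, rfl⟩
      exact augmentation_mono (hSR y i) hv)
    (fun y i => by
      rintro _ ⟨v, hv, rfl⟩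
      refine ⟨?_, ?_⟩
      · have h1 := Finsupp.mapDomain_support (f := fun x : X => FreeGroup.of i • x)
          (s := (v : X →₀ ℚ))
        intro x hx
        obtain ⟨x', hx', rfl⟩ := Finset.mem_image.1 (h1 hx)
        exact hSR' y i x' (hv.1 hx')
      · have := hv.2
        simp only [SetLike.mem_coe, LinearMap.mem_ker] at this ⊢
        simpa [Finsupp.linearCombination_mapDomain, Function.comp_def] using this)
    (endpoints Q') fun y i h => head_mem_endpoints ((hSne y i).1 (hUne y i h))
  have hT : ∑ y ∈ endpoints Q', (R y).card =
      ∑ y ∈ endpoints Q', Module.finrank ℚ (augmentation (R y)) + (endpoints Q').card := by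
    rw [Finset.card_eq_sum_ones, ← Finset.sum_add_distrib]
    refine Finset.sum_congr rfl fun y hy => ?_
    rw [finrank_augmentation, if_pos ((hRne y).2 hy)]
  have hSsum : ∑ y ∈ endpoints Q', ∑ i, (S y i).card =
      ∑ y ∈ endpoints Q', ∑ i, Module.finrank ℚ (U y i) +
        ∑ y ∈ endpoints Q', ∑ i, if (S y i).Nonempty then 1 else 0 := by
    simp only [← Finset.sum_add_distrib, hU, ← finrank_augmentation]
  omega

end Retract

/-- A subgroup of a free group either is free of rank at most `m`, or has `m + 1` elements which are
separated by characters to `ℚ`. -/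
theorem exists_hasFreeRank_or_exists_characters {ι : Type*} (K : Subgroup (FreeGroup ι)) (m : ℕ) :
    (∃ j ≤ m, HasFreeRank K j) ∨
      ∃ (κ : Fin (m + 1) → K) (χ : Fin (m + 1) → K →* Multiplicative ℚ),
        ∀ a b, (χ a (κ b)).toAdd = if a = b then 1 else 0 := by
  classical
  have hemb : ∀ e : Fin (m + 1) ↪ IsFreeGroup.Generators K,
      ∃ (κ : Fin (m + 1) → K) (χ : Fin (m + 1) → K →* Multiplicative ℚ),
        ∀ a b, (χ a (κ b)).toAdd = if a = b then 1 else 0 := fun e =>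
    ⟨fun b => IsFreeGroup.of (e b), fun a => IsFreeGroup.lift fun x =>
      Multiplicative.ofAdd (if e a = x then 1 else 0), fun a b => by simp⟩
  rcases finite_or_infinite (IsFreeGroup.Generators K) with hfin | hinf
  · by_cases hcard : Nat.card (IsFreeGroup.Generators K) ≤ m
    · refine Or.inl ⟨_, hcard, ?_⟩
      let e : FreeGroup (Fin (Nat.card (IsFreeGroup.Generators K))) ≃* K :=
        (FreeGroup.freeGroupCongr (Finite.equivFin (IsFreeGroup.Generators K)).symm).trans
          (IsFreeGroup.mulEquiv K)
      refine ⟨K.subtype.comp e.toMonoidHom, ?_, ?_⟩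
      · exact K.subtype_injective.comp e.injective
      · rw [MonoidHom.range_comp, MonoidHom.range_eq_top.2 e.surjective,
          ← MonoidHom.range_eq_map, K.range_subtype]
    · refine Or.inr (hemb ?_)
      exact ((Fin.castLEEmb (by omega)).trans
        (Finite.equivFin (IsFreeGroup.Generators K)).symm.toEmbedding)
  · exact Or.inr (hemb (Fin.valEmbedding.trans (Infinite.natEmbedding _)))

/-- The intersection of a subgroup of rank `m` of a free group of finite rank with a retract has
rank at most `m`. -/
theorem exists_hasFreeRank_inf_of_isRetract {ι : Type*} [Finite ι] (H R : Subgroup (FreeGroup ι))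
    (hR : IsRetract R) (m : ℕ) (hH : HasFreeRank H m) : ∃ j ≤ m, HasFreeRank (H ⊓ R) j := by
  classical
  cases nonempty_fintype ι
  obtain ⟨r, hrange, hfix⟩ := hR
  obtain ⟨φ, -, hφ⟩ := hH
  refine (exists_hasFreeRank_or_exists_characters (H ⊓ R) m).resolve_right ?_
  rintro ⟨κ, χ, hχ⟩
  let z₀ : (FreeGroup ι ⧸ R) × (FreeGroup ι ⧸ H) := ((1 : FreeGroup ι), (1 : FreeGroup ι))
  have hmk : ∀ (K : Subgroup (FreeGroup ι)) (g : FreeGroup ι),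
      g • ((1 : FreeGroup ι) : FreeGroup ι ⧸ K) = (1 : FreeGroup ι) ↔ g ∈ K := fun K g => by
    rw [← MulAction.mem_stabilizer_iff, MulAction.stabilizer_quotient]
  have htrans : ∀ (K : Subgroup (FreeGroup ι)) (x : FreeGroup ι ⧸ K),
      ∃ g : FreeGroup ι, g • ((1 : FreeGroup ι) : FreeGroup ι ⧸ K) = x :=
    fun K x => MulAction.exists_smul_eq _ _ _
  have hstab : MulAction.stabilizer (FreeGroup ι) z₀ = H ⊓ R := by
    ext g
    rw [MulAction.mem_stabilizer_iff, Prod.ext_iff, Prod.smul_fst, Prod.smul_snd, hmk, hmk,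
      and_comm, Subgroup.mem_inf]
  have hκ : ∀ b, (κ b : FreeGroup ι) ∈ MulAction.stabilizer (FreeGroup ι) z₀ := fun b =>
    hstab.ge (κ b).2
  choose w hw using fun a => exists_cochain z₀
    ((χ a).comp (MulEquiv.subgroupCongr hstab).toMonoidHom)
  obtain ⟨Q, hQ⟩ := exists_edges z₀ (fun b => (κ b : FreeGroup ι)) hκ w fun a b => by
    rw [← hχ a b]
    exact hw a ⟨κ b, hκ b⟩
  have hproj := card_add_card_endpoints_image_le (eq_zero_of_boundary_eq_zero
    ((1 : FreeGroup ι) : FreeGroup ι ⧸ R) (htrans R) r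
    (fun g => (hmk R _).2 (hrange ▸ ⟨g, rfl⟩)) fun g hg => hfix g ((hmk R g).1 hg)) Q
  have hclosure : MulAction.stabilizer (FreeGroup ι) ((1 : FreeGroup ι) : FreeGroup ι ⧸ H) =
      Subgroup.closure (Set.range fun j => φ (FreeGroup.of j)) := by
    rw [MulAction.stabilizer_quotient, ← hφ, MonoidHom.range_eq_map,
      ← FreeGroup.closure_range_of, MonoidHom.map_closure, ← Set.range_comp]
    rfl
  rcases Q.eq_empty_or_nonempty with rfl | hne
  · have hm : m = 0 := by
      simp only [Finset.card_empty] at hQ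
      omega
    subst hm
    have hbot : H = ⊥ := by
      rw [← MulAction.stabilizer_quotient H, hclosure]
      simp
    have hone : κ 0 = 1 := Subtype.ext (Subgroup.mem_bot.1 (hbot.le (κ 0).2.1))
    have := hχ 0 0
    simp [hone] at this
  · have := card_edges_lt _ (htrans H) _ hclosure _
      (hne.image fun q : ((FreeGroup ι ⧸ R) × (FreeGroup ι ⧸ H)) × ι => (q.1.2, q.2))
    omega

end FreeGroupGraph

theorem rank_inter_retract_le {n : ℕ} (hn : 2 ≤ n)
    (H R : Subgroup (FreeGroup (Fin n))) (hR : IsRetract R)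
    (m : ℕ) (hm : m ≤ 3) (hH : HasFreeRank H m) :
    ∃ j ≤ m, HasFreeRank (H ⊓ R) j :=
  FreeGroupGraph.exists_hasFreeRank_inf_of_isRetract H R hR m hH
end

section
/- For every family S of endomorphisms of F_n and every subgroup H of F_n with rk(H) ≤ 3, the rank of H ∩ Fix(S) is at most rk(H), where Fix(S) = {w ∈ F_n : φ(w) = w for all φ ∈ S}. -/
/-- The subgroup of common fixed points of a family of endomorphisms. -/
def fixedSubgroup {G : Type*} [Group G] {ι : Type*} (S : ι → (G →* G)) : Subgroup G where
  carrier := {w | ∀ i, S i w = w}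
  one_mem' := by simp
  mul_mem' := by
    intro a b ha hb i
    simp [map_mul, ha i, hb i]
  inv_mem' := by
    intro a ha i
    simp [ha i]

open Function
set_option linter.unusedSectionVars false

section PWO

variable {Ω : Type*} [Group Ω] [LinearOrder Ω] [MulLeftMono Ω] [MulRightMono Ω]

/-- In a bi-ordered group, an element factors in only finitely many ways through two
well-ordered sets. -/
theorem finite_factorizations {S T : Set Ω} (hS : S.IsPWO) (hT : T.IsPWO) (a : Ω) :
    {b | b ∈ S ∧ b⁻¹ * a ∈ T}.Finite := by
  by_contra hinf
  obtain ⟨f, hf⟩ : ∃ f : ℕ → Ω, Injective f ∧ ∀ i, f i ∈ {b | b ∈ S ∧ b⁻¹ * a ∈ T} :=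
    ⟨fun i => ((Set.Infinite.natEmbedding _ hinf) i : Ω),
      fun i j h => (Set.Infinite.natEmbedding _ hinf).injective (Subtype.ext h),
      fun i => ((Set.Infinite.natEmbedding _ hinf) i).2⟩
  obtain ⟨g, hg⟩ := hS.exists_monotone_subseq (fun i => (hf.2 i).1)
  obtain ⟨i, j, hij, hle⟩ := hT fun i => ⟨(f (g i))⁻¹ * a, (hf.2 (g i)).2⟩
  have h1 : f (g i) ≤ f (g j) := hg hij.le
  have h2 : f (g j) ≤ f (g i) := by
    have : (f (g i))⁻¹ ≤ (f (g j))⁻¹ := le_of_mul_le_mul_right' hle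
    exact inv_le_inv_iff.mp this
  exact hij.ne (g.injective (hf.1 (le_antisymm h1 h2)))

theorem isPWO_mul {S T : Set Ω} (hS : S.IsPWO) (hT : T.IsPWO) :
    ((fun p : Ω × Ω => p.1 * p.2) '' (S ×ˢ T)).IsPWO :=
  (hS.prod hT).image_of_monotone fun _ _ h => mul_le_mul' h.1 h.2

theorem isPWO_submonoid_closure {S : Set Ω} (hS : S.IsPWO) (hpos : ∀ x ∈ S, 1 ≤ x) :
    (Submonoid.closure S : Set Ω).IsPWO := by
  rw [Submonoid.closure_eq_image_prod]
  refine (hS.partiallyWellOrderedOn_sublistForall₂ (· ≤ ·)).image_of_monotone_on ?_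
  exact fun l1 _ l2 hl2 h12 => h12.prod_le_prod' fun x hx => hpos x <| hl2 x hx

end PWO

section MalcevNeumann

theorem exists_ne_zero_of_finsum_ne_zero {α M : Type*} [AddCommMonoid M] {f : α → M}
    (h : ∑ᶠ a, f a ≠ 0) : ∃ a, f a ≠ 0 := by
  by_contra! h0
  exact h (by simp [h0])

variable (k Ω : Type*) [Field k] [LinearOrder Ω]

/-- Formal series over a bi-ordered group: functions with well-ordered support. -/
def mnSubmodule : Submodule k (Ω → k) where
  carrier := {f | (support f).IsPWO}
  add_mem' hf hg := (Set.IsPWO.union hf hg).mono (support_add _ _)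
  zero_mem' := by simp
  smul_mem' c f hf := Set.IsPWO.mono hf (support_const_smul_subset c f)

/-- The Malcev–Neumann division ring of a bi-ordered group. -/
def MN : Type _ := ↥(mnSubmodule k Ω)

noncomputable instance : AddCommGroup (MN k Ω) := inferInstanceAs (AddCommGroup ↥(mnSubmodule k Ω))
noncomputable instance : Module k (MN k Ω) := inferInstanceAs (Module k ↥(mnSubmodule k Ω))

namespace MN

variable {k Ω}

/-- The coefficient of a series at a group element. -/
def coeff (f : MN k Ω) : Ω → k := f.1

theorem isPWO_support (f : MN k Ω) : (support f.coeff).IsPWO := f.2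

@[ext] theorem ext {f g : MN k Ω} (h : ∀ a, f.coeff a = g.coeff a) : f = g :=
  Subtype.ext (funext h)

/-- A series from its coefficients. -/
def mk (f : Ω → k) (hf : (support f).IsPWO) : MN k Ω := ⟨f, hf⟩

@[simp] theorem coeff_mk (f : Ω → k) (hf : (support f).IsPWO) : (mk f hf).coeff = f := rfl
@[simp] theorem coeff_zero (a : Ω) : (0 : MN k Ω).coeff a = 0 := rfl
@[simp] theorem coeff_add (f g : MN k Ω) (a : Ω) : (f + g).coeff a = f.coeff a + g.coeff a := rfl
@[simp] theorem coeff_neg (f : MN k Ω) (a : Ω) : (-f).coeff a = -f.coeff a := rfl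
@[simp] theorem coeff_sub (f g : MN k Ω) (a : Ω) : (f - g).coeff a = f.coeff a - g.coeff a := rfl
@[simp] theorem coeff_smul (c : k) (f : MN k Ω) (a : Ω) : (c • f).coeff a = c * f.coeff a := rfl

/-- Taking a coefficient, as a linear functional. -/
def coeffₗ (a : Ω) : MN k Ω →ₗ[k] k where
  toFun f := f.coeff a
  map_add' _ _ := rfl
  map_smul' _ _ := rfl

@[simp] theorem coeffₗ_apply (a : Ω) (f : MN k Ω) : coeffₗ a f = f.coeff a := rfl

open Classical in
/-- The monomial `c a`. -/
noncomputable def single (a : Ω) (c : k) : MN k Ω :=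
  mk (Pi.single a c) ((Set.isPWO_singleton a).mono Pi.support_single_subset)

open Classical in
theorem coeff_single (a : Ω) (c : k) (b : Ω) :
    (single a c).coeff b = if b = a then c else 0 := by
  simp [single, Pi.single_apply]

@[simp] theorem coeff_single_self (a : Ω) (c : k) : (single a c).coeff a = c := by
  simp [coeff_single]

theorem coeff_single_of_ne {a b : Ω} (h : b ≠ a) (c : k) : (single a c).coeff b = 0 := by
  simp [coeff_single, h]

variable [Group Ω]

noncomputable instance : One (MN k Ω) := ⟨single 1 1⟩

theorem one_def : (1 : MN k Ω) = single 1 1 := rfl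

@[simp] theorem coeff_one_one : (1 : MN k Ω).coeff 1 = 1 := coeff_single_self _ _

theorem coeff_one_of_ne {a : Ω} (h : a ≠ 1) : (1 : MN k Ω).coeff a = 0 := coeff_single_of_ne h _

variable [MulLeftMono Ω] [MulRightMono Ω]

theorem finite_mul_support (f g : MN k Ω) (a : Ω) :
    (support fun b => f.coeff b * g.coeff (b⁻¹ * a)).Finite :=
  (finite_factorizations f.isPWO_support g.isPWO_support a).subset fun _ hb =>
    ⟨left_ne_zero_of_mul hb, right_ne_zero_of_mul hb⟩

noncomputable instance : Mul (MN k Ω) where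
  mul f g := mk (fun a => ∑ᶠ b, f.coeff b * g.coeff (b⁻¹ * a)) <| by
    refine (isPWO_mul f.isPWO_support g.isPWO_support).mono fun a ha => ?_
    obtain ⟨b, hb⟩ := exists_ne_zero_of_finsum_ne_zero ha
    exact ⟨(b, b⁻¹ * a), ⟨left_ne_zero_of_mul hb, right_ne_zero_of_mul hb⟩, by simp⟩

theorem coeff_mul (f g : MN k Ω) (a : Ω) :
    (f * g).coeff a = ∑ᶠ b, f.coeff b * g.coeff (b⁻¹ * a) := rfl

theorem coeff_single_mul (g : Ω) (c : k) (f : MN k Ω) (a : Ω) :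
    (single g c * f).coeff a = c * f.coeff (g⁻¹ * a) := by
  rw [coeff_mul, finsum_eq_single _ g, coeff_single_self]
  intro b hb
  rw [coeff_single_of_ne hb, zero_mul]

theorem coeff_mul_single (g : Ω) (c : k) (f : MN k Ω) (a : Ω) :
    (f * single g c).coeff a = f.coeff (a * g⁻¹) * c := by
  rw [coeff_mul, finsum_eq_single _ (a * g⁻¹)]
  · simp
  intro b hb
  rw [coeff_single_of_ne, mul_zero]
  rintro rfl
  simp at hb

theorem mul_assoc' (f g h : MN k Ω) : f * g * h = f * (g * h) := by
  ext a
  have hfin : (support fun p : Ω × Ω =>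
      f.coeff p.2 * g.coeff (p.2⁻¹ * p.1) * h.coeff (p.1⁻¹ * a)).Finite := by
    have h1 := finite_factorizations
      (isPWO_mul f.isPWO_support g.isPWO_support) h.isPWO_support a
    refine (h1.biUnion fun c _ => ((finite_factorizations f.isPWO_support
      g.isPWO_support c).image fun b => (c, b))).subset ?_
    rintro ⟨c, b⟩ hp
    simp only [mem_support, ne_eq, mul_eq_zero, not_or] at hp
    simp only [Set.mem_iUnion]
    refine ⟨c, ⟨⟨(b, b⁻¹ * c), ⟨hp.1.1, hp.1.2⟩, by simp⟩, hp.2⟩, b, ⟨hp.1.1, hp.1.2⟩, rfl⟩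
  have hfin' : (support fun p : Ω × Ω =>
      f.coeff p.1 * g.coeff (p.1⁻¹ * p.2) * h.coeff (p.2⁻¹ * a)).Finite :=
    (hfin.image Prod.swap).subset fun p hp => ⟨p.swap, hp, rfl⟩
  calc (f * g * h).coeff a
      = ∑ᶠ c, ∑ᶠ b, f.coeff b * g.coeff (b⁻¹ * c) * h.coeff (c⁻¹ * a) := by
        simp_rw [coeff_mul, finsum_mul]
    _ = ∑ᶠ p : Ω × Ω, f.coeff p.2 * g.coeff (p.2⁻¹ * p.1) * h.coeff (p.1⁻¹ * a) :=
        (finsum_curry _ hfin).symm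
    _ = ∑ᶠ p : Ω × Ω, f.coeff p.1 * g.coeff (p.1⁻¹ * p.2) * h.coeff (p.2⁻¹ * a) :=
        finsum_comp_equiv (Equiv.prodComm Ω Ω)
          (f := fun p : Ω × Ω => f.coeff p.1 * g.coeff (p.1⁻¹ * p.2) * h.coeff (p.2⁻¹ * a))
    _ = ∑ᶠ b, ∑ᶠ c, f.coeff b * g.coeff (b⁻¹ * c) * h.coeff (c⁻¹ * a) := finsum_curry _ hfin'
    _ = (f * (g * h)).coeff a := by
        rw [coeff_mul]
        refine finsum_congr fun b => ?_
        rw [coeff_mul, mul_finsum]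
        refine Eq.trans ?_ (finsum_comp_equiv (Equiv.mulLeft b⁻¹)
          (f := fun c => f.coeff b * (g.coeff c * h.coeff (c⁻¹ * (b⁻¹ * a)))))
        refine finsum_congr fun c => ?_
        simp [mul_assoc]

noncomputable instance : Ring (MN k Ω) :=
  { (inferInstance : AddCommGroup (MN k Ω)) with
    mul := (· * ·)
    one := 1
    left_distrib := fun f g h => by
      ext a
      simp only [coeff_mul, coeff_add, mul_add]
      exact finsum_add_distrib (finite_mul_support f g a) (finite_mul_support f h a)
    right_distrib := fun f g h => by
      ext a
      simp only [coeff_mul, coeff_add, add_mul]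
      exact finsum_add_distrib (finite_mul_support f h a) (finite_mul_support g h a)
    zero_mul := fun f => by ext a; simp [coeff_mul]
    mul_zero := fun f => by ext a; simp [coeff_mul]
    mul_assoc := mul_assoc'
    one_mul := fun f => by ext a; simp [one_def, coeff_single_mul]
    mul_one := fun f => by ext a; simp [one_def, coeff_mul_single] }

noncomputable instance : Algebra k (MN k Ω) :=
  Algebra.ofModule
    (fun c f g => by
      ext a
      simp only [coeff_mul, coeff_smul, mul_finsum, mul_assoc])
    (fun c f g => by
      ext a
      simp only [coeff_mul, coeff_smul, mul_finsum, mul_left_comm])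

instance : Nontrivial (MN k Ω) :=
  ⟨1, 0, fun h => one_ne_zero (α := k)
    (by simpa using congrArg (fun f : MN k Ω => f.coeff 1) h)⟩

variable (k Ω) in
/-- The group embeds in the ring of series. -/
noncomputable def of : Ω →* MN k Ω where
  toFun a := single a 1
  map_one' := rfl
  map_mul' a b := by
    ext c
    rw [coeff_single_mul, one_mul]
    by_cases h : c = a * b
    · subst h; simp
    · rw [coeff_single_of_ne h, coeff_single_of_ne]
      rintro rfl
      simp at h

theorem of_apply (a : Ω) : of k Ω a = single a 1 := rfl

@[simp] theorem coeff_of_mul (g : Ω) (f : MN k Ω) (a : Ω) :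
    (of k Ω g * f).coeff a = f.coeff (g⁻¹ * a) := by
  simp [of_apply, coeff_single_mul]

@[simp] theorem coeff_mul_of (g : Ω) (f : MN k Ω) (a : Ω) :
    (f * of k Ω g).coeff a = f.coeff (a * g⁻¹) := by
  simp [of_apply, coeff_mul_single]

theorem exists_eq_one_add_mul (ε : MN k Ω) (hε : ∀ a, ε.coeff a ≠ 0 → 1 < a) :
    ∃ e : MN k Ω, e = 1 + ε * e := by
  classical
  set S : Submonoid Ω := Submonoid.closure (support ε.coeff)
  have hS : (S : Set Ω).IsPWO :=
    isPWO_submonoid_closure ε.isPWO_support fun x hx => (hε x hx).le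
  have hwf : WellFounded fun a b : Ω => a < b ∧ a ∈ (S : Set Ω) ∧ b ∈ (S : Set Ω) :=
    Set.wellFoundedOn_iff.mp hS.isWF
  let e : Ω → k := hwf.fix fun g rec => (if g = 1 then 1 else 0) +
    ∑ᶠ b, if h : b⁻¹ * g < g ∧ b⁻¹ * g ∈ (S : Set Ω) ∧ g ∈ (S : Set Ω) then
      ε.coeff b * rec (b⁻¹ * g) h else 0
  have he0 : ∀ g, e g = (if g = 1 then 1 else 0) +
      ∑ᶠ b, if b⁻¹ * g < g ∧ b⁻¹ * g ∈ (S : Set Ω) ∧ g ∈ (S : Set Ω) then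
      ε.coeff b * e (b⁻¹ * g) else 0 := fun g => by
    refine (hwf.fix_eq _ g).trans ?_
    rfl
  have hes : ∀ g, g ∉ S → e g = 0 := fun g hg => by
    have hg1 : g ≠ 1 := by
      rintro rfl
      exact hg S.one_mem
    rw [he0, if_neg hg1]
    simp [hg]
  have he : ∀ g, e g = (if g = 1 then 1 else 0) + ∑ᶠ b, ε.coeff b * e (b⁻¹ * g) := fun g => by
    rw [he0]
    congr 1
    refine finsum_congr fun b => ?_
    split_ifs with h
    · rfl
    · by_contra hne
      have hb : ε.coeff b ≠ 0 := fun h0 => hne (by rw [h0, zero_mul])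
      have hm : b⁻¹ * g ∈ S := by
        by_contra h0
        exact hne (by rw [hes _ h0, mul_zero])
      have hbS : b ∈ S := Submonoid.subset_closure hb
      refine h ⟨?_, hm, ?_⟩
      · have := hε b hb
        exact mul_lt_of_lt_one_left' g (by simpa using this)
      · simpa using S.mul_mem hbS hm
  refine ⟨mk e (hS.mono fun g hg => by_contra fun h => hg (hes g h)), ?_⟩
  ext g
  rw [coeff_add, coeff_mul, coeff_mk, he, one_def, coeff_single]

theorem exists_min {f : MN k Ω} (hf : f ≠ 0) :
    ∃ a, f.coeff a ≠ 0 ∧ ∀ b, f.coeff b ≠ 0 → a ≤ b := by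
  have hne : (support f.coeff).Nonempty := by
    by_contra h
    rw [Set.not_nonempty_iff_eq_empty, support_eq_empty_iff] at h
    exact hf (ext fun a => congrFun h a)
  exact ⟨f.isPWO_support.isWF.min hne, f.isPWO_support.isWF.min_mem hne,
    fun b hb => f.isPWO_support.isWF.min_le hne hb⟩

theorem exists_mul_eq_one {f : MN k Ω} (hf : f ≠ 0) : ∃ g, f * g = 1 := by
  obtain ⟨a, ha, hmin⟩ := exists_min hf
  set s : MN k Ω := single a⁻¹ (f.coeff a)⁻¹ with hs
  set t : MN k Ω := single a (f.coeff a) with ht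
  have hts : t * s = 1 := by
    ext c
    rw [ht, hs, coeff_single_mul, one_def, coeff_single, coeff_single]
    by_cases hc : c = 1
    · subst hc; simp [ha]
    · simp [hc]
  obtain ⟨e, he⟩ := exists_eq_one_add_mul (1 - s * f) (fun b hb => by
    rw [coeff_sub, hs, coeff_single_mul, inv_inv] at hb
    rcases lt_trichotomy b 1 with h | h | h
    · exfalso
      have : f.coeff (a * b) = 0 := by
        by_contra h0
        exact absurd (hmin _ h0) (not_le.mpr (mul_lt_of_lt_one_right' a h))
      rw [this, mul_zero, coeff_one_of_ne h.ne, sub_zero] at hb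
      exact hb rfl
    · subst h
      simp [ha] at hb
    · exact h)
  have h1 : s * f * e = 1 := by
    rw [sub_mul, one_mul] at he
    have : e = e + (1 - s * f * e) := by
      conv_lhs => rw [he]
      abel
    rw [left_eq_add, sub_eq_zero] at this
    exact this.symm
  refine ⟨e * s, ?_⟩
  calc f * (e * s) = (t * s) * f * e * s := by rw [hts, one_mul, mul_assoc]
    _ = t * (s * f * e) * s := by simp only [mul_assoc]
    _ = 1 := by rw [h1, mul_one, hts]

noncomputable instance : DivisionRing (MN k Ω) :=
  DivisionRing.ofIsUnitOrEqZero fun f => by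
    by_cases hf : f = 0
    · exact Or.inr hf
    left
    obtain ⟨g, hg⟩ := exists_mul_eq_one hf
    have hg0 : g ≠ 0 := by
      rintro rfl
      exact zero_ne_one (by rwa [mul_zero] at hg)
    obtain ⟨h, hh⟩ := exists_mul_eq_one hg0
    have : f = h := by
      calc f = f * (g * h) := by rw [hh, mul_one]
        _ = h := by rw [← mul_assoc, hg, one_mul]
    exact ⟨⟨f, g, hg, by rw [this, hh]⟩, rfl⟩

end MN

end MalcevNeumann

section CayleyTree

namespace FreeGroup

theorem mk_false_mul_of {X : Type*} (x : X) : mk [(x, false)] * of x = 1 :=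
  inv_mul_cancel (of x)

variable {X : Type*} [DecidableEq X]

/-- The neighbour of `g` in the Cayley tree in the direction of the identity. -/
def parent (g : FreeGroup X) : FreeGroup X := mk g.toWord.dropLast

theorem toWord_parent (g : FreeGroup X) : (parent g).toWord = g.toWord.dropLast := by
  rw [parent, toWord_mk]
  exact (isReduced_toWord.infix (List.dropLast_prefix _).isInfix).reduce_eq

theorem norm_parent_add_one {g : FreeGroup X} (hg : g ≠ 1) : (parent g).norm + 1 = g.norm := by
  have : g.toWord ≠ [] := fun h => hg (toWord_eq_nil_iff.mp h)
  have := List.length_pos_of_ne_nil this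
  rw [norm, norm, toWord_parent, List.length_dropLast]
  omega

theorem parent_mul_of (g : FreeGroup X) (x : X) :
    (parent (g * of x) = g ∧ g * of x ≠ 1) ∨ (parent g = g * of x ∧ g ≠ 1) := by
  rcases List.eq_nil_or_concat g.toWord with h | ⟨l, ⟨y, b⟩, h⟩
  · left
    have : g = 1 := toWord_eq_nil_iff.mp h
    subst this
    rw [one_mul, parent, toWord_of]
    exact ⟨rfl, of_ne_one x⟩
  · rw [List.concat_eq_append] at h
    have hg : g = mk l * mk [(y, b)] := by rw [mul_mk, ← h, mk_toWord]
    by_cases hyb : y = x ∧ b = false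
    · obtain ⟨rfl, rfl⟩ := hyb
      right
      constructor
      · rw [parent, h, List.dropLast_concat, hg, mul_assoc, mk_false_mul_of, mul_one]
      · rintro rfl
        simp at h
    · left
      have hred : IsReduced (g.toWord ++ [(x, true)]) := by
        rw [h]
        refine IsReduced.append_overlap (h ▸ isReduced_toWord) ?_ (by simp)
        refine isReduced_cons_cons.mpr ⟨fun hx => ?_, IsReduced.singleton⟩
        dsimp only at hx ⊢
        by_contra hb
        exact hyb ⟨hx, by simpa using hb⟩
      have hw : (g * of x).toWord = g.toWord ++ [(x, true)] := by
        rw [toWord_mul, toWord_of, hred.reduce_eq]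
      constructor
      · rw [parent, hw, List.dropLast_concat, mk_toWord]
      · intro h1
        rw [h1] at hw
        simp at hw

theorem exists_parent_eq {g : FreeGroup X} (hg : g ≠ 1) :
    ∃ x, parent g * of x = g ∨ g * of x = parent g := by
  rcases List.eq_nil_or_concat g.toWord with h | ⟨l, ⟨y, b⟩, h⟩
  · exact absurd (toWord_eq_nil_iff.mp h) hg
  · rw [List.concat_eq_append] at h
    have hg : g = mk l * mk [(y, b)] := by rw [mul_mk, ← h, mk_toWord]
    have hp : parent g = mk l := by rw [parent, h, List.dropLast_concat]
    refine ⟨y, ?_⟩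
    cases b
    · right
      rw [hp, hg, mul_assoc, mk_false_mul_of, mul_one]
    · left
      rw [hp, hg]
      rfl

theorem finite_norm_le [Finite X] (r : ℕ) : {g : FreeGroup X | g.norm ≤ r}.Finite :=
  Set.Finite.preimage (toWord_injective.injOn) (List.finite_length_le (X × Bool) r)

/-- The endpoint of an edge away from the identity. -/
def child (e : FreeGroup X × X) : FreeGroup X :=
  if parent (e.1 * of e.2) = e.1 ∧ e.1 * of e.2 ≠ 1 then e.1 * of e.2 else e.1

theorem child_injective : Function.Injective (child (X := X)) := by
  have key : ∀ e : FreeGroup X × X, child e ≠ 1 ∧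
      ((e.1 = parent (child e) ∧ e.1 * of e.2 = child e) ∨
        (e.1 = child e ∧ e.1 * of e.2 = parent (child e))) := fun e => by
    unfold child
    split_ifs with h
    · exact ⟨h.2, Or.inl ⟨h.1.symm, rfl⟩⟩
    · rcases parent_mul_of e.1 e.2 with h' | h'
      · exact absurd h' h
      · exact ⟨h'.2, Or.inr ⟨rfl, h'.1.symm⟩⟩
  have hne : ∀ x y : X, of x * of y ≠ 1 := fun x y h => by
    have := congrArg (lift fun _ : X => Multiplicative.ofAdd (1 : ℤ)) h
    rw [MonoidHom.map_mul, MonoidHom.map_one, lift_apply_of, lift_apply_of, ← ofAdd_add] at this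
    exact absurd (congrArg Multiplicative.toAdd this) (by simp)
  intro e f hef
  have he := (key e).2
  have hf := (key f).2
  rw [← hef] at hf
  obtain ⟨g, x⟩ := e
  obtain ⟨g', x'⟩ := f
  dsimp only at he hf
  rcases he with ⟨h1, h2⟩ | ⟨h1, h2⟩ <;> rcases hf with ⟨h3, h4⟩ | ⟨h3, h4⟩
  · have : g = g' := h1.trans h3.symm
    subst this
    rw [← h4] at h2
    rw [of_injective (mul_left_cancel h2)]
  · exfalso
    rw [h3, ← h1, ← h2, mul_assoc, mul_eq_left] at h4
    exact hne _ _ h4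
  · exfalso
    rw [← h3, h1, ← h4, mul_assoc, mul_eq_left] at h2
    exact hne _ _ h2
  · have : g = g' := h1.trans h3.symm
    subst this
    rw [← h4] at h2
    rw [of_injective (mul_left_cancel h2)]

section Forest

variable [Fintype X] (S : Finset (FreeGroup X))

/-- The edges of the Cayley tree with both endpoints in `S`. -/
def edgesIn : Finset (FreeGroup X × X) :=
  (S ×ˢ Finset.univ).filter fun e => e.1 * of e.2 ∈ S

variable {S}

theorem child_mem {e : FreeGroup X × X} (he : e ∈ edgesIn S) :
    child e ∈ S ∧ child e ≠ 1 ∧ parent (child e) ∈ S := by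
  simp only [edgesIn, Finset.mem_filter, Finset.mem_product, Finset.mem_univ, and_true] at he
  unfold child
  split_ifs with h
  · exact ⟨he.2, h.2, by rw [h.1]; exact he.1⟩
  · rcases parent_mul_of e.1 e.2 with h' | h'
    · exact absurd h' h
    · exact ⟨he.1, h'.2, by rw [h'.1]; exact he.2⟩

theorem card_edgesIn_lt (hS : S.Nonempty) : (edgesIn S).card + 1 ≤ S.card := by
  obtain ⟨r, hr, hmin⟩ := S.exists_min_image norm hS
  rw [← Finset.card_erase_add_one hr, add_le_add_iff_right]
  refine Finset.card_le_card_of_injOn child (fun e he => ?_) child_injective.injOn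
  obtain ⟨h1, h2, h3⟩ := child_mem he
  simp only [Finset.coe_erase, Set.mem_sdiff, Finset.mem_coe, Set.mem_singleton_iff]
  refine ⟨h1, fun h => ?_⟩
  have := hmin _ h3
  have := norm_parent_add_one h2
  rw [← h] at *
  omega

theorem norm_lt_card (h1 : (1 : FreeGroup X) ∈ S) (hS : S.card ≤ (edgesIn S).card + 1)
    {s : FreeGroup X} (hs : s ∈ S) : s.norm < S.card := by
  have hsub : (edgesIn S).image child ⊆ S.erase 1 := fun s hs => by
    obtain ⟨e, he, rfl⟩ := Finset.mem_image.mp hs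
    obtain ⟨h1, h2, -⟩ := child_mem he
    exact Finset.mem_erase.mpr ⟨h2, h1⟩
  have himg : (edgesIn S).image child = S.erase 1 := by
    refine Finset.eq_of_subset_of_card_le hsub ?_
    rw [Finset.card_image_of_injective _ child_injective, Finset.card_erase_of_mem h1]
    omega
  have hpar : ∀ s ∈ S, s ≠ 1 → parent s ∈ S := fun s hs hs1 => by
    have : s ∈ (edgesIn S).image child := himg ▸ Finset.mem_erase.mpr ⟨hs1, hs⟩
    obtain ⟨e, he, rfl⟩ := Finset.mem_image.mp this
    exact (child_mem he).2.2
  have key : ∀ (n : ℕ) (s : FreeGroup X), s ∈ S → s.norm = n →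
      n + 1 ≤ (S.filter fun t => t.norm ≤ n).card := by
    intro n
    induction n with
    | zero =>
      intro s hs hn
      exact Finset.card_pos.mpr ⟨s, Finset.mem_filter.mpr ⟨hs, hn.le⟩⟩
    | succ n ih =>
      intro s hs hn
      have hs1 : s ≠ 1 := by
        rintro rfl
        simp at hn
      have hp := norm_parent_add_one hs1
      refine (Nat.succ_le_succ (ih _ (hpar s hs hs1) (by omega))).trans ?_
      rw [Nat.succ_eq_add_one]
      refine Finset.card_lt_card ⟨fun t ht => ?_, fun h => ?_⟩
      · simp only [Finset.mem_filter] at ht ⊢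
        exact ⟨ht.1, by omega⟩
      · have := h (Finset.mem_filter.mpr ⟨hs, hn.le⟩)
        simp only [Finset.mem_filter] at this
        omega
  have := key _ s hs rfl
  exact this.trans (Finset.card_le_card (Finset.filter_subset _ _))

end Forest

end FreeGroup

end CayleyTree

open Module

section Leading

namespace MN

variable {k Ω : Type*} [Field k] [LinearOrder Ω]

/-- `a` is the least element of the support of `f`. -/
def IsLead (f : MN k Ω) (a : Ω) : Prop := f.coeff a ≠ 0 ∧ ∀ b, f.coeff b ≠ 0 → a ≤ b

theorem IsLead.ne_zero {f : MN k Ω} {a : Ω} (h : IsLead f a) : f ≠ 0 := by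
  rintro rfl
  exact h.1 rfl

theorem IsLead.unique {f : MN k Ω} {a b : Ω} (ha : IsLead f a) (hb : IsLead f b) : a = b :=
  le_antisymm (ha.2 b hb.1) (hb.2 a ha.1)

theorem IsLead.smul {f : MN k Ω} {a : Ω} (ha : IsLead f a) {c : k} (hc : c ≠ 0) :
    IsLead (c • f) a :=
  ⟨by simpa [hc] using ha.1, fun b hb => ha.2 b (by simpa [hc] using hb)⟩

variable [Group Ω]

theorem isLead_one : IsLead (1 : MN k Ω) 1 :=
  ⟨by simp, fun b hb => by
    by_contra h
    exact hb (coeff_one_of_ne (by rintro rfl; exact h le_rfl))⟩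

variable [MulLeftMono Ω] [MulRightMono Ω]

theorem exists_isLead {f : MN k Ω} (hf : f ≠ 0) : ∃ a, IsLead f a := exists_min hf

theorem IsLead.mul_of {f : MN k Ω} {a : Ω} (h : IsLead f a) (g : Ω) :
    IsLead (f * of k Ω g) (a * g) := by
  refine ⟨by simpa using h.1, fun b hb => ?_⟩
  rw [coeff_mul_of] at hb
  exact le_mul_inv_iff_mul_le.mp (h.2 _ hb)

theorem coeff_sum {ι : Type*} (s : Finset ι) (y : ι → MN k Ω) (a : Ω) :
    (∑ i ∈ s, y i).coeff a = ∑ i ∈ s, (y i).coeff a := map_sum (coeffₗ a) y s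

/-- Series with pairwise distinct leading monomials are independent. -/
theorem eq_zero_of_sum_eq_zero {ι : Type*} (s : Finset ι) (y : ι → MN k Ω)
    (hsum : ∑ i ∈ s, y i = 0)
    (hd : ∀ i ∈ s, ∀ j ∈ s, ∀ a, IsLead (y i) a → IsLead (y j) a → i = j) :
    ∀ i ∈ s, y i = 0 := by
  classical
  by_contra! hne
  have h1 : (s.filter fun i => y i ≠ 0).Nonempty := by
    obtain ⟨i, hi, hi0⟩ := hne
    exact ⟨i, Finset.mem_filter.mpr ⟨hi, hi0⟩⟩
  have hlead : ∀ i, ∃ a, y i ≠ 0 → IsLead (y i) a := fun i => by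
    by_cases h : y i = 0
    · exact ⟨1, fun h' => absurd h h'⟩
    · exact (exists_isLead h).imp fun _ ha _ => ha
  choose a ha using hlead
  obtain ⟨i, hi, hmin⟩ := Finset.exists_min_image _ a h1
  obtain ⟨his, hi0⟩ := Finset.mem_filter.mp hi
  have hcoeff : (∑ j ∈ s, y j).coeff (a i) = (y i).coeff (a i) := by
    rw [coeff_sum]
    refine Finset.sum_eq_single i (fun j hj hji => ?_) (fun h => absurd his h)
    by_contra hj0
    have hyj : y j ≠ 0 := by
      intro h
      rw [h] at hj0
      exact hj0 rfl
    have hle : a i ≤ a j := hmin j (Finset.mem_filter.mpr ⟨hj, hyj⟩)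
    have heq : a i = a j := le_antisymm hle ((ha j hyj).2 _ hj0)
    exact hji (hd j hj i his _ (ha j hyj) (heq ▸ ha i hi0))
  rw [hsum] at hcoeff
  exact (ha i hi0).1 hcoeff.symm

/-- The set of leading monomials of the elements of a subspace. -/
def leadSet (V : Submodule k (MN k Ω)) : Set Ω := {a | ∃ y ∈ V, IsLead y a}

theorem card_le_finrank_of_subset_leadSet (V : Submodule k (MN k Ω)) [FiniteDimensional k V]
    (T : Finset Ω) (hT : ↑T ⊆ leadSet V) : T.card ≤ finrank k V := by
  classical
  have hT' : ∀ t ∈ T, ∃ y ∈ V, IsLead y t := fun t ht => hT ht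
  choose! y hyV hy using hT'
  have hli : LinearIndependent k fun t : T => (⟨y t, hyV t t.2⟩ : V) := by
    rw [Fintype.linearIndependent_iff]
    intro c hc t
    have hc' : ∑ t : T, c t • y t = 0 := by
      have := congrArg (Submodule.subtype V) hc
      simpa using this
    have := eq_zero_of_sum_eq_zero Finset.univ (fun t : T => c t • y t) hc'
      (fun i _ j _ a hi hj => by
        have hci : c i ≠ 0 := fun h => hi.ne_zero (by simp [h])
        have hcj : c j ≠ 0 := fun h => hj.ne_zero (by simp [h])
        exact Subtype.ext ((((hy i i.2).smul hci).unique hi).trans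
          (((hy j j.2).smul hcj).unique hj).symm)) t (Finset.mem_univ t)
    exact (smul_eq_zero.mp this).resolve_right (hy t t.2).ne_zero
  simpa using hli.fintype_card_le_finrank

theorem finrank_le_card_of_leadSet_subset (V : Submodule k (MN k Ω)) [FiniteDimensional k V]
    (T : Finset Ω) (hT : leadSet V ⊆ T) : finrank k V ≤ T.card := by
  let L : V →ₗ[k] (T → k) := LinearMap.pi fun t => (coeffₗ t.1).comp V.subtype
  have hL : Injective L := by
    rw [← LinearMap.ker_eq_bot, LinearMap.ker_eq_bot']
    intro y hy
    by_contra hne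
    obtain ⟨a, ha⟩ := exists_isLead (f := y.1) (fun h => hne (Subtype.ext h))
    exact ha.1 (congrFun hy ⟨a, hT ⟨y.1, y.2, ha⟩⟩)
  simpa using LinearMap.finrank_le_finrank_of_injective hL

variable {X : Type*} [Fintype X]

/-- The elements of `V` that stay in `V` after right multiplication by `g`. -/
noncomputable def stable (V : Submodule k (MN k Ω)) (g : Ω) : Submodule k (MN k Ω) :=
  V ⊓ V.comap (LinearMap.mulRight k (of k Ω g))

theorem mem_stable {V : Submodule k (MN k Ω)} {g : Ω} {y : MN k Ω} :
    y ∈ stable V g ↔ y ∈ V ∧ y * of k Ω g ∈ V := Iff.rfl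

instance (V : Submodule k (MN k Ω)) [FiniteDimensional k V] (g : Ω) :
    FiniteDimensional k (stable V g) :=
  Submodule.finiteDimensional_of_le inf_le_left

section Counting

variable [DecidableEq X] {θ : FreeGroup X →* Ω}

theorem exists_finset_leadSet (hθ : Injective θ) (V : Submodule k (MN k Ω))
    [FiniteDimensional k V] (hl : leadSet V ⊆ Set.range θ) :
    ∃ S : Finset (FreeGroup X), (∀ g, g ∈ S ↔ θ g ∈ leadSet V) ∧
    S.card = finrank k V ∧
    ∑ x, finrank k (stable V (θ (FreeGroup.of x))) ≤ (FreeGroup.edgesIn S).card := by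
  classical
  have hfin : (leadSet V).Finite := by
    by_contra hinf
    obtain ⟨T, hT, hc⟩ := Set.Infinite.exists_subset_card_eq hinf (finrank k V + 1)
    have := card_le_finrank_of_subset_leadSet V T hT
    omega
  have hfin' : (θ ⁻¹' leadSet V).Finite := hfin.preimage hθ.injOn
  refine ⟨hfin'.toFinset, fun g => by simp, ?_, ?_⟩
  · refine le_antisymm ?_ ?_
    · rw [← Finset.card_image_of_injective _ hθ]
      refine card_le_finrank_of_subset_leadSet V _ fun a ha => ?_
      simp only [Finset.coe_image, Set.Finite.coe_toFinset, Set.mem_image] at ha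
      obtain ⟨g, hg, rfl⟩ := ha
      exact hg
    · rw [← Finset.card_image_of_injective _ hθ]
      refine finrank_le_card_of_leadSet_subset V _ fun a ha => ?_
      obtain ⟨g, rfl⟩ := hl ha
      simpa using ⟨g, ha, rfl⟩
  · rw [Finset.card_eq_sum_card_fiberwise (f := Prod.snd) (t := Finset.univ) (by simp)]
    refine Finset.sum_le_sum fun x _ => ?_
    refine (finrank_le_card_of_leadSet_subset _
      (((FreeGroup.edgesIn hfin'.toFinset).filter fun e => e.2 = x).image
        fun e => θ e.1) ?_).trans Finset.card_image_le
    rintro a ⟨y, hy, ha⟩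
    rw [mem_stable] at hy
    obtain ⟨g, rfl⟩ := hl ⟨y, hy.1, ha⟩
    have h1 : θ g ∈ leadSet V := ⟨y, hy.1, ha⟩
    have h2 : θ (g * FreeGroup.of x) ∈ leadSet V := by
      rw [_root_.map_mul]
      exact ⟨_, hy.2, ha.mul_of _⟩
    rw [Finset.mem_coe, Finset.mem_image]
    exact ⟨(g, x), by simp [FreeGroup.edgesIn, h1, -_root_.map_mul, h2], rfl⟩

theorem sum_finrank_stable_lt (hθ : Injective θ) (V : Submodule k (MN k Ω))
    [FiniteDimensional k V] (hl : leadSet V ⊆ Set.range θ)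
    (hV : V ≠ ⊥) :
    ∑ x, finrank k (stable V (θ (FreeGroup.of x))) < finrank k V := by
  obtain ⟨S, -, hc, hs⟩ := exists_finset_leadSet hθ V hl
  have hne : S.Nonempty := by
    rw [← Finset.card_pos, hc]
    rw [pos_iff_ne_zero, ne_eq, Submodule.finrank_eq_zero]
    exact hV
  have := FreeGroup.card_edgesIn_lt hne
  omega

theorem norm_lt_finrank (hθ : Injective θ) (V : Submodule k (MN k Ω))
    [FiniteDimensional k V] (hl : leadSet V ⊆ Set.range θ)
    (h1 : (1 : Ω) ∈ leadSet V)
    (hV : finrank k V ≤ ∑ x, finrank k (stable V (θ (FreeGroup.of x))) + 1)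
    {g : FreeGroup X} (hg : θ g ∈ leadSet V) : g.norm < finrank k V := by
  obtain ⟨S, hm, hc, hs⟩ := exists_finset_leadSet hθ V hl
  rw [← hc]
  refine FreeGroup.norm_lt_card ((hm 1).mpr (by rwa [MonoidHom.map_one])) ?_ ((hm g).mpr hg)
  omega

end Counting

end MN

end Leading

section Compatible

/-- Solving linear conditions for maps into a division algebra. -/
theorem exists_linearMap_of_lt_finrank {k V E X : Type*} [Field k] [AddCommGroup V] [Module k V]
    [FiniteDimensional k V] [DivisionRing E] [Algebra k E] [Fintype X] {U : X → Type*}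
    [∀ x, AddCommGroup (U x)] [∀ x, Module k (U x)] [∀ x, FiniteDimensional k (U x)]
    (α β : ∀ x, U x →ₗ[k] V) (ρ : X → E) {r : ℕ} (v : Fin r → V)
    (h : ∑ x, finrank k (U x) + r < finrank k V) :
    ∃ f : V →ₗ[k] E, f ≠ 0 ∧ (∀ x u, f (β x u) = f (α x u) * ρ x) ∧ ∀ i, f (v i) = 0 := by
  let b := finBasis k V
  let c := fun x => finBasis k (U x)
  let ev : V → ((Fin (finrank k V) → E) →ₗ[E] E) := fun w =>
    ∑ i, b.equivFun w i • LinearMap.proj i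
  let L : (Fin (finrank k V) → E) →ₗ[E] ((Σ x, Fin (finrank k (U x))) ⊕ Fin r → E) :=
    LinearMap.pi (Sum.elim
      (fun p => ev (β p.1 (c p.1 p.2)) -
        (LinearMap.toSpanSingleton E E (ρ p.1)).comp (ev (α p.1 (c p.1 p.2))))
      (fun i => ev (v i)))
  have hL : L.ker ≠ ⊥ := by
    refine LinearMap.ker_ne_bot_of_finrank_lt ?_
    simpa using h
  obtain ⟨z, hz, hz0⟩ := Submodule.exists_mem_ne_zero_of_ne_bot hL
  have hev : ∀ w, ev w z = b.constr k z w := fun w => by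
    simp [ev, Basis.constr_apply_fintype, LinearMap.sum_apply]
  refine ⟨b.constr k z, fun h0 => hz0 ?_, fun x u => ?_, fun i => ?_⟩
  · exact (b.constr k).map_eq_zero_iff.mp h0
  · have : (b.constr k z).comp (β x) =
        (LinearMap.mulRight k (ρ x)).comp ((b.constr k z).comp (α x)) := by
      refine (c x).ext fun i => ?_
      have := congrFun (LinearMap.mem_ker.mp hz) (Sum.inl ⟨x, i⟩)
      simp only [L, LinearMap.pi_apply, Sum.elim_inl, LinearMap.sub_apply, LinearMap.comp_apply,
        hev, LinearMap.toSpanSingleton_apply, Pi.zero_apply, sub_eq_zero, smul_eq_mul] at this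
      exact this
    exact LinearMap.congr_fun this u
  · have := congrFun (LinearMap.mem_ker.mp hz) (Sum.inr i)
    rw [← hev]
    exact this

end Compatible

section Fox

namespace FreeGroup

variable {X : Type*}

/-- Left translation of chains of edges in the Cayley graph. -/
noncomputable def translate (g : FreeGroup X) :
    (FreeGroup X × X →₀ ℤ) →ₗ[ℤ] (FreeGroup X × X →₀ ℤ) :=
  Finsupp.lmapDomain ℤ ℤ fun e => (g * e.1, e.2)

theorem translate_one (m : FreeGroup X × X →₀ ℤ) : translate 1 m = m := by
  simp only [translate, Finsupp.lmapDomain_apply, one_mul]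
  exact Finsupp.mapDomain_id

theorem translate_mul (g h : FreeGroup X) (m : FreeGroup X × X →₀ ℤ) :
    translate (g * h) m = translate g (translate h m) := by
  simp only [translate, Finsupp.lmapDomain_apply, ← Finsupp.mapDomain_comp]
  congr 1
  funext e
  simp [mul_assoc]

theorem translate_apply (g : FreeGroup X) (m : FreeGroup X × X →₀ ℤ) (e : FreeGroup X × X) :
    translate g m e = m (g⁻¹ * e.1, e.2) := by
  have hinj : Injective fun e : FreeGroup X × X => (g * e.1, e.2) := by
    rintro ⟨a, x⟩ ⟨b, y⟩ h
    simpa using h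
  have := Finsupp.mapDomain_apply hinj m (g⁻¹ * e.1, e.2)
  simpa [translate, Finsupp.lmapDomain_apply] using this

/-- The affine action of the free group on chains whose orbit of `0` gives the paths. -/
noncomputable def affine : FreeGroup X →* Equiv.Perm (FreeGroup X × X →₀ ℤ) :=
  FreeGroup.lift fun x =>
    { toFun := fun m => Finsupp.single (1, x) 1 + translate (of x) m
      invFun := fun m => translate (of x)⁻¹ (m - Finsupp.single (1, x) 1)
      left_inv := fun m => by
        simp [← translate_mul, translate_one]
      right_inv := fun m => by
        simp only [← translate_mul, mul_inv_cancel, translate_one]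
        abel }

/-- The chain of the path from `1` to `g` in the Cayley graph. -/
noncomputable def path (g : FreeGroup X) : FreeGroup X × X →₀ ℤ := affine g 0

theorem affine_apply (g : FreeGroup X) (m : FreeGroup X × X →₀ ℤ) :
    affine g m = path g + translate g m := by
  induction g using FreeGroup.induction_on generalizing m with
  | C1 => simp [path, translate_one]
  | of x => simp [path, affine]
  | inv_of x ih =>
    simp [path, affine, Equiv.Perm.inv_def]
    abel
  | mul g h hg hh =>
    have h1 : ∀ m, affine (g * h) m = affine g (affine h m) := fun m => by
      rw [MonoidHom.map_mul, Equiv.Perm.mul_apply]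
    rw [path, h1, h1, hg, hh m, hg (affine h 0), hh 0]
    simp only [LinearMap.map_add, LinearMap.map_zero, translate_mul]
    abel

@[simp] theorem path_one : path (1 : FreeGroup X) = 0 := by simp [path]

@[simp] theorem path_of (x : X) : path (of x) = Finsupp.single (1, x) 1 := by
  simp [path, affine]

theorem path_mul (g h : FreeGroup X) : path (g * h) = path g + translate g (path h) := by
  rw [← affine_apply, path, MonoidHom.map_mul, Equiv.Perm.mul_apply, path]

/-- Integration of a function on edges over a chain. -/
noncomputable def integral {M : Type*} [AddCommGroup M] (F : FreeGroup X × X → M) :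
    (FreeGroup X × X →₀ ℤ) →ₗ[ℤ] M := Finsupp.linearCombination ℤ F

section

variable {M : Type*} [AddCommGroup M]

theorem integral_translate (F : FreeGroup X × X → M) (g : FreeGroup X)
    (m : FreeGroup X × X →₀ ℤ) :
    integral F (translate g m) = integral (fun e => F (g * e.1, e.2)) m := by
  simp only [integral, translate, Finsupp.lmapDomain_apply]
  rw [Finsupp.linearCombination_mapDomain]
  rfl

theorem integral_path_mul (F : FreeGroup X × X → M) (g h : FreeGroup X) :
    integral F (path (g * h)) =
      integral F (path g) + integral (fun e => F (g * e.1, e.2)) (path h) := by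
  rw [path_mul, LinearMap.map_add, integral_translate]

@[simp] theorem integral_path_of (F : FreeGroup X × X → M) (x : X) :
    integral F (path (of x)) = F (1, x) := by
  rw [path_of]
  simp [integral]

theorem integral_comp {N : Type*} [AddCommGroup N] (f : M →+ N) (F : FreeGroup X × X → M)
    (m : FreeGroup X × X →₀ ℤ) :
    integral (fun e => f (F e)) m = f (integral F m) := by
  simp [integral, Finsupp.linearCombination_apply, Finsupp.sum]

theorem integral_eq_sum (F : FreeGroup X × X → M) (m : FreeGroup X × X →₀ ℤ)
    {s : Finset (FreeGroup X × X)} (hs : m.support ⊆ s) :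
    integral F m = ∑ e ∈ s, m e • F e := by
  rw [integral, Finsupp.linearCombination_apply, Finsupp.sum]
  refine Finset.sum_subset hs fun e _ he => ?_
  simp [Finsupp.notMem_support_iff.mp he]

/-- The increments of a function along a path add up to its total increment. -/
theorem integral_path_sub (Λ : FreeGroup X → M) (u g : FreeGroup X) :
    integral (fun e => Λ (u * e.1 * of e.2) - Λ (u * e.1)) (path g) = Λ (u * g) - Λ u := by
  have key : ∀ g, (∀ u, integral (fun e => Λ (u * e.1 * of e.2) - Λ (u * e.1)) (path g) =
      Λ (u * g) - Λ u) → ∀ h, (∀ u, integral (fun e => Λ (u * e.1 * of e.2) - Λ (u * e.1))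
        (path h) = Λ (u * h) - Λ u) → ∀ u, integral (fun e => Λ (u * e.1 * of e.2) - Λ (u * e.1))
        (path (g * h)) = Λ (u * (g * h)) - Λ u := by
    intro g hg h hh u
    have := hh (u * g)
    simp only [← mul_assoc] at this ⊢
    rw [integral_path_mul, hg]
    simp only [← mul_assoc, this]
    abel
  induction g using FreeGroup.induction_on generalizing u with
  | C1 => simp
  | of x => rw [integral_path_of]; simp
  | inv_of x ih =>
    have h1 := integral_path_mul (fun e => Λ (u * (of x)⁻¹ * e.1 * of e.2) - Λ (u * (of x)⁻¹ * e.1))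
      (of x) (of x)⁻¹
    simp only [mul_inv_cancel, path_one, LinearMap.map_zero, integral_path_of, mul_one,
      inv_mul_cancel_right, ← mul_assoc] at h1
    rw [eq_neg_of_add_eq_zero_right h1.symm]
    abel
  | mul g h hg hh => exact key g hg h hh u

end

section Derivations

variable {R : Type*} [Ring R]

open Classical in
/-- The Fox derivative with respect to `x`, with coefficients pushed forward along `ρ`. -/
noncomputable def fox (ρ : FreeGroup X →* R) (x : X) (g : FreeGroup X) : R :=
  integral (fun e => if e.2 = x then ρ e.1 else 0) (path g)

open Classical in
theorem fox_mul (ρ : FreeGroup X →* R) (x : X) (g h : FreeGroup X) :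
    fox ρ x (g * h) = fox ρ x g + ρ g * fox ρ x h := by
  have := integral_comp (AddMonoidHom.mulLeft (ρ g))
    (fun e : FreeGroup X × X => if e.2 = x then ρ e.1 else 0) (path h)
  simp only [AddMonoidHom.coe_mulLeft, mul_ite, mul_zero, ← MonoidHom.map_mul] at this
  rw [fox, integral_path_mul, fox, fox, ← this]

open Classical in
theorem fox_of (ρ : FreeGroup X →* R) (x y : X) :
    fox ρ x (of y) = if y = x then 1 else 0 := by
  rw [fox, integral_path_of]
  simp

end Derivations

end FreeGroup

end Fox

section Relations

variable {Ω R : Type*} [Group Ω] [Ring R]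

/-- `D` restricts to a derivation (crossed homomorphism) along `ρ` on the subgroup `H`. -/
def IsDerOn (ρ : Ω →* R) (H : Subgroup Ω) (D : Ω → R) : Prop :=
  ∀ a ∈ H, ∀ b ∈ H, D (a * b) = D a + ρ a * D b

theorem IsDerOn.mono {ρ : Ω →* R} {H H' : Subgroup Ω} {D : Ω → R} (hD : IsDerOn ρ H' D)
    (h : H ≤ H') : IsDerOn ρ H D := fun a ha b hb => hD a (h ha) b (h hb)

theorem IsDerOn.map_one {ρ : Ω →* R} {H : Subgroup Ω} {D : Ω → R} (hD : IsDerOn ρ H D) :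
    D 1 = 0 := by
  have := hD 1 H.one_mem 1 H.one_mem
  simpa using this

theorem isDerOn_fox {X : Type*} (ρ : FreeGroup X →* R) (x : X) (H) :
    IsDerOn ρ H (FreeGroup.fox ρ x) := fun a _ b _ => FreeGroup.fox_mul ρ x a b

theorem IsDerOn.eq_of_eqOn_of {X : Type*} {ρ : FreeGroup X →* R} {D D' : FreeGroup X → R}
    (hD : IsDerOn ρ ⊤ D) (hD' : IsDerOn ρ ⊤ D')
    (h : ∀ x, D (FreeGroup.of x) = D' (FreeGroup.of x)) (g : FreeGroup X) : D g = D' g := by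
  induction g using FreeGroup.induction_on with
  | C1 => rw [hD.map_one, hD'.map_one]
  | of x => exact h x
  | inv_of x ih =>
    have key : ∀ D : FreeGroup X → R, IsDerOn ρ ⊤ D →
        D (FreeGroup.of x)⁻¹ = - (ρ (FreeGroup.of x)⁻¹ * D (FreeGroup.of x)) := fun D hD => by
      have := hD (FreeGroup.of x)⁻¹ trivial (FreeGroup.of x) trivial
      rw [inv_mul_cancel, hD.map_one] at this
      exact eq_neg_of_add_eq_zero_left this.symm
    rw [key D hD, key D' hD', h]
  | mul g h hg hh => rw [hD g trivial h trivial, hD' g trivial h trivial, hg, hh]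

theorem IsDerOn.eq_sum_fox {X : Type*} [Fintype X] {ρ : FreeGroup X →* R} {D : FreeGroup X → R}
    (hD : IsDerOn ρ ⊤ D) (g : FreeGroup X) :
    D g = ∑ x, FreeGroup.fox ρ x g * D (FreeGroup.of x) := by
  classical
  refine hD.eq_of_eqOn_of (D' := fun g => ∑ x, FreeGroup.fox ρ x g * D (FreeGroup.of x))
    (fun a _ b _ => ?_) (fun y => ?_) g
  · simp only [FreeGroup.fox_mul, add_mul, Finset.sum_add_distrib, Finset.mul_sum, mul_assoc]
  · simp [FreeGroup.fox_of]

variable {J : Type*} [Fintype J]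

/-- The left linear relations satisfied by the values at `c` of all derivations on `H`. -/
def DerRel (ρ : Ω →* R) (H : Subgroup Ω) (c : J → Ω) : Submodule R (J → R) where
  carrier := {d | ∀ D, IsDerOn ρ H D → ∑ j, d j * D (c j) = 0}
  zero_mem' := by simp
  add_mem' := fun {a b} ha hb D hD => by
    simp [add_mul, Finset.sum_add_distrib, ha D hD, hb D hD]
  smul_mem' := fun r d hd D hD => by
    simp [mul_assoc, ← Finset.mul_sum, hd D hD]

theorem rel_mono (ρ : Ω →* R) {H H' : Subgroup Ω} (h : H ≤ H') (c : J → Ω) :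
    DerRel ρ H c ≤ DerRel ρ H' c := fun _ hd D hD => hd D (hD.mono h)

theorem rel_range {G : Type*} [Group G] (ρ : Ω →* R) {φ : G →* Ω} (hφ : Injective φ)
    (b : J → G) : DerRel ρ φ.range (φ ∘ b) = DerRel (ρ.comp φ) ⊤ b := by
  ext d
  constructor
  · intro hd D hD
    have := hd (extend φ D 0) ?_
    · simpa [hφ.extend_apply] using this
    · rintro _ ⟨a, rfl⟩ _ ⟨b, rfl⟩
      rw [← map_mul, hφ.extend_apply, hφ.extend_apply, hφ.extend_apply]
      exact hD a trivial b trivial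
  · intro hd D hD
    refine hd (D ∘ φ) fun a _ b _ => ?_
    simpa using hD (φ a) ⟨a, rfl⟩ (φ b) ⟨b, rfl⟩

theorem mem_rel_top_iff {X : Type*} [Fintype X] {ρ : FreeGroup X →* R} {c : J → FreeGroup X}
    {d : J → R} : d ∈ DerRel ρ ⊤ c ↔ ∀ x, ∑ j, d j * FreeGroup.fox ρ x (c j) = 0 := by
  constructor
  · exact fun hd x => hd _ (isDerOn_fox ρ x ⊤)
  · intro h D hD
    simp only [hD.eq_sum_fox (c _), Finset.mul_sum]
    rw [Finset.sum_comm]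
    refine Finset.sum_eq_zero fun x _ => ?_
    simp only [← mul_assoc, ← Finset.sum_mul, h x, zero_mul]

/-- `c` is an injectively indexed part of a basis of the free subgroup `C`. -/
def IsPartialBasis {J : Type*} (C : Subgroup Ω) (c : J → Ω) : Prop :=
  ∃ (T : Type) (φ : FreeGroup T →* Ω) (i : J → T), Injective φ ∧ φ.range = C ∧ Injective i ∧
    ∀ j, c j = φ (FreeGroup.of (i j))

theorem IsPartialBasis.mem {J : Type*} {C : Subgroup Ω} {c : J → Ω} (h : IsPartialBasis C c)
    (j : J) : c j ∈ C := by
  obtain ⟨T, φ, i, -, rfl, -, h⟩ := h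
  exact h j ▸ ⟨_, rfl⟩

open Classical in
theorem IsPartialBasis.exists_isDerOn {J : Type*} {C : Subgroup Ω} {c : J → Ω}
    (h : IsPartialBasis C c) (ρ : Ω →* R) (j₀ : J) :
    ∃ δ, IsDerOn ρ C δ ∧ ∀ j, δ (c j) = if j = j₀ then 1 else 0 := by
  obtain ⟨T, φ, i, hφ, rfl, hi, h⟩ := h
  refine ⟨extend φ (FreeGroup.fox (ρ.comp φ) (i j₀)) 0, ?_, fun j => ?_⟩
  · rintro _ ⟨a, rfl⟩ _ ⟨b, rfl⟩
    rw [← map_mul, hφ.extend_apply, hφ.extend_apply, hφ.extend_apply]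
    exact FreeGroup.fox_mul _ _ a b
  · rw [h, hφ.extend_apply, FreeGroup.fox_of]
    simp [hi.eq_iff]

end Relations

section Projection

namespace MN

variable {k Ω : Type*} [Field k] [LinearOrder Ω] [Group Ω]

open Classical in
/-- The part of a series supported on the subgroup `H`. -/
noncomputable def proj (H : Subgroup Ω) : MN k Ω →ₗ[k] MN k Ω where
  toFun f := mk (fun a => if a ∈ H then f.coeff a else 0)
    (f.isPWO_support.mono fun a ha h => ha (by simp [h]))
  map_add' f g := by
    ext a
    by_cases h : a ∈ H <;> simp [h]
  map_smul' c f := by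
    ext a
    by_cases h : a ∈ H <;> simp [h]

theorem coeff_proj_of_mem {H : Subgroup Ω} {a : Ω} (h : a ∈ H) (f : MN k Ω) :
    (proj H f).coeff a = f.coeff a := by simp [proj, h]

theorem coeff_proj_of_notMem {H : Subgroup Ω} {a : Ω} (h : a ∉ H) (f : MN k Ω) :
    (proj H f).coeff a = 0 := by simp [proj, h]

theorem proj_eq_self_iff {H : Subgroup Ω} {f : MN k Ω} :
    proj H f = f ↔ ∀ a, f.coeff a ≠ 0 → a ∈ H := by
  constructor
  · intro h a ha
    by_contra haH
    rw [← h, coeff_proj_of_notMem haH] at ha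
    exact ha rfl
  · intro h
    ext a
    by_cases ha : a ∈ H
    · rw [coeff_proj_of_mem ha]
    · rw [coeff_proj_of_notMem ha]
      by_contra h0
      exact ha (h a (Ne.symm h0))

theorem proj_one (H : Subgroup Ω) : proj H (1 : MN k Ω) = 1 :=
  proj_eq_self_iff.mpr fun a ha => by
    by_contra h
    exact ha (coeff_one_of_ne fun h1 => h (h1 ▸ H.one_mem))

variable [MulLeftMono Ω] [MulRightMono Ω]

theorem proj_mul_of {H : Subgroup Ω} {h : Ω} (hh : h ∈ H) (f : MN k Ω) :
    proj H (f * of k Ω h) = proj H f * of k Ω h := by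
  ext a
  rw [coeff_mul_of]
  by_cases ha : a ∈ H
  · rw [coeff_proj_of_mem ha, coeff_proj_of_mem (H.mul_mem ha (H.inv_mem hh)), coeff_mul_of]
  · rw [coeff_proj_of_notMem ha, coeff_proj_of_notMem]
    intro h'
    exact ha (by simpa using H.mul_mem h' hh)

theorem proj_mul_fox {X : Type*} (θ : FreeGroup X →* Ω) {H : Subgroup Ω} (hH : θ.range ≤ H)
    (f : MN k Ω) (x : X) (g : FreeGroup X) :
    proj H (f * FreeGroup.fox ((of k Ω).comp θ) x g) =
      proj H f * FreeGroup.fox ((of k Ω).comp θ) x g := by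
  classical
  let l : MN k Ω →+ MN k Ω := (proj H).toAddMonoidHom.comp (AddMonoidHom.mulLeft f)
  let r : MN k Ω →+ MN k Ω := AddMonoidHom.mulLeft (proj H f)
  change l _ = r _
  rw [FreeGroup.fox, ← FreeGroup.integral_comp, ← FreeGroup.integral_comp]
  congr 2
  funext e
  by_cases he : e.2 = x
  · simpa [l, r, he] using proj_mul_of (hH ⟨e.1, rfl⟩) f
  · simp [l, r, he]

theorem proj_mem_rel_top {X J : Type*} [Fintype X] [Fintype J] {θ : FreeGroup X →* Ω}
    {H : Subgroup Ω} (hH : θ.range ≤ H)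
    {c : J → FreeGroup X} {d : J → MN k Ω} (hd : d ∈ DerRel ((of k Ω).comp θ) ⊤ c) :
    (fun j => proj H (d j)) ∈ DerRel ((of k Ω).comp θ) ⊤ c := by
  rw [mem_rel_top_iff] at hd ⊢
  intro x
  simp only [← proj_mul_fox θ hH]
  rw [← map_sum, hd x, map_zero]

end MN

end Projection

section Transfer

theorem FreeGroup.integral_congr {X M : Type*} [AddCommGroup M] {F F' : FreeGroup X × X → M}
    {m : FreeGroup X × X →₀ ℤ} (h : ∀ e, m e ≠ 0 → F e = F' e) :
    FreeGroup.integral F m = FreeGroup.integral F' m := by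
  rw [FreeGroup.integral_eq_sum F m subset_rfl, FreeGroup.integral_eq_sum F' m subset_rfl]
  exact Finset.sum_congr rfl fun e he => by rw [h e (Finsupp.mem_support_iff.mp he)]

theorem FreeGroup.fox_eq {X R : Type*} [Ring R] [DecidableEq X] (ρ : FreeGroup X →* R) (x : X)
    (g : FreeGroup X) :
    FreeGroup.fox ρ x g = FreeGroup.integral (fun e => if e.2 = x then ρ e.1 else 0)
      (FreeGroup.path g) := by
  rw [FreeGroup.fox]
  congr 2
  funext e
  congr

namespace MN

variable {k Ω : Type*} [Field k] [LinearOrder Ω] [Group Ω] [MulLeftMono Ω] [MulRightMono Ω]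
  {X : Type*} [Fintype X] [DecidableEq X] {J : Type*} [Fintype J]

/-- The span of the translates of the entries of `d` by the ball of radius `r`. -/
noncomputable def ballSpan (θ : FreeGroup X →* Ω) (d : J → MN k Ω) (r : ℕ) :
    Submodule k (MN k Ω) :=
  Submodule.span k ((fun p : J × FreeGroup X => d p.1 * of k Ω (θ p.2)) '' {p | p.2.norm ≤ r})

theorem mem_ballSpan (θ : FreeGroup X →* Ω) (d : J → MN k Ω) {r : ℕ} (j : J) {w : FreeGroup X}
    (hw : w.norm ≤ r) : d j * of k Ω (θ w) ∈ ballSpan θ d r :=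
  Submodule.subset_span ⟨(j, w), hw, rfl⟩

theorem self_mem_ballSpan (θ : FreeGroup X →* Ω) (d : J → MN k Ω) (r : ℕ) (j : J) :
    d j ∈ ballSpan θ d r := by
  simpa using mem_ballSpan θ d (r := r) j (w := 1) (by simp)

theorem finite_ball (r : ℕ) : {p : J × FreeGroup X | p.2.norm ≤ r}.Finite := by
  refine ((Set.finite_univ (α := J)).prod (FreeGroup.finite_norm_le r)).subset ?_
  rintro ⟨j, w⟩ h
  exact ⟨trivial, h⟩

instance (θ : FreeGroup X →* Ω) (d : J → MN k Ω) (r : ℕ) :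
    FiniteDimensional k (ballSpan θ d r) :=
  FiniteDimensional.span_of_finite k ((finite_ball r).image _)

theorem finrank_ballSpan_le (θ : FreeGroup X →* Ω) (d : J → MN k Ω) (r : ℕ) :
    finrank k (ballSpan θ d r) ≤ {p : J × FreeGroup X | p.2.norm ≤ r}.ncard := by
  classical
  have hf := finite_ball (X := X) (J := J) r
  have h := finrank_span_finset_le_card (R := k)
    (hf.toFinset.image fun p : J × FreeGroup X => d p.1 * of k Ω (θ p.2))
  rw [Set.ncard_eq_toFinset_card _ hf]
  rw [Finset.coe_image, Set.Finite.coe_toFinset] at h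
  exact h.trans Finset.card_image_le

theorem leadSet_ballSpan_subset {θ : FreeGroup X →* Ω} {d : J → MN k Ω}
    (hd : ∀ j, proj θ.range (d j) = d j) (r : ℕ) :
    leadSet (ballSpan θ d r) ⊆ Set.range θ := by
  have h : ∀ y ∈ ballSpan θ d r, proj θ.range y = y := by
    intro y hy
    induction hy using Submodule.span_induction with
    | mem y hy =>
      obtain ⟨p, -, rfl⟩ := hy
      simp only
      rw [proj_mul_of (MonoidHom.mem_range.mpr ⟨_, rfl⟩), hd]
    | zero => simp
    | add y z _ _ hy hz => simp [hy, hz]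
    | smul a y _ hy => simp [hy]
  rintro a ⟨y, hy, ha⟩
  exact proj_eq_self_iff.mp (h y hy) a ha.1

/-- If the span of a ball has few stable elements, then a relation for the embedding `θ` can be
transferred to any other representation. -/
theorem exists_mem_rel_of_lt_finrank {E : Type*} [DivisionRing E] [Algebra k E]
    (ρ : FreeGroup X →* E) {θ : FreeGroup X →* Ω} {c : J → FreeGroup X} {d : J → MN k Ω}
    (hrel : d ∈ DerRel ((of k Ω).comp θ) ⊤ c)
    {r : ℕ} (hr : ∀ j e, FreeGroup.path (c j) e ≠ 0 → e.1.norm ≤ r) {s : ℕ} (z : Fin s → J)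
    (hlt : ∑ x, finrank k (stable (ballSpan θ d r) (θ (FreeGroup.of x))) + s <
      finrank k (ballSpan θ d r)) :
    ∃ d' ∈ DerRel ρ ⊤ c, d' ≠ 0 ∧ (∀ j, d j = 0 → d' j = 0) ∧ ∀ i, d' (z i) = 0 := by
  classical
  let V := ballSpan θ d r
  obtain ⟨f, hf0, hf, hz⟩ := exists_linearMap_of_lt_finrank (E := E)
    (fun x => Submodule.inclusion (inf_le_left : stable V (θ (FreeGroup.of x)) ≤ V))
    (fun x => ((LinearMap.mulRight k (of k Ω (θ (FreeGroup.of x)))).comp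
      (stable V (θ (FreeGroup.of x))).subtype).codRestrict V
        (fun u => (mem_stable.mp u.2).2))
    (fun x => ρ (FreeGroup.of x)) (fun i => ⟨d (z i), self_mem_ballSpan θ d r (z i)⟩) hlt
  obtain ⟨F, hF⟩ := LinearMap.exists_extend f
  have hFV : ∀ (y) (hy : y ∈ V), F y = f ⟨y, hy⟩ := fun y hy => by
    rw [← hF]
    rfl
  have hstep : ∀ x y, y ∈ V → y * of k Ω (θ (FreeGroup.of x)) ∈ V →
      F (y * of k Ω (θ (FreeGroup.of x))) = F y * ρ (FreeGroup.of x) := fun x y hy hy' => by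
    rw [hFV _ hy', hFV _ hy]
    exact hf x ⟨y, hy, hy'⟩
  have hball : ∀ (n : ℕ) (w : FreeGroup X) (j : J), w.norm = n → n ≤ r →
      F (d j * of k Ω (θ w)) = F (d j) * ρ w := by
    intro n
    induction n with
    | zero =>
      intro w j hw _
      rw [FreeGroup.norm_eq_zero] at hw
      simp [hw]
    | succ n ih =>
      intro w j hw hn
      have hw1 : w ≠ 1 := fun h => by simp [h] at hw
      have hp := FreeGroup.norm_parent_add_one hw1
      have ihp := ih (FreeGroup.parent w) j (by omega) (by omega)
      have hpV := mem_ballSpan θ d (r := r) j (w := FreeGroup.parent w) (by omega)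
      have hwV := mem_ballSpan θ d (r := r) j (w := w) (by omega)
      obtain ⟨x, hx | hx⟩ := FreeGroup.exists_parent_eq hw1
      · have h2 : d j * of k Ω (θ w) =
            d j * of k Ω (θ (FreeGroup.parent w)) * of k Ω (θ (FreeGroup.of x)) := by
          rw [mul_assoc, ← map_mul, ← map_mul, hx]
        have h3 := hstep x _ hpV (h2 ▸ hwV)
        rw [h2, h3, ihp, mul_assoc, ← map_mul, hx]
      · have h2 : d j * of k Ω (θ (FreeGroup.parent w)) =
            d j * of k Ω (θ w) * of k Ω (θ (FreeGroup.of x)) := by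
          rw [mul_assoc, ← map_mul, ← map_mul, hx]
        have h3 := hstep x _ hwV (h2 ▸ hpV)
        rw [← h2, ihp, ← hx, map_mul, ← mul_assoc] at h3
        have hu : IsUnit (ρ (FreeGroup.of x)) := (Group.isUnit _).map ρ
        exact (hu.mul_right_cancel h3).symm
  refine ⟨fun j => F (d j), ?_, fun h0 => hf0 ?_, fun j hj => by simp [hj], fun i => ?_⟩
  · rw [mem_rel_top_iff] at hrel ⊢
    intro x
    rw [← map_zero F, ← hrel x, map_sum]
    refine Finset.sum_congr rfl fun j _ => ?_
    have h1 := FreeGroup.integral_comp (AddMonoidHom.mulLeft (F (d j)))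
      (fun e : FreeGroup X × X => if e.2 = x then ρ e.1 else 0) (FreeGroup.path (c j))
    have h2 := FreeGroup.integral_comp (F.toAddMonoidHom.comp (AddMonoidHom.mulLeft (d j)))
      (fun e : FreeGroup X × X => if e.2 = x then (of k Ω).comp θ e.1 else 0)
      (FreeGroup.path (c j))
    rw [FreeGroup.fox_eq, FreeGroup.fox_eq]
    refine Eq.trans h1.symm (Eq.trans (FreeGroup.integral_congr fun e he => ?_) h2)
    by_cases hx : e.2 = x
    · simpa [hx] using (hball _ e.1 j rfl (hr j e he)).symm
    · simp [hx]
  · have h0' : ∀ j, F (d j) = 0 := congrFun h0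
    have hker : V ≤ LinearMap.ker F := by
      refine Submodule.span_le.mpr ?_
      rintro _ ⟨⟨j, w⟩, hw, rfl⟩
      simp only [SetLike.mem_coe, LinearMap.mem_ker]
      rw [hball _ w j rfl hw, h0', zero_mul]
    refine LinearMap.ext fun y => ?_
    rw [← hFV y.1 y.2]
    exact hker y.2
  · simp only
    rw [hFV _ (self_mem_ballSpan θ d r (z i))]
    exact hz i

theorem exists_radius (c : J → FreeGroup X) :
    ∃ r, ∀ j e, FreeGroup.path (c j) e ≠ 0 → e.1.norm ≤ r := by
  refine ⟨Finset.univ.sup fun j => (FreeGroup.path (c j)).support.sup fun e => e.1.norm,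
    fun j e he => ?_⟩
  refine le_trans (Finset.le_sup (f := fun e : FreeGroup X × X => e.1.norm)
    (Finsupp.mem_support_iff.mpr he)) ?_
  exact Finset.le_sup (f := fun j => (FreeGroup.path (c j)).support.sup
    fun e : FreeGroup X × X => e.1.norm) (Finset.mem_univ j)

/-- A relation over the universal division ring specializes to a relation with at most the same
support in any representation. -/
theorem exists_mem_rel {E : Type*} [DivisionRing E] [Algebra k E]
    (ρ : FreeGroup X →* E) {θ : FreeGroup X →* Ω} (hθ : Injective θ) {c : J → FreeGroup X}
    {d : J → MN k Ω} (hrel : d ∈ DerRel ((of k Ω).comp θ) ⊤ c)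
    (hsupp : ∀ j, proj θ.range (d j) = d j) (hd : d ≠ 0) :
    ∃ d' ∈ DerRel ρ ⊤ c, d' ≠ 0 ∧ ∀ j, d j = 0 → d' j = 0 := by
  obtain ⟨r, hr⟩ := exists_radius c
  obtain ⟨j, hj⟩ := Function.ne_iff.mp hd
  have hne : ballSpan θ d r ≠ ⊥ := fun h => hj (by
    simpa [h] using self_mem_ballSpan θ d r j)
  have := sum_finrank_stable_lt hθ (ballSpan θ d r) (leadSet_ballSpan_subset hsupp r) hne
  obtain ⟨d', h1, h2, h3, -⟩ := exists_mem_rel_of_lt_finrank ρ hrel hr (s := 0) Fin.elim0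
    (by simpa using this)
  exact ⟨d', h1, h2, h3⟩

/-- Leading monomials of elements in the span of a minimal relation stay in a bounded ball. -/
theorem norm_lt_of_isLead {θ : FreeGroup X →* Ω} (hθ : Injective θ) {c : J → FreeGroup X}
    {d : J → MN k Ω} (hrel : d ∈ DerRel ((of k Ω).comp θ) ⊤ c)
    (hsupp : ∀ j, proj θ.range (d j) = d j) {j₀ : J} (hd : d j₀ = 1)
    (hmin : ∀ d' ∈ DerRel ((of k Ω).comp θ) ⊤ c, (∀ j, d j = 0 → d' j = 0) → d' j₀ = 0 → d' = 0)
    {r : ℕ} (hr : ∀ j e, FreeGroup.path (c j) e ≠ 0 → e.1.norm ≤ r)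
    {y : MN k Ω} (hy : y ∈ ballSpan θ d r) {g : FreeGroup X} (hg : IsLead y (θ g)) :
    g.norm < {p : J × FreeGroup X | p.2.norm ≤ r}.ncard := by
  refine lt_of_lt_of_le ?_ (finrank_ballSpan_le θ d r)
  refine norm_lt_finrank hθ _ (leadSet_ballSpan_subset hsupp r)
    ⟨d j₀, self_mem_ballSpan θ d r j₀, hd ▸ isLead_one⟩ ?_ ⟨y, hy, hg⟩
  by_contra hlt
  obtain ⟨d', h1, h2, h3, h4⟩ := exists_mem_rel_of_lt_finrank ((of k Ω).comp θ) hrel hr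
    (s := 1) (fun _ => j₀) (by omega)
  exact h2 (hmin d' h1 h3 (h4 0))

end MN

/-- A nonzero space of vectors contains a normalized vector of minimal support. -/
theorem exists_minimal_vector {E J : Type*} [DivisionRing E] [Fintype J]
    {K : Submodule E (J → E)} (hK : K ≠ ⊥) :
    ∃ d ∈ K, ∃ j₀, d j₀ = 1 ∧
      ∀ d' ∈ K, (∀ j, d j = 0 → d' j = 0) → d' = d' j₀ • d := by
  classical
  obtain ⟨v, hv, hv0⟩ := Submodule.exists_mem_ne_zero_of_ne_bot hK
  let S : (J → E) → ℕ := fun d => (Finset.univ.filter fun j => d j ≠ 0).card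
  obtain ⟨d, ⟨hd, hd0⟩, hmin⟩ := WellFounded.has_min (measure S).wf {d | d ∈ K ∧ d ≠ 0}
    ⟨v, hv, hv0⟩
  obtain ⟨j₀, hj₀⟩ := Function.ne_iff.mp hd0
  simp only [Pi.zero_apply] at hj₀
  refine ⟨(d j₀)⁻¹ • d, K.smul_mem _ hd, j₀, by simp [inv_mul_cancel₀ hj₀], ?_⟩
  intro d' hd' hs
  have hs' : ∀ j, d j = 0 → d' j = 0 := fun j hj => hs j (by simp [hj])
  by_contra hne
  refine hmin (d' - d' j₀ • (d j₀)⁻¹ • d) ⟨K.sub_mem hd' (K.smul_mem _ (K.smul_mem _ hd)),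
    sub_ne_zero.mpr hne⟩ ?_
  refine Finset.card_lt_card ?_
  rw [Finset.ssubset_iff_of_subset]
  · exact ⟨j₀, by simp [hj₀], by simp [inv_mul_cancel₀ hj₀]⟩
  · intro j
    simp only [Finset.mem_filter, Finset.mem_univ, true_and]
    intro h h0
    exact h (by simp [h0, hs' j h0])

end Transfer

section Cosets

theorem Subgroup.exists_right_transversal {Ω : Type*} [Group Ω] (C : Subgroup Ω) :
    ∃ τ : Ω → Ω, τ 1 = 1 ∧ (∀ c ∈ C, ∀ g, τ (c * g) = τ g) ∧ ∀ g, g * (τ g)⁻¹ ∈ C := by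
  classical
  refine ⟨fun g => if g ∈ C then 1 else
    (Quotient.out (Quotient.mk (QuotientGroup.rightRel C) g)), by simp, fun c hc g => ?_,
    fun g => ?_⟩
  · simp only [Subgroup.mul_mem_cancel_left C hc]
    split_ifs
    · rfl
    · congr 1
      refine Quotient.sound ?_
      change QuotientGroup.rightRel C _ _
      rw [QuotientGroup.rightRel_apply]
      simpa using C.inv_mem hc
  · by_cases h : g ∈ C
    · simp [h]
    · simp only [h, if_false]
      have := Quotient.mk_out (s := QuotientGroup.rightRel C) g
      exact QuotientGroup.rightRel_apply.mp this

namespace MN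

variable {k Ω : Type*} [Field k] [LinearOrder Ω] [Group Ω] [MulLeftMono Ω] [MulRightMono Ω]
  {L J : Type*} [Fintype L] [Fintype J]

open Classical in
theorem eq_zero_of_mem_rel {α : FreeGroup L →* Ω} (hα : Injective α)
    {H : Subgroup Ω} {c : J → Ω} (hc : ∀ j, c j ∈ α.range ⊓ H)
    (hder : ∀ j₀, ∃ δ, IsDerOn (of k Ω) (α.range ⊓ H) δ ∧
      ∀ j, δ (c j) = if j = j₀ then 1 else 0)
    {d : J → MN k Ω} (hd : d ∈ DerRel (of k Ω) α.range c)
    (hlead : ∀ y ∈ AddSubgroup.closure {z | ∃ j, ∃ h ∈ α.range ⊓ H, d j * of k Ω h = z},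
      ∀ a, IsLead y a → a ∈ H) : d = 0 := by
  classical
  set C := α.range ⊓ H with hC
  choose b hb using fun j => (hc j).1
  obtain rfl : α ∘ b = c := funext hb
  rw [rel_range _ hα] at hd
  obtain ⟨τ, hτ1, hτC, hτ⟩ := C.exists_right_transversal
  set κ : Ω → Ω := fun g => g * (τ g)⁻¹ with hκ
  have hκτ : ∀ g, κ g * τ g = g := fun g => by simp [hκ]
  have hττ : ∀ g, τ (τ g) = τ g := fun g => by
    conv_rhs => rw [← hκτ g]
    rw [hτC _ (hτ g)]
  have hτA : ∀ h : FreeGroup L, τ (α h) ∈ α.range := fun h => by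
    have h1 : κ (α h) ∈ α.range := (hτ (α h)).1
    exact (Subgroup.mul_mem_cancel_left _ h1).mp (by rw [hκτ]; exact ⟨h, rfl⟩)
  let S : Finset (FreeGroup L × L) := Finset.univ.biUnion fun j => (FreeGroup.path (b j)).support
  have hS : ∀ j, (FreeGroup.path (b j)).support ⊆ S := fun j =>
    Finset.subset_biUnion_of_mem (fun j => (FreeGroup.path (b j)).support) (Finset.mem_univ j)
  let u : FreeGroup L × L → MN k Ω := fun e =>
    ∑ j, FreeGroup.path (b j) e • (d j * of k Ω (κ (α e.1)))
  let π : FreeGroup L × L → Ω × L := fun e => (τ (α e.1), e.2)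
  let y : Ω × L → MN k Ω := fun i => ∑ e ∈ S with π e = i, u e
  have hy : ∀ i, y i ∈ AddSubgroup.closure {z | ∃ j, ∃ h ∈ C, d j * of k Ω h = z} := fun i =>
    sum_mem fun e _ => sum_mem fun j _ => zsmul_mem
      (AddSubgroup.subset_closure (Set.mem_ofPred.mpr ⟨j, _, hτ _, rfl⟩)) _
  have hy0 : ∀ i ∈ S.image π, y i = 0 := by
    rintro ⟨t, l⟩ hi
    have hsum : ∑ i ∈ S.image π with i.2 = l, y i * of k Ω i.1 = 0 := by
      have h1 := mem_rel_top_iff.mp hd l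
      rw [← h1]
      have h2 : ∀ j, d j * FreeGroup.fox ((of k Ω).comp α) l (b j) =
          ∑ e ∈ S with e.2 = l,
            FreeGroup.path (b j) e • (d j * of k Ω (κ (α e.1))) * of k Ω (τ (α e.1)) := by
        intro j
        rw [FreeGroup.fox_eq, FreeGroup.integral_eq_sum _ _ (hS j), Finset.mul_sum,
          Finset.sum_filter]
        refine Finset.sum_congr rfl fun e _ => ?_
        split_ifs
        · rw [smul_mul_assoc, mul_assoc, ← map_mul, hκτ, mul_smul_comm]
          rfl
        · simp
      simp only [h2]
      rw [Finset.sum_comm]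
      simp only [← Finset.sum_mul]
      rw [← Finset.sum_fiberwise_of_maps_to (s := S.filter fun e => e.2 = l)
        (t := (S.image π).filter fun i => i.2 = l) (g := π)]
      · refine Finset.sum_congr rfl fun i hi => ?_
        rw [Finset.sum_mul, Finset.filter_filter]
        refine Finset.sum_congr ?_ ?_
        · ext e
          simp only [Finset.mem_filter, and_congr_right_iff]
          rintro -
          constructor
          · rintro rfl
            exact ⟨(Finset.mem_filter.mp hi).2, rfl⟩
          · exact fun h => h.2
        · rintro e he
          rw [Finset.mem_filter] at he
          rw [← he.2.2]
      · intro e he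
        rw [Finset.mem_filter] at he
        exact Finset.mem_filter.mpr ⟨Finset.mem_image_of_mem _ he.1, he.2⟩
    have hl : ∀ (i : Ω × L) a, IsLead (y i * of k Ω i.1) a → a * i.1⁻¹ ∈ H := by
      intro i a ha
      refine hlead (y i) (hy i) _ ?_
      have := ha.mul_of i.1⁻¹
      rwa [mul_assoc, ← map_mul, mul_inv_cancel, map_one, mul_one] at this
    have h0 := eq_zero_of_sum_eq_zero _ (fun i : Ω × L => y i * of k Ω i.1) hsum ?_ (t, l)
      (Finset.mem_filter.mpr ⟨hi, rfl⟩)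
    · have : y (t, l) * of k Ω t * of k Ω t⁻¹ = 0 := by rw [h0, zero_mul]
      rwa [mul_assoc, ← map_mul, mul_inv_cancel, map_one, mul_one] at this
    · rintro i hi i' hi' a ha ha'
      simp only [Finset.mem_filter, Finset.mem_image] at hi hi'
      obtain ⟨⟨e, -, rfl⟩, he⟩ := hi
      obtain ⟨⟨e', -, rfl⟩, he'⟩ := hi'
      have h1 : τ (α e.1) * (τ (α e'.1))⁻¹ ∈ C := by
        refine Subgroup.mem_inf.mpr ⟨mul_mem (hτA _) (inv_mem (hτA _)), ?_⟩
        have := H.mul_mem (H.inv_mem (hl _ _ ha)) (hl _ _ ha')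
        simpa [π] using this
      have h2 := hτC _ h1 (τ (α e'.1))
      rw [inv_mul_cancel_right, hττ, hττ] at h2
      exact Prod.ext h2 (he.trans he'.symm)
  funext j₀
  obtain ⟨δ, hδ, hδj⟩ := hder j₀
  let Λ : Ω → MN k Ω := fun g => δ (κ g)
  have hΛ : ∀ c ∈ C, ∀ g, Λ (c * g) = δ c + of k Ω c * Λ g := by
    intro c hc g
    have : κ (c * g) = c * κ g := by simp [hκ, hτC c hc, mul_assoc]
    simp only [Λ, this]
    exact hδ c hc _ (hτ g)
  have hΛ1 : Λ 1 = 0 := by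
    simp only [Λ, hκ, hτ1]
    simpa using hδ.map_one
  let f : Ω × L → MN k Ω := fun i => Λ (i.1 * α (FreeGroup.of i.2)) - Λ i.1
  have hf : ∀ e : FreeGroup L × L, Λ (α (e.1 * FreeGroup.of e.2)) - Λ (α e.1) =
      of k Ω (κ (α e.1)) * f (π e) := by
    intro e
    have h1 : α (e.1 * FreeGroup.of e.2) = κ (α e.1) * (τ (α e.1) * α (FreeGroup.of e.2)) := by
      rw [← mul_assoc, hκτ, map_mul]
    have h2 : Λ (α e.1) = δ (κ (α e.1)) + of k Ω (κ (α e.1)) * Λ (τ (α e.1)) := by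
      rw [← hΛ _ (hτ _), hκτ]
    rw [h1, hΛ _ (hτ _), h2]
    simp only [f, π, mul_sub]
    abel
  have hδb : ∀ j, δ (α (b j)) = ∑ e ∈ S, FreeGroup.path (b j) e •
      (of k Ω (κ (α e.1)) * f (π e)) := by
    intro j
    have h1 := FreeGroup.integral_path_sub (fun h => Λ (α h)) 1 (b j)
    simp only [one_mul, map_one, hΛ1, sub_zero, hf] at h1
    rw [FreeGroup.integral_eq_sum _ _ (hS j)] at h1
    rw [h1]
    have := hΛ _ (hc j) 1
    rw [hΛ1] at this
    simpa using this.symm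
  have h1 : d j₀ = ∑ j, d j * δ (α (b j)) := by
    have := fun j => hδj j
    simp only [comp_apply] at this
    simp [this]
  rw [h1]
  simp only [hδb, Finset.mul_sum]
  rw [Finset.sum_comm]
  have h2 : ∀ e, ∑ j, d j * FreeGroup.path (b j) e • (of k Ω (κ (α e.1)) * f (π e)) =
      u e * f (π e) := by
    intro e
    simp only [u, Finset.sum_mul, smul_mul_assoc, mul_smul_comm, mul_assoc]
  simp only [h2]
  rw [← Finset.sum_fiberwise_of_maps_to (s := S) (t := S.image π) (g := π)
    fun e he => Finset.mem_image_of_mem _ he]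
  refine Finset.sum_eq_zero fun i hi => ?_
  have h3 : ∑ e ∈ S with π e = i, u e * f (π e) = y i * f i := by
    rw [Finset.sum_mul]
    refine Finset.sum_congr rfl fun e he => ?_
    rw [(Finset.mem_filter.mp he).2]
  rw [h3, hy0 i hi, zero_mul]

end MN

end Cosets

section Inert

theorem hasFreeRank_of_equiv {Ω T : Type*} [Group Ω] [Fintype T] {C : Subgroup Ω}
    {φ : FreeGroup T →* Ω} (hφ : Injective φ) (hC : φ.range = C) :
    HasFreeRank C (Fintype.card T) := by
  let e : FreeGroup (Fin (Fintype.card T)) ≃* FreeGroup T :=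
    FreeGroup.freeGroupCongr (Fintype.equivFin T).symm
  refine ⟨φ.comp e.toMonoidHom, hφ.comp e.injective, ?_⟩
  have he : e.toMonoidHom.range = ⊤ := MonoidHom.range_eq_top.mpr e.surjective
  rw [MonoidHom.range_comp, ← hC, he, ← MonoidHom.range_eq_map]

/-- A subgroup of a free group is free of rank at most `m` or contains `m + 1` elements of a
basis. -/
theorem hasFreeRank_or_isPartialBasis {Ω : Type} [Group Ω] [IsFreeGroup Ω] (C : Subgroup Ω)
    (m : ℕ) : (∃ j ≤ m, HasFreeRank C j) ∨ ∃ c : Fin (m + 1) → Ω, IsPartialBasis C c := by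
  let T := IsFreeGroup.Generators C
  let e : FreeGroup T ≃* C := (IsFreeGroup.toFreeGroup C).symm
  let φ : FreeGroup T →* Ω := C.subtype.comp e.toMonoidHom
  have hφ : Injective φ := C.subtype_injective.comp e.injective
  have hC : φ.range = C := by
    rw [MonoidHom.range_comp, MonoidHom.range_eq_top.mpr e.surjective, ← MonoidHom.range_eq_map,
      Subgroup.range_subtype]
  rcases isEmpty_or_nonempty (Fin (m + 1) ↪ T) with h | ⟨⟨i⟩⟩
  · left
    have hfin : Finite T := by
      by_contra hinf
      have : Infinite T := not_finite_iff_infinite.mp hinf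
      exact h.false (Fin.valEmbedding.trans (Infinite.natEmbedding T))
    have := Fintype.ofFinite T
    refine ⟨Fintype.card T, ?_, hasFreeRank_of_equiv hφ hC⟩
    by_contra hlt
    have h2 : Nonempty (Fin (m + 1) ↪ T) :=
      Function.Embedding.nonempty_of_card_le (by simpa using hlt)
    exact h.false h2.some
  · exact Or.inr ⟨_, T, φ, i, hφ, hC, i.injective, fun j => rfl⟩

/-- Intersecting with `A` does not increase the rank. -/
def Inert {Ω : Type*} [Group Ω] (A : Subgroup Ω) : Prop :=
  ∀ H m, HasFreeRank H m → ∃ j ≤ m, HasFreeRank (H ⊓ A) j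

theorem rel_top_ne_bot {E X J : Type*} [DivisionRing E] [Fintype X] [Fintype J]
    (ρ : FreeGroup X →* E) (c : J → FreeGroup X) (h : Fintype.card X < Fintype.card J) :
    DerRel ρ ⊤ c ≠ ⊥ := by
  let Φ : (J → E) →ₗ[E] (X → E) := LinearMap.pi fun x =>
    ∑ j, (LinearMap.toSpanSingleton E E (FreeGroup.fox ρ x (c j))).comp (LinearMap.proj j)
  have hΦ : LinearMap.ker Φ ≠ ⊥ := LinearMap.ker_ne_bot_of_finrank_lt (by simpa using h)
  obtain ⟨d, hd, hd0⟩ := Submodule.exists_mem_ne_zero_of_ne_bot hΦ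
  refine fun hbot => hd0 ?_
  rw [← Submodule.mem_bot E, ← hbot, mem_rel_top_iff]
  intro x
  have := congrFun (LinearMap.mem_ker.mp hd) x
  simpa [Φ] using this

namespace MN

variable {k : Type*} [Field k]

theorem rel_of_top_eq_bot {X J : Type*} [Fintype X] [DecidableEq X] [Fintype J]
    [LinearOrder (FreeGroup X)] [MulLeftMono (FreeGroup X)] [MulRightMono (FreeGroup X)]
    {E : Type*} [DivisionRing E] [Algebra k E]
    {ρ : FreeGroup X →* E} {c : J → FreeGroup X} (h : DerRel ρ ⊤ c = ⊥) :
    DerRel (of k (FreeGroup X)) ⊤ c = ⊥ := by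
  by_contra hne
  obtain ⟨d, hd, hd0⟩ := Submodule.exists_mem_ne_zero_of_ne_bot hne
  obtain ⟨d', h1, h2, -⟩ := exists_mem_rel ρ (θ := MonoidHom.id (FreeGroup X)) injective_id
    (c := c) (d := d) hd
    (fun j => proj_eq_self_iff.mpr fun a _ => MonoidHom.mem_range.mpr ⟨a, rfl⟩) hd0
  rw [h] at h1
  exact h2 h1

variable {Ω : Type*} [LinearOrder Ω] [Group Ω] [MulLeftMono Ω] [MulRightMono Ω]

/-- A nonzero relation can be moved so that it is supported on the image of `θ`. -/
theorem exists_proj_eq_self {X J : Type*} [Fintype X] [Fintype J] {θ : FreeGroup X →* Ω}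
    {c : J → FreeGroup X} (h : DerRel ((of k Ω).comp θ) ⊤ c ≠ ⊥) :
    ∃ d ∈ DerRel ((of k Ω).comp θ) ⊤ c, d ≠ 0 ∧ ∀ j, proj θ.range (d j) = d j := by
  obtain ⟨d, hd, hd0⟩ := Submodule.exists_mem_ne_zero_of_ne_bot h
  obtain ⟨j, hj⟩ := Function.ne_iff.mp hd0
  obtain ⟨g, hg⟩ := exists_isLead hj
  refine ⟨fun j => proj θ.range ((of k Ω g⁻¹ • d) j),
    proj_mem_rel_top le_rfl (Submodule.smul_mem _ _ hd), fun h0 => hg.1 ?_, fun j => ?_⟩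
  · have := congrArg (fun f => f.coeff 1) (congrFun h0 j)
    simpa [coeff_proj_of_mem (one_mem _), -map_inv, -map_inv₀] using this
  · rw [proj_eq_self_iff]
    intro a ha
    by_contra h
    exact ha (coeff_proj_of_notMem h _)

theorem proj_eq_self_of_mem_closure {J : Type*} {H C : Subgroup Ω} (hC : C ≤ H)
    {d : J → MN k Ω} (hd : ∀ j, proj H (d j) = d j) {y : MN k Ω}
    (hy : y ∈ AddSubgroup.closure {z | ∃ j, ∃ h ∈ C, d j * of k Ω h = z}) : proj H y = y := by
  induction hy using AddSubgroup.closure_induction with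
  | mem z hz =>
    obtain ⟨j, h, hh, rfl⟩ := hz
    rw [proj_mul_of (hC hh), hd]
  | zero => simp
  | add y z _ _ hy hz => simp [hy, hz]
  | neg y _ hy => simp [hy]

/-- Expressing the elements of `A` through a basis whose derivations are independent. -/
theorem mem_rel_range_of_mem_rel {R L J : Type*} [Ring R] [Fintype L] [Fintype J]
    {ρ : Ω →* R} {α : FreeGroup L →* Ω} (hα : Injective α) {H : Subgroup Ω}
    (h : DerRel ρ H (fun l => α (FreeGroup.of l)) = ⊥) (hH : α.range ≤ H)
    {c : J → Ω} (hc : ∀ j, c j ∈ α.range) {d : J → R} (hd : d ∈ DerRel ρ H c) :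
    d ∈ DerRel ρ α.range c := by
  choose a ha using hc
  obtain rfl : α ∘ a = c := funext ha
  rw [rel_range _ hα, mem_rel_top_iff]
  have key : (fun l => ∑ j, d j * FreeGroup.fox (ρ.comp α) l (a j)) ∈
      DerRel ρ H (fun l => α (FreeGroup.of l)) := by
    intro D hD
    have hDα : IsDerOn (ρ.comp α) ⊤ (D ∘ α) := fun x _ y _ => by
      simpa using hD (α x) (hH ⟨x, rfl⟩) (α y) (hH ⟨y, rfl⟩)
    have h1 := hd D hD
    have h2 : ∀ j, D ((α ∘ a) j) = _ := fun j => hDα.eq_sum_fox (a j)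
    simp only [h2, Finset.mul_sum] at h1
    rw [Finset.sum_comm] at h1
    simpa [Finset.sum_mul, mul_assoc] using h1
  rw [h] at key
  exact congrFun key

end MN

theorem inert_of_rel_eq_bot {k : Type*} [Field k] {X L : Type} [Fintype X] [DecidableEq X]
    [Fintype L]
    [LinearOrder (FreeGroup X)] [MulLeftMono (FreeGroup X)] [MulRightMono (FreeGroup X)]
    {E : Type*} [DivisionRing E] [Algebra k E] {ρ : FreeGroup X →* E}
    {α : FreeGroup L →* FreeGroup X} (hα : Injective α)
    (h : DerRel ρ ⊤ (fun l => α (FreeGroup.of l)) = ⊥) : Inert α.range := by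
  rintro H m ⟨η, hη, rfl⟩
  refine (hasFreeRank_or_isPartialBasis (η.range ⊓ α.range) m).resolve_right ?_
  rintro ⟨c, hc⟩
  choose b hb using fun j => (hc.mem j).1
  obtain rfl : η ∘ b = c := funext hb
  obtain ⟨d, hd, hd0, hproj⟩ := MN.exists_proj_eq_self (k := k) (θ := η) (c := b)
    (rel_top_ne_bot _ _ (by simp))
  rw [← rel_range _ hη] at hd
  refine hd0 (MN.eq_zero_of_mem_rel hα (H := η.range) (c := η ∘ b) (fun j => ?_)
    (fun j₀ => ?_) ?_ ?_)
  · exact (inf_comm η.range α.range).le (hc.mem j)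
  · rw [inf_comm]
    exact hc.exists_isDerOn (MN.of k (FreeGroup X)) j₀
  · exact MN.mem_rel_range_of_mem_rel hα (H := ⊤) (MN.rel_of_top_eq_bot h) le_top
      (fun j => (hc.mem j).2) (rel_mono _ le_top _ hd)
  · intro y hy a ha
    exact MN.proj_eq_self_iff.mp
      (MN.proj_eq_self_of_mem_closure inf_le_right hproj hy) a ha.1

end Inert

section BiOrder

namespace Magnus

variable {X : Type} [DecidableEq X]

/-- Left multiplication by `1 + x` on noncommutative power series. -/
def left (x : X) (f : List X → ℤ) : List X → ℤ
  | [] => f []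
  | y :: u => f (y :: u) + if y = x then f u else 0

/-- Left multiplication by the inverse of `1 + x`. -/
def leftInv (x : X) (f : List X → ℤ) : List X → ℤ
  | [] => f []
  | y :: u => f (y :: u) - if y = x then leftInv x f u else 0

theorem left_leftInv (x : X) (f : List X → ℤ) (u : List X) : left x (leftInv x f) u = f u := by
  cases u with
  | nil => rfl
  | cons y u => simp [left, leftInv]

theorem leftInv_left (x : X) (f : List X → ℤ) (u : List X) : leftInv x (left x f) u = f u := by
  induction u with
  | nil => rfl
  | cons y u ih => simp [left, leftInv, ih]

/-- Right multiplication by `1 + x`. -/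
def right (x : X) (f : List X → ℤ) (u : List X) : ℤ :=
  f u + if u.getLast? = some x then f u.dropLast else 0

theorem right_left (x y : X) (f : List X → ℤ) : right y (left x f) = left x (right y f) := by
  funext u
  cases u with
  | nil => simp [right, left]
  | cons a u =>
    rcases List.eq_nil_or_concat u with rfl | ⟨v, b, rfl⟩
    · simp [right, left]
      ring
    · have h : (a :: (v ++ [b])).dropLast = a :: v := by
        rw [← List.cons_append, List.dropLast_concat]
      have h' : (a :: (v ++ [b])).getLast? = some b := by
        rw [← List.cons_append, List.getLast?_concat]
      simp only [right, left, List.concat_eq_append, h, h', List.getLast?_concat,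
        List.dropLast_concat]
      split_ifs <;> ring

/-- The action of the free group by left multiplication. -/
def act : FreeGroup X →* Equiv.Perm (List X → ℤ) :=
  FreeGroup.lift fun x =>
    ⟨left x, leftInv x, fun f => funext (leftInv_left x f), fun f => funext (left_leftInv x f)⟩

/-- The Magnus expansion. -/
def expansion (g : FreeGroup X) : List X → ℤ := act g fun u => if u = [] then 1 else 0

theorem act_of (x : X) (f : List X → ℤ) : act (FreeGroup.of x) f = left x f := by
  simp [act]

theorem expansion_mul (g h : FreeGroup X) : expansion (g * h) = act g (expansion h) := by
  simp [expansion]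

theorem act_right (g : FreeGroup X) (y : X) (f : List X → ℤ) :
    act g (right y f) = right y (act g f) := by
  induction g using FreeGroup.induction_on generalizing f with
  | C1 => simp
  | of x => simp only [act_of, right_left]
  | inv_of x ih =>
    rw [map_inv, Equiv.Perm.inv_eq_iff_eq, ih]
    simp
  | mul g h hg hh => simp [hg, hh]

theorem expansion_mul_of (g : FreeGroup X) (x : X) :
    expansion (g * FreeGroup.of x) = right x (expansion g) := by
  rw [expansion_mul, expansion, act_of, expansion, ← act_right]
  congr 1
  funext u
  cases u with
  | nil => simp [left, right]
  | cons y u =>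
    rcases List.eq_nil_or_concat u with rfl | ⟨v, b, rfl⟩
    · simp [left, right]
    · have h : (y :: (v ++ [b])).dropLast = y :: v := by
        rw [← List.cons_append, List.dropLast_concat]
      simp [right, left, h]

section Faithful

theorem act_zpow_of_head_ne {x y : X} (h : y ≠ x) (e : ℤ) (f : List X → ℤ) (u : List X) :
    act (FreeGroup.of x ^ e) f (y :: u) = f (y :: u) := by
  have h1 : ∀ f, act (FreeGroup.of x) f (y :: u) = f (y :: u) := fun f => by
    simp [act_of, left, h]
  induction e using Int.induction_on generalizing f with
  | zero => simp
  | succ n ih => rw [zpow_add_one, map_mul, Equiv.Perm.mul_apply, ih, h1]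
  | pred n ih =>
    rw [zpow_sub_one, map_mul, Equiv.Perm.mul_apply, ih]
    have := h1 (act (FreeGroup.of x)⁻¹ f)
    rw [← this]
    simp

theorem act_zpow_nil {x : X} (e : ℤ) (f : List X → ℤ) :
    act (FreeGroup.of x ^ e) f [] = f [] := by
  have h1 : ∀ f, act (FreeGroup.of x) f [] = f [] := fun f => by
    simp [act_of, left]
  induction e using Int.induction_on generalizing f with
  | zero => simp
  | succ n ih => rw [zpow_add_one, map_mul, Equiv.Perm.mul_apply, ih, h1]
  | pred n ih =>
    rw [zpow_sub_one, map_mul, Equiv.Perm.mul_apply, ih]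
    have := h1 (act (FreeGroup.of x)⁻¹ f)
    rw [← this]
    simp

theorem act_zpow_tail {x : X} (e : ℤ) (f : List X → ℤ) (u : List X)
    (hu : u.head? ≠ some x) : act (FreeGroup.of x ^ e) f u = f u := by
  cases u with
  | nil => exact act_zpow_nil e f
  | cons y u => exact act_zpow_of_head_ne (by simpa using hu) e f u

theorem act_zpow_cons {x : X} (e : ℤ) (f : List X → ℤ) (u : List X)
    (hu : u.head? ≠ some x) : act (FreeGroup.of x ^ e) f (x :: u) = f (x :: u) + e * f u := by
  have h1 : ∀ f, act (FreeGroup.of x) f (x :: u) = f (x :: u) + f u := fun f => by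
    simp [act_of, left]
  have h2 : ∀ f, act (FreeGroup.of x)⁻¹ f u = f u := fun f => by
    simpa using act_zpow_tail (-1) f u hu
  have h3 : ∀ f, act (FreeGroup.of x) f u = f u := fun f => by
    simpa using act_zpow_tail 1 f u hu
  induction e using Int.induction_on generalizing f with
  | zero => simp
  | succ n ih =>
    rw [zpow_add_one, map_mul, Equiv.Perm.mul_apply, ih, h1, h3]
    ring
  | pred n ih =>
    rw [zpow_sub_one, map_mul, Equiv.Perm.mul_apply, ih, h2]
    have := h1 (act (FreeGroup.of x)⁻¹ f)
    rw [h2, ← Equiv.Perm.mul_apply, ← map_mul, mul_inv_cancel, map_one, Equiv.Perm.one_apply]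
      at this
    rw [this]
    ring

/-- Words written as products of syllables. -/
def syllables (l : List (X × ℤ)) : FreeGroup X := (l.map fun p => FreeGroup.of p.1 ^ p.2).prod

theorem syllables_cons (p : X × ℤ) (l : List (X × ℤ)) :
    syllables (p :: l) = FreeGroup.of p.1 ^ p.2 * syllables l := by simp [syllables]

theorem exists_zpow_mul_syllables (x : X) (e : ℤ) {l : List (X × ℤ)}
    (hc : l.IsChain fun p q => p.1 ≠ q.1) (hl : ∀ p ∈ l, p.2 ≠ 0) :
    ∃ l' : List (X × ℤ), (l'.IsChain fun p q => p.1 ≠ q.1) ∧ (∀ p ∈ l', p.2 ≠ 0) ∧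
      syllables l' = FreeGroup.of x ^ e * syllables l := by
  by_cases he : e = 0
  · exact ⟨l, hc, hl, by simp [he]⟩
  cases l with
  | nil => exact ⟨[(x, e)], by simp, by simpa using he, by simp [syllables]⟩
  | cons p l =>
    by_cases hx : x = p.1
    · by_cases h0 : e + p.2 = 0
      · refine ⟨l, hc.tail, fun q hq => hl q (List.mem_cons_of_mem _ hq), ?_⟩
        rw [syllables_cons, ← mul_assoc, hx, ← zpow_add, h0]
        simp
      · refine ⟨(x, e + p.2) :: l, ?_, ?_, ?_⟩
        · rw [List.isChain_cons] at hc ⊢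
          exact ⟨fun q hq => hx ▸ hc.1 q hq, hc.2⟩
        · intro q hq
          rcases List.mem_cons.mp hq with rfl | hq
          · exact h0
          · exact hl q (List.mem_cons_of_mem _ hq)
        · rw [syllables_cons, syllables_cons, ← mul_assoc, hx, ← zpow_add]
    · refine ⟨(x, e) :: p :: l, ?_, ?_, syllables_cons _ _⟩
      · exact List.isChain_cons_cons.mpr ⟨hx, hc⟩
      · intro q hq
        rcases List.mem_cons.mp hq with rfl | hq
        · exact he
        · exact hl q hq

theorem exists_syllables (g : FreeGroup X) :
    ∃ l : List (X × ℤ), (l.IsChain fun p q => p.1 ≠ q.1) ∧ (∀ p ∈ l, p.2 ≠ 0) ∧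
      syllables l = g := by
  suffices ∀ g h : FreeGroup X, (∃ l : List (X × ℤ), (l.IsChain fun p q => p.1 ≠ q.1) ∧
      (∀ p ∈ l, p.2 ≠ 0) ∧ syllables l = h) → ∃ l : List (X × ℤ),
      (l.IsChain fun p q => p.1 ≠ q.1) ∧ (∀ p ∈ l, p.2 ≠ 0) ∧ syllables l = g * h by
    simpa using this g 1 ⟨[], by simp, by simp, by simp [syllables]⟩
  intro g
  induction g using FreeGroup.induction_on with
  | C1 => simp
  | of x =>
    rintro h ⟨l, hc, hl, rfl⟩
    simpa using exists_zpow_mul_syllables x 1 hc hl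
  | inv_of x ih =>
    rintro h ⟨l, hc, hl, rfl⟩
    simpa using exists_zpow_mul_syllables x (-1) hc hl
  | mul g g' hg hg' =>
    intro h hh
    rw [mul_assoc]
    exact hg _ (hg' _ hh)

theorem expansion_eq_zero {l : List (X × ℤ)} {w : List X} (hw : w.IsChain (· ≠ ·))
    (hlw : l.length < w.length) : expansion (syllables l) w = 0 := by
  induction l generalizing w with
  | nil =>
    have : w ≠ [] := by
      rintro rfl
      simp at hlw
    simp [syllables, expansion, this]
  | cons p l ih =>
    rw [syllables_cons, expansion_mul]
    cases w with
    | nil => simp at hlw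
    | cons y w =>
      simp only [List.length_cons, add_lt_add_iff_right] at hlw
      have h1 := ih hw (by simp; omega)
      by_cases hy : y = p.1
      · subst hy
        rw [act_zpow_cons, h1, ih (w := w) hw.tail hlw]
        · simp
        · intro h
          rw [List.isChain_cons] at hw
          exact hw.1 _ h rfl
      · rw [act_zpow_of_head_ne hy, h1]

theorem expansion_syllables {l : List (X × ℤ)} (hc : l.IsChain fun p q => p.1 ≠ q.1) :
    expansion (syllables l) (l.map Prod.fst) = (l.map Prod.snd).prod := by
  induction l with
  | nil => simp [syllables, expansion]
  | cons p l ih =>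
    rw [syllables_cons, expansion_mul, List.map_cons, act_zpow_cons, ih hc.tail, expansion_eq_zero]
    · simp
    · rw [← List.map_cons, List.isChain_map]
      exact hc
    · simp
    · rw [List.head?_map]
      intro h
      rw [List.isChain_cons] at hc
      rw [Option.map_eq_some_iff] at h
      obtain ⟨q, hq, hq'⟩ := h
      exact hc.1 q hq hq'.symm

theorem expansion_injective : Injective (expansion (X := X)) := by
  intro g h hgh
  obtain ⟨l, hc, hl, hlg⟩ := exists_syllables (h⁻¹ * g)
  have h1 : expansion (h⁻¹ * g) = expansion 1 := by
    rw [expansion_mul, hgh, ← expansion_mul, inv_mul_cancel]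
  have h2 := expansion_syllables hc
  rw [hlg, h1] at h2
  have h3 : (l.map Prod.snd).prod ≠ 0 := by
    refine List.prod_ne_zero ?_
    simpa using fun x hx => hl (x, 0) hx rfl
  have h4 : l = [] := by
    by_contra hne
    refine h3 (h2.symm.trans ?_)
    simp [expansion, hne]
  rw [h4] at hlg
  exact (inv_mul_eq_one.mp hlg.symm).symm

end Faithful

section Order

variable [Encodable X]

/-- The rank of a word in an ordering by length. -/
def rank (u : List X) : ℕ ×ₗ ℕ := toLex (u.length, Encodable.encode u)

theorem rank_injective : Injective (rank (X := X)) := fun u v h => by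
  have := congrArg (fun p => (ofLex p).2) h
  exact Encodable.encode_injective this

theorem rank_lt_of_length_lt {u v : List X} (h : u.length < v.length) : rank u < rank v :=
  Prod.Lex.toLex_lt_toLex.mpr (Or.inl h)

/-- Words ordered by length. -/
def Word (X : Type) : Type := List X

noncomputable instance : LinearOrder (Word X) := LinearOrder.lift' (rank (X := X)) rank_injective

instance : WellFoundedLT (Word X) := ⟨InvImage.wf (rank (X := X)) wellFounded_lt⟩

/-- The Magnus expansion as an element of a lexicographically ordered group. -/
def series (g : FreeGroup X) : Lex (Word X → ℤ) := toLex (expansion g)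

theorem lt_iff {f f' : List X → ℤ} :
    (toLex f : Lex (Word X → ℤ)) < (toLex f' : Lex (Word X → ℤ)) ↔
      ∃ u, (∀ v, rank v < rank u → f v = f' v) ∧ f u < f' u := Iff.rfl

theorem strictMono_left (x : X) {f f' : List X → ℤ}
    (h : (toLex f : Lex (Word X → ℤ)) < (toLex f' : Lex (Word X → ℤ))) :
    (toLex (left x f) : Lex (Word X → ℤ)) < (toLex (left x f') : Lex (Word X → ℤ)) := by
  rw [lt_iff] at h ⊢
  obtain ⟨u, h1, h2⟩ := h
  refine ⟨u, fun v hv => ?_, ?_⟩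
  · cases v with
    | nil => exact h1 _ hv
    | cons y v =>
      simp only [left]
      rw [h1 _ hv, h1 v ((rank_lt_of_length_lt (by simp)).trans hv)]
  · cases u with
    | nil => exact h2
    | cons y u =>
      simp only [left]
      rw [h1 u (rank_lt_of_length_lt (by simp))]
      simpa using h2

theorem strictMono_right (x : X) {f f' : List X → ℤ}
    (h : (toLex f : Lex (Word X → ℤ)) < (toLex f' : Lex (Word X → ℤ))) :
    (toLex (right x f) : Lex (Word X → ℤ)) < (toLex (right x f') : Lex (Word X → ℤ)) := by
  rw [lt_iff] at h ⊢
  obtain ⟨u, h1, h2⟩ := h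
  have hd : ∀ v : List X, v.getLast? = some x → rank v.dropLast < rank v := fun v hv => by
    refine rank_lt_of_length_lt ?_
    rw [List.length_dropLast]
    have : v ≠ [] := by
      rintro rfl
      simp at hv
    have := List.length_pos_iff.mpr this
    omega
  refine ⟨u, fun v hv => ?_, ?_⟩
  · simp only [right]
    rw [h1 v hv]
    split_ifs with hx
    · rw [h1 _ ((hd v hx).trans hv)]
    · rfl
  · simp only [right]
    split_ifs with hx
    · rw [h1 _ (hd u hx)]
      simpa using h2
    · simpa using h2

theorem series_injective : Injective (series (X := X)) :=
  fun _ _ h => expansion_injective (toLex.injective h)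

theorem lt_iff_of_imp {α β : Type*} [LinearOrder β] {s : α → β} (hs : Injective s) {T : α → α}
    (hT : ∀ g h, s g < s h → s (T g) < s (T h)) (g h : α) : s (T g) < s (T h) ↔ s g < s h := by
  refine ⟨fun hlt => ?_, hT g h⟩
  rcases lt_trichotomy (s g) (s h) with h1 | h1 | h1
  · exact h1
  · rw [hs h1] at hlt
    exact absurd hlt (lt_irrefl _)
  · exact absurd hlt (hT h g h1).asymm

theorem series_mul_left (a g h : FreeGroup X) :
    series (a * g) < series (a * h) ↔ series g < series h := by
  induction a using FreeGroup.induction_on generalizing g h with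
  | C1 => simp
  | of x =>
    refine lt_iff_of_imp series_injective (T := fun g => FreeGroup.of x * g) (fun g h hgh => ?_) g h
    simp only [series, expansion_mul, act_of]
    exact strictMono_left x hgh
  | inv_of x ih => rw [← ih]; simp
  | mul a b ha hb => rw [mul_assoc, mul_assoc, ha, hb]

theorem series_mul_right (a g h : FreeGroup X) :
    series (g * a) < series (h * a) ↔ series g < series h := by
  induction a using FreeGroup.induction_on generalizing g h with
  | C1 => simp
  | of x =>
    refine lt_iff_of_imp series_injective (T := fun g => g * FreeGroup.of x) (fun g h hgh => ?_) g h
    simp only [series, expansion_mul_of]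
    exact strictMono_right x hgh
  | inv_of x ih => rw [← ih]; simp
  | mul a b ha hb => rw [← mul_assoc, ← mul_assoc, hb, ha]

end Order

end Magnus

/-- Free groups are bi-orderable. -/
theorem FreeGroup.exists_biOrder (X : Type) [Encodable X] : ∃ _ : LinearOrder (FreeGroup X),
    MulLeftMono (FreeGroup X) ∧ MulRightMono (FreeGroup X) := by
  classical
  let o : LinearOrder (FreeGroup X) := LinearOrder.lift' Magnus.series Magnus.series_injective
  refine ⟨o, ⟨fun a g h hgh => ?_⟩, ⟨fun a g h hgh => ?_⟩⟩
  · exact not_lt.mp fun hlt => not_lt.mpr hgh ((Magnus.series_mul_left a h g).mp hlt)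
  · exact not_lt.mp fun hlt => not_lt.mpr hgh ((Magnus.series_mul_right a h g).mp hlt)

end BiOrder

section Hopf

theorem MonoidHom.exists_comp_eq {G G' F : Type*} [Group G] [Group G'] [Group F] {σ : G →* F}
    (hσ : Injective σ) {f : G' →* F} (hf : f.range ≤ σ.range) : ∃ g : G' →* G, σ.comp g = f := by
  let e := MonoidHom.ofInjective hσ
  refine ⟨e.symm.toMonoidHom.comp (f.codRestrict σ.range fun x => hf ⟨x, rfl⟩), ?_⟩
  ext x
  exact congrArg Subtype.val
    (e.apply_symm_apply ((f.codRestrict σ.range fun x => hf ⟨x, rfl⟩) x))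

/-- The rank of the image of a free group is at most the rank. -/
theorem exists_hasFreeRank_range {Ω : Type} [Group Ω] [IsFreeGroup Ω] {r : ℕ}
    (η : FreeGroup (Fin r) →* Ω) : ∃ j ≤ r, HasFreeRank η.range j := by
  refine (hasFreeRank_or_isPartialBasis η.range r).resolve_right ?_
  rintro ⟨c, hc⟩
  choose b hb using hc.mem
  have hne := rel_top_ne_bot (((1 : Ω →* ℚ)).comp η) b (by simp)
  obtain ⟨d, hd, hd0⟩ := Submodule.exists_mem_ne_zero_of_ne_bot hne
  refine hd0 (funext fun j₀ => ?_)
  obtain ⟨δ, h1, h2⟩ := hc.exists_isDerOn (1 : Ω →* ℚ) j₀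
  have := hd (δ ∘ η) fun x _ y _ => by simpa using h1 (η x) ⟨x, rfl⟩ (η y) ⟨y, rfl⟩
  simpa [hb, h2] using this

variable {X Y : Type} [Fintype X] [Fintype Y] [DecidableEq Y]

/-- Generators of a free group whose number is the rank have independent derivations. -/
theorem rel_eq_bot_of_surjective {E : Type*} [DivisionRing E] (ρ : FreeGroup Y →* E)
    {ψ : FreeGroup X →* FreeGroup Y} (hψ : Surjective ψ)
    (hcard : Fintype.card X = Fintype.card Y) :
    DerRel ρ ⊤ (fun x => ψ (FreeGroup.of x)) = ⊥ := by
  classical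
  let v : X → Y → E := fun x y => FreeGroup.fox ρ y (ψ (FreeGroup.of x))
  have hspan : ⊤ ≤ Submodule.span E (Set.range v) := by
    rw [← (Pi.basisFun E Y).span_eq, Submodule.span_le]
    rintro _ ⟨y, rfl⟩
    obtain ⟨g, hg⟩ := hψ (FreeGroup.of y)
    have : Pi.basisFun E Y y = ∑ x, FreeGroup.fox (ρ.comp ψ) x g • v x := by
      funext y'
      have hD : IsDerOn (ρ.comp ψ) ⊤ (FreeGroup.fox ρ y' ∘ ψ) := fun a _ b _ => by
        simp [FreeGroup.fox_mul]
      have h1 := hD.eq_sum_fox g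
      rw [comp_apply, hg, FreeGroup.fox_of] at h1
      simp only [Pi.basisFun_apply, Finset.sum_apply, Pi.smul_apply, smul_eq_mul, v]
      rw [Pi.single_apply]
      simp only [comp_apply] at h1
      rw [← h1]
      by_cases hy : y = y' <;> simp [hy, eq_comm]
    rw [this]
    exact Submodule.sum_mem _ fun x _ => Submodule.smul_mem _ _ (Submodule.subset_span ⟨x, rfl⟩)
  have hli : LinearIndependent E v :=
    linearIndependent_of_top_le_span_of_card_eq_finrank hspan (by simpa using hcard)
  rw [Submodule.eq_bot_iff]
  intro d hd
  rw [mem_rel_top_iff] at hd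
  funext x
  refine Fintype.linearIndependent_iff.mp hli d ?_ x
  funext y
  simpa [v] using hd y

/-- A surjection between free groups of the same finite rank is injective. -/
theorem injective_of_surjective [Encodable Y]
    {ψ : FreeGroup X →* FreeGroup Y} (hψ : Surjective ψ)
    (hcard : Fintype.card X = Fintype.card Y) : Injective ψ := by
  classical
  obtain ⟨_, _, _⟩ := FreeGroup.exists_biOrder Y
  have hbot := rel_eq_bot_of_surjective (MN.of ℚ (FreeGroup Y)) hψ hcard
  have hfox : ∀ g ∈ ψ.ker, ∀ x, FreeGroup.fox ((MN.of ℚ (FreeGroup Y)).comp ψ) x g = 0 := by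
    intro g hg
    have : (fun x => FreeGroup.fox ((MN.of ℚ (FreeGroup Y)).comp ψ) x g) ∈
        DerRel (MN.of ℚ (FreeGroup Y)) ⊤ (fun x => ψ (FreeGroup.of x)) := by
      intro D hD
      have hDψ : IsDerOn ((MN.of ℚ (FreeGroup Y)).comp ψ) ⊤ (D ∘ ψ) := fun a _ b _ => by
        simpa using hD (ψ a) trivial (ψ b) trivial
      have h1 := hDψ.eq_sum_fox g
      rw [comp_apply, MonoidHom.mem_ker.mp hg, hD.map_one] at h1
      exact h1.symm
    rw [hbot] at this
    exact congrFun this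
  have key : ∀ δ : FreeGroup X → ℚ, IsDerOn 1 ψ.ker δ → ∀ g ∈ ψ.ker, δ g = 0 := by
    intro δ hδ g hg
    choose s hs using hψ
    let Λ : FreeGroup X → ℚ := fun h => δ (h * (s (ψ h))⁻¹)
    have hmem : ∀ h, h * (s (ψ h))⁻¹ ∈ ψ.ker := fun h => by
      rw [MonoidHom.mem_ker, map_mul, map_inv, hs, mul_inv_cancel]
    have hΛ : ∀ a ∈ ψ.ker, ∀ h, Λ (a * h) = δ a + Λ h := by
      intro a ha h
      have h1 : ψ (a * h) = ψ h := by rw [map_mul, MonoidHom.mem_ker.mp ha, one_mul]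
      simp only [Λ, h1, mul_assoc]
      simpa using hδ a ha _ (hmem h)
    let F : FreeGroup Y × X → ℚ := fun p => Λ (s p.1 * FreeGroup.of p.2) - Λ (s p.1)
    have hF : ∀ e : FreeGroup X × X, Λ (e.1 * FreeGroup.of e.2) - Λ e.1 = F (ψ e.1, e.2) := by
      intro e
      have h1 := hΛ _ (hmem e.1) (s (ψ e.1) * FreeGroup.of e.2)
      have h2 := hΛ _ (hmem e.1) (s (ψ e.1))
      rw [← mul_assoc, inv_mul_cancel_right] at h1
      rw [inv_mul_cancel_right] at h2
      simp only [F, h1, h2]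
      ring
    have h1 := FreeGroup.integral_path_sub Λ 1 g
    have h2 := hΛ g hg 1
    simp only [one_mul, hF] at h1
    rw [mul_one] at h2
    have h3 : δ g = FreeGroup.integral (fun e => F (ψ e.1, e.2)) (FreeGroup.path g) := by
      rw [h1, h2]
      ring
    rw [h3, FreeGroup.integral_eq_sum _ _ subset_rfl]
    let π : FreeGroup X × X → FreeGroup Y × X := fun e => (ψ e.1, e.2)
    rw [← Finset.sum_fiberwise_of_maps_to (t := (FreeGroup.path g).support.image π) (g := π)
      fun e he => Finset.mem_image_of_mem _ he]
    refine Finset.sum_eq_zero ?_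
    rintro ⟨q, x⟩ -
    have h4 := congrArg (MN.coeffₗ q).toAddMonoidHom (hfox g hg x)
    rw [FreeGroup.fox_eq, ← FreeGroup.integral_comp, FreeGroup.integral_eq_sum _ _ subset_rfl,
      map_zero] at h4
    have h5 : ∑ e ∈ (FreeGroup.path g).support with π e = (q, x),
        (FreeGroup.path g e : ℚ) = 0 := by
      rw [← h4, Finset.sum_filter]
      refine Finset.sum_congr rfl fun e _ => ?_
      by_cases hx : e.2 = x
      · by_cases hq : ψ e.1 = q
        · simp [π, hx, hq, MN.of_apply]
        · simp [π, hx, hq, MN.of_apply, MN.coeff_single_of_ne (Ne.symm hq)]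
      · simp [π, hx]
    have h6 : ∀ e ∈ (FreeGroup.path g).support.filter (fun e => π e = (q, x)),
        FreeGroup.path g e • F (ψ e.1, e.2) = (FreeGroup.path g e : ℚ) * F (q, x) := by
      intro e he
      rw [zsmul_eq_mul, ← (Finset.mem_filter.mp he).2]
    rw [Finset.sum_congr rfl h6, ← Finset.sum_mul, h5, zero_mul]
  rw [← MonoidHom.ker_eq_bot_iff]
  rcases hasFreeRank_or_isPartialBasis ψ.ker 0 with ⟨j, hj, φ, -, hφ⟩ | ⟨c, hc⟩
  · obtain rfl : j = 0 := Nat.le_zero.mp hj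
    rw [← hφ, eq_bot_iff]
    rintro _ ⟨w, rfl⟩
    rw [Subgroup.mem_bot, Subsingleton.elim w 1, map_one]
  · obtain ⟨δ, h1, h2⟩ := hc.exists_isDerOn (1 : FreeGroup X →* ℚ) 0
    have := key δ h1 (c 0) (hc.mem 0)
    simp [h2] at this

/-- The iterates of an endomorphism. -/
def MonoidHom.iter {G : Type*} [Group G] (φ : G →* G) (K : ℕ) : G →* G where
  toFun := φ^[K]
  map_one' := iterate_map_one φ K
  map_mul' := iterate_map_mul φ K

@[simp]
theorem MonoidHom.iter_apply {G : Type*} [Group G] (φ : G →* G) (K : ℕ) (g : G) :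
    φ.iter K g = φ^[K] g :=
  rfl

/-- An endomorphism of a free group of finite rank becomes injective on a high enough image. -/
theorem exists_injective_restriction (φ : FreeGroup X →* FreeGroup X) :
    ∃ (K r : ℕ) (σ : FreeGroup (Fin r) →* FreeGroup X)
      (ψ : FreeGroup (Fin r) →* FreeGroup (Fin r)),
      Injective σ ∧ Injective ψ ∧ (∀ g, σ (ψ g) = φ (σ g)) ∧ σ.range = (φ.iter K).range := by
  classical
  have hex : ∃ r K, HasFreeRank (φ.iter K).range r := by
    refine ⟨Fintype.card X, 0, ?_⟩
    refine hasFreeRank_of_equiv (φ := MonoidHom.id (FreeGroup X)) injective_id ?_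
    rfl
  let r := Nat.find hex
  obtain ⟨K, σ, hσ, hσK⟩ := Nat.find_spec hex
  have hmem : ∀ h, h ∈ σ.range ↔ ∃ g, φ^[K] g = h := fun h => by
    rw [hσK]
    exact Iff.rfl
  have hle : (φ.comp σ).range ≤ σ.range := by
    rintro _ ⟨w, rfl⟩
    obtain ⟨g, hg⟩ := (hmem (σ w)).mp ⟨w, rfl⟩
    refine (hmem _).mpr ⟨φ g, ?_⟩
    rw [MonoidHom.comp_apply, ← hg, ← iterate_succ_apply, iterate_succ_apply']
  have hrange : (φ.comp σ).range = (φ.iter (K + 1)).range := by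
    ext h
    constructor
    · rintro ⟨w, rfl⟩
      obtain ⟨g, hg⟩ := (hmem (σ w)).mp ⟨w, rfl⟩
      exact ⟨g, by rw [MonoidHom.comp_apply, ← hg, MonoidHom.iter_apply, iterate_succ_apply']⟩
    · rintro ⟨g, rfl⟩
      obtain ⟨w, hw⟩ := (hmem _).mpr ⟨g, rfl⟩
      exact ⟨w, by rw [MonoidHom.comp_apply, hw, MonoidHom.iter_apply, iterate_succ_apply']⟩
  obtain ⟨ψ, hψ⟩ := MonoidHom.exists_comp_eq hσ hle
  refine ⟨K, r, σ, ψ, hσ, ?_, fun g => DFunLike.congr_fun hψ g, hσK⟩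
  obtain ⟨j, hj, hjr⟩ := exists_hasFreeRank_range (φ.comp σ)
  have hrj : r ≤ j := Nat.find_min' hex ⟨K + 1, hrange ▸ hjr⟩
  obtain rfl : j = r := le_antisymm hj hrj
  obtain ⟨σ', hσ', hr'⟩ := hjr
  obtain ⟨ψ', hψ'⟩ := MonoidHom.exists_comp_eq hσ' (f := φ.comp σ) hr'.ge
  have hsurj : Surjective ψ' := by
    intro w
    have : σ' w ∈ (φ.comp σ).range := hr' ▸ ⟨w, rfl⟩
    obtain ⟨u, hu⟩ := this
    refine ⟨u, hσ' ?_⟩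
    rw [← hu, ← hψ']
    rfl
  have hinj := injective_of_surjective hsurj rfl
  have : Injective (σ.comp ψ) := by
    rw [hψ, ← hψ']
    exact hσ'.comp hinj
  exact Injective.of_comp (f := σ) this

end Hopf

section Periodic

variable {G : Type*} [Group G]

/-- The subgroup of periodic points of an endomorphism. -/
def periodicSubgroup (φ : G →* G) : Subgroup G where
  carrier := periodicPts φ
  one_mem' := ⟨1, Nat.one_pos, map_one φ⟩
  mul_mem' := by
    rintro a b ⟨M, hM, ha⟩ ⟨N, hN, hb⟩
    refine ⟨M * N, Nat.mul_pos hM hN, ?_⟩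
    have h1 : φ^[M * N] a = a := ha.mul_const N
    have h2 : φ^[M * N] b = b := hb.const_mul M
    change φ^[M * N] (a * b) = a * b
    rw [iterate_map_mul, h1, h2]
  inv_mem' := by
    rintro a ⟨M, hM, ha⟩
    refine ⟨M, hM, ?_⟩
    have h1 : φ^[M] a = a := ha
    change φ^[M] a⁻¹ = a⁻¹
    rw [iterate_map_inv, h1]

theorem mem_periodicSubgroup {φ : G →* G} {g : G} :
    g ∈ periodicSubgroup φ ↔ ∃ M > 0, φ^[M] g = g :=
  Iff.rfl

theorem MonoidHom.iter_injective {φ : G →* G} (h : Injective φ) (i : ℕ) : Injective (φ.iter i) :=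
  h.iterate i

theorem periodicSubgroup_iter (φ : G →* G) {M : ℕ} (hM : 0 < M) :
    periodicSubgroup (φ.iter M) = periodicSubgroup φ := by
  ext g
  simp only [mem_periodicSubgroup]
  constructor
  · rintro ⟨N, hN, h⟩
    refine ⟨M * N, Nat.mul_pos hM hN, ?_⟩
    rw [iterate_mul]
    exact h
  · rintro ⟨N, hN, h⟩
    refine ⟨N, hN, ?_⟩
    change (φ^[M])^[N] g = g
    rw [← iterate_mul]
    have h : IsPeriodicPt φ N g := h
    exact h.const_mul M

/-- Finitely many periodic points have a common period. -/
theorem exists_common_period {J : Type*} [Finite J] {φ : G →* G} {c : J → G}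
    (hc : ∀ j, c j ∈ periodicSubgroup φ) : ∃ M > 0, ∀ j, φ^[M] (c j) = c j := by
  have := Fintype.ofFinite J
  choose M hM h using hc
  refine ⟨∏ j, M j, Finset.prod_pos fun j _ => hM j, fun j => ?_⟩
  have h1 : IsPeriodicPt φ (M j) (c j) := h j
  exact h1.trans_dvd (Finset.dvd_prod_of_mem M (Finset.mem_univ j))

namespace MN

variable {k : Type*} [Field k] {X : Type*} [Fintype X] [DecidableEq X] {J : Type*} [Fintype J]
  [LinearOrder (FreeGroup X)] [MulLeftMono (FreeGroup X)] [MulRightMono (FreeGroup X)]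

theorem ballSpan_mono {Ω : Type*} [LinearOrder Ω] [Group Ω] [MulLeftMono Ω] [MulRightMono Ω]
    (θ : FreeGroup X →* Ω) (d : J → MN k Ω) {r s : ℕ} (h : r ≤ s) :
    ballSpan θ d r ≤ ballSpan θ d s :=
  Submodule.span_mono (Set.image_mono fun _ hp => le_trans hp h)

theorem exists_mem_ballSpan_iter (ψ : FreeGroup X →* FreeGroup X) (d : J → MN k (FreeGroup X))
    {B : Subgroup (FreeGroup X)} (hB : B ≤ periodicSubgroup ψ) {y : MN k (FreeGroup X)}
    (hy : y ∈ AddSubgroup.closure {z | ∃ j, ∃ h ∈ B, d j * of k _ h = z}) :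
    ∃ r M, 0 < M ∧ ∀ i, y ∈ ballSpan (ψ.iter (M * i)) d r := by
  induction hy using AddSubgroup.closure_induction with
  | mem z hz =>
    obtain ⟨j, h, hh, rfl⟩ := hz
    obtain ⟨M, hM, hMh⟩ := hB hh
    refine ⟨h.norm, M, hM, fun i => ?_⟩
    have h1 : ψ.iter (M * i) h = h := hMh.mul_const i
    have h2 := mem_ballSpan (ψ.iter (M * i)) d (k := k) j (le_refl h.norm)
    rwa [h1] at h2
  | zero => exact ⟨0, 1, Nat.one_pos, fun i => zero_mem _⟩
  | add y z _ _ hy hz =>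
    obtain ⟨r, M, hM, h⟩ := hy
    obtain ⟨s, N, hN, h'⟩ := hz
    refine ⟨max r s, M * N, Nat.mul_pos hM hN, fun i => add_mem ?_ ?_⟩
    · rw [mul_assoc]
      exact ballSpan_mono _ _ (le_max_left _ _) (h _)
    · rw [mul_comm M, mul_assoc]
      exact ballSpan_mono _ _ (le_max_right _ _) (h' _)
  | neg y _ hy =>
    obtain ⟨r, M, hM, h⟩ := hy
    exact ⟨r, M, hM, fun i => neg_mem (h i)⟩

theorem rel_eq_bot_of_fixed {ψ : FreeGroup X →* FreeGroup X} (hψ : Injective ψ)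
    {c : J → FreeGroup X} (hfix : ∀ j, ψ (c j) = c j) (hc : IsPartialBasis (periodicSubgroup ψ) c) :
    DerRel (of k (FreeGroup X)) ⊤ c = ⊥ := by
  by_contra hne
  obtain ⟨d, hd, j₀, hj₀, hmin⟩ := exists_minimal_vector hne
  have hd0 : d ≠ 0 := fun h => by simp [h] at hj₀
  let K : ℕ → Submodule (MN k (FreeGroup X)) (J → MN k (FreeGroup X)) := fun i =>
    DerRel ((of k (FreeGroup X)).comp (ψ.iter i)) ⊤ c
  have hK : ∀ i, K i ≤ DerRel (of k (FreeGroup X)) ⊤ c := by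
    intro i
    have h1 := rel_range (of k (FreeGroup X)) (MonoidHom.iter_injective hψ i) c
    have h2 : ψ.iter i ∘ c = c := funext fun j => iterate_fixed (hfix j) i
    rw [h2] at h1
    exact h1.ge.trans (rel_mono _ le_top _)
  have hdK : ∀ i, d ∈ K i := by
    intro i
    obtain ⟨d', h1, h2, h3⟩ := exists_mem_rel ((of k (FreeGroup X)).comp (ψ.iter i))
      (θ := MonoidHom.id (FreeGroup X)) injective_id (c := c) (d := d) hd
      (fun j => proj_eq_self_iff.mpr fun a _ => MonoidHom.mem_range.mpr ⟨a, rfl⟩) hd0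
    have h4 := hmin d' (hK i h1) h3
    have h5 : d' j₀ ≠ 0 := fun h => h2 (by rw [h4, h, zero_smul])
    have : d = (d' j₀)⁻¹ • d' := by
      nth_rw 2 [h4]
      rw [smul_smul, inv_mul_cancel₀ h5, one_smul]
    rw [this]
    exact Submodule.smul_mem _ _ h1
  have hproj : ∀ i j, proj (ψ.iter i).range (d j) = d j := by
    intro i
    have h1 := proj_mem_rel_top le_rfl (hdK i)
    have h2 := hmin _ (hK i h1) fun j hj => by simp [hj]
    simp only [hj₀, proj_one, one_smul] at h2
    exact congrFun h2
  refine hd0 (eq_zero_of_mem_rel (α := MonoidHom.id (FreeGroup X)) injective_id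
    (H := periodicSubgroup ψ) (c := c) (fun j => ⟨⟨c j, rfl⟩, hc.mem j⟩) ?_ ?_ ?_)
  · intro j₁
    obtain ⟨δ, h1, h2⟩ := hc.exists_isDerOn (of k (FreeGroup X)) j₁
    exact ⟨δ, h1.mono inf_le_right, h2⟩
  · rwa [MonoidHom.range_eq_top.mpr surjective_id]
  · intro y hy a ha
    obtain ⟨r₁, M, hM, hyr₁⟩ := exists_mem_ballSpan_iter ψ d inf_le_right hy
    obtain ⟨r₂, hr₂⟩ := exists_radius c
    let r := max r₁ r₂
    have hyr : ∀ i, y ∈ ballSpan (ψ.iter (M * i)) d r := fun i =>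
      ballSpan_mono _ _ (le_max_left _ _) (hyr₁ i)
    have hr : ∀ j e, FreeGroup.path (c j) e ≠ 0 → e.1.norm ≤ r := fun j e he =>
      (hr₂ j e he).trans (le_max_right _ _)
    have hex : ∀ i, ∃ g, ψ.iter (M * i) g = a := fun i =>
      leadSet_ballSpan_subset (hproj _) r ⟨y, hyr i, ha⟩
    choose g hg using hex
    have hbd : ∀ i, (g i).norm ≤ {p : J × FreeGroup X | p.2.norm ≤ r}.ncard := by
      intro i
      refine (norm_lt_of_isLead (MonoidHom.iter_injective hψ (M * i)) (hdK (M * i)) (hproj _) hj₀ ?_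
        hr (hyr i) ((hg i).symm ▸ ha)).le
      intro d' h1 h2 h3
      rw [hmin d' (hK _ h1) h2, h3, zero_smul]
    obtain ⟨i, i', hlt, hii⟩ := (FreeGroup.finite_norm_le (X := X) _).exists_lt_map_eq_of_forall_mem
      hbd
    refine ⟨M * (i' - i), Nat.mul_pos hM (by omega), ?_⟩
    have h1 := hg i
    have h2 := hg i'
    rw [← hii, MonoidHom.iter_apply] at h2
    rw [MonoidHom.iter_apply] at h1
    change ψ^[M * (i' - i)] a = a
    nth_rw 1 [← h1]
    rw [← iterate_add_apply, ← mul_add, Nat.sub_add_cancel hlt.le, h2]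

theorem rel_eq_bot_of_periodic {ψ : FreeGroup X →* FreeGroup X} (hψ : Injective ψ)
    {c : J → FreeGroup X} (hc : IsPartialBasis (periodicSubgroup ψ) c) :
    DerRel (of k (FreeGroup X)) ⊤ c = ⊥ := by
  obtain ⟨M, hM, hMc⟩ := exists_common_period hc.mem
  exact rel_eq_bot_of_fixed (ψ := ψ.iter M) (MonoidHom.iter_injective hψ M) hMc
    (by rwa [periodicSubgroup_iter ψ hM])

end MN

/-- Independence of derivations along every finite part of a basis of `A` makes `A` inert. -/
theorem inert_of_forall_isPartialBasis (k : Type*) [Field k] {X : Type} [Fintype X] [Encodable X]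
    {A : Subgroup (FreeGroup X)}
    (h : ∀ (m : ℕ) (c : Fin m → FreeGroup X), IsPartialBasis A c →
      ∃ (E : Type) (_ : DivisionRing E) (_ : Algebra k E) (ρ : FreeGroup X →* E),
        DerRel ρ ⊤ c = ⊥) : Inert A := by
  classical
  obtain ⟨_, _, _⟩ := FreeGroup.exists_biOrder X
  rcases hasFreeRank_or_isPartialBasis A (Fintype.card X) with ⟨j, -, α, hα, rfl⟩ | ⟨c, hc⟩
  · obtain ⟨E, _, _, ρ, hρ⟩ := h j (fun l => α (FreeGroup.of l))
      ⟨_, α, id, hα, rfl, injective_id, fun _ => rfl⟩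
    exact inert_of_rel_eq_bot (k := k) hα hρ
  · obtain ⟨E, _, _, ρ, hρ⟩ := h _ c hc
    exact absurd hρ (rel_top_ne_bot ρ c (by simp))

theorem rel_comp_le {G' R J : Type*} [Group G'] [Ring R] [Fintype J] (ρ : G →* R) (η : G' →* G)
    (c : J → G') : DerRel (ρ.comp η) ⊤ c ≤ DerRel ρ ⊤ (η ∘ c) := fun d hd D hD =>
  hd (D ∘ η) fun x _ y _ => by simpa using hD (η x) trivial (η y) trivial

theorem inert_periodicSubgroup {X : Type} [Fintype X] [Encodable X]
    (φ : FreeGroup X →* FreeGroup X) : Inert (periodicSubgroup φ) := by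
  classical
  refine inert_of_forall_isPartialBasis ℚ fun m c hc => ?_
  obtain ⟨K, r, σ, ψ, hσ, hψ, hσψ, hK⟩ := exists_injective_restriction φ
  obtain ⟨_, _, _⟩ := FreeGroup.exists_biOrder (Fin r)
  have hiter : ∀ N w, σ (ψ^[N] w) = φ^[N] (σ w) := fun N w =>
    (Function.Semiconj.iterate_right (f := σ) (ga := ψ) (gb := φ) hσψ N) w
  have hrange : ∀ N, K ≤ N → (φ.iter N).range ≤ σ.range := by
    rintro N hN _ ⟨w, rfl⟩
    rw [hK]
    refine ⟨φ^[N - K] w, ?_⟩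
    rw [MonoidHom.iter_apply, MonoidHom.iter_apply, ← iterate_add_apply, Nat.add_sub_cancel' hN]
  have hper : periodicSubgroup φ ≤ σ.range := by
    rintro g ⟨M, hM, hMg⟩
    have h1 : φ.iter (M * K) g = g := hMg.mul_const K
    exact hrange (M * K) (Nat.le_mul_of_pos_left K hM) ⟨g, h1⟩
  have hmem : ∀ w, w ∈ periodicSubgroup ψ ↔ σ w ∈ periodicSubgroup φ := by
    intro w
    simp only [mem_periodicSubgroup, ← hiter, hσ.eq_iff]
  obtain ⟨M, hM, hMc⟩ := exists_common_period hc.mem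
  obtain ⟨η, hη⟩ := MonoidHom.exists_comp_eq hσ
    (hrange (M * K) (Nat.le_mul_of_pos_left K hM))
  have hσc : ∀ j, σ (η (c j)) = c j := by
    intro j
    have h1 := DFunLike.congr_fun hη (c j)
    have h2 : IsPeriodicPt φ M (c j) := hMc j
    exact h1.trans (h2.mul_const K)
  have hc' : IsPartialBasis (periodicSubgroup ψ) (η ∘ c) := by
    obtain ⟨T, φ₀, i, hφ₀, hr, hi, hci⟩ := hc
    obtain ⟨φ₁, rfl⟩ := MonoidHom.exists_comp_eq hσ (hr.le.trans hper)
    refine ⟨T, φ₁, i, Injective.of_comp (f := σ) hφ₀, ?_, hi, fun j => hσ ?_⟩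
    · ext w
      rw [hmem, ← hr]
      constructor
      · rintro ⟨u, rfl⟩
        exact ⟨u, rfl⟩
      · rintro ⟨u, hu⟩
        exact ⟨u, hσ hu⟩
    · rw [comp_apply, hσc, hci]
      rfl
  refine ⟨MN ℚ (FreeGroup (Fin r)), inferInstance, inferInstance,
    (MN.of ℚ (FreeGroup (Fin r))).comp η, ?_⟩
  rw [eq_bot_iff]
  refine (rel_comp_le _ _ _).trans ?_
  rw [MN.rel_eq_bot_of_periodic hψ hc']

end Periodic

section FiniteOrder

variable {p : ℕ} [hp : Fact p.Prime]

/-- Modulo `p`, an invariant sum over a permutation of order `p` reduces to the fixed points. -/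
theorem sum_eq_sum_fixed {T : Type*} [DecidableEq T] (s : Finset T) (f : T → T)
    (hf : ∀ t, f^[p] t = t) (hs : ∀ t ∈ s, f t ∈ s) (w : T → ZMod p) (hw : ∀ t, w (f t) = w t) :
    ∑ t ∈ s, w t = ∑ t ∈ s with f t = t, w t := by
  have hcard : ∀ z, ((s.filter fun t => w t = z).card : ZMod p) =
      ((s.filter fun t => f t = t).filter fun t => w t = z).card := by
    intro z
    let T' := {t // t ∈ s.filter fun t => w t = z}
    let F : Function.End T' := fun t => ⟨f t.1, by
      have := Finset.mem_filter.mp t.2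
      exact Finset.mem_filter.mpr ⟨hs _ this.1, (hw _).trans this.2⟩⟩
    have hit : ∀ n (t : T'), ((F^[n] t : T') : T) = f^[n] t.1 := by
      intro n
      induction n with
      | zero => exact fun t => rfl
      | succ n ih =>
        intro t
        rw [iterate_succ_apply, iterate_succ_apply, ih]
    have hF : F ^ p ^ 1 = 1 := by
      funext t
      apply Subtype.ext
      have : (F ^ p ^ 1) t = F^[p] t := by
        rw [pow_one]
        exact congrFun (hom_coe_pow (fun g : Function.End T' => (g : T' → T')) rfl
          (fun _ _ => rfl) F p) t
      rw [this, hit, hf]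
      rfl
    have h1 := Equiv.Perm.card_fixedPoints_modEq hF
    rw [← ZMod.natCast_eq_natCast_iff, Fintype.card_coe] at h1
    rw [h1]
    congr 1
    rw [← Fintype.card_coe]
    refine Fintype.card_congr
      { toFun := fun t => ⟨t.1.1, ?_⟩
        invFun := fun t => ⟨⟨t.1, ?_⟩, ?_⟩
        left_inv := fun t => rfl
        right_inv := fun t => rfl }
    · have h2 := Finset.mem_filter.mp t.1.2
      exact Finset.mem_filter.mpr ⟨Finset.mem_filter.mpr ⟨h2.1, congrArg Subtype.val t.2⟩, h2.2⟩
    · have h2 := Finset.mem_filter.mp t.2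
      exact Finset.mem_filter.mpr ⟨(Finset.mem_filter.mp h2.1).1, h2.2⟩
    · have h2 := Finset.mem_filter.mp t.2
      exact Subtype.ext (Finset.mem_filter.mp h2.1).2
  have hsum : ∀ u : Finset T, ∑ t ∈ u, w t =
      ∑ z : ZMod p, ((u.filter fun t => w t = z).card : ZMod p) * z := by
    intro u
    rw [← Finset.sum_fiberwise (s := u) (g := w)]
    refine Finset.sum_congr rfl fun z _ => ?_
    rw [Finset.sum_congr rfl fun t ht => (Finset.mem_filter.mp ht).2, Finset.sum_const,
      nsmul_eq_mul]
  rw [hsum, hsum]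
  exact Finset.sum_congr rfl fun z _ => by rw [hcard]

variable {X : Type*} (α : FreeGroup X →* FreeGroup X)

/-- The orbit of an element, indexed by residues modulo the order. -/
def orbitTuple (p : ℕ) : FreeGroup X →* (ZMod p → FreeGroup X) :=
  MonoidHom.pi fun i => α.iter i.val

variable {α}

theorem orbitTuple_succ (hα : ∀ g, α^[p] g = g) (w : FreeGroup X) (i : ZMod p) :
    orbitTuple α p w (i + 1) = α (orbitTuple α p w i) := by
  change α^[(i + 1).val] w = α (α^[i.val] w)
  have h : IsPeriodicPt α p w := hα w
  rw [← iterate_succ_apply' α, ZMod.val_add, h.iterate_mod_apply]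
  rw [ZMod.val_one]

theorem orbitTuple_of_fixed {a : FreeGroup X} (ha : α a = a) (i : ZMod p) :
    orbitTuple α p a i = a :=
  iterate_fixed ha _

theorem orbitTuple_map (hα : ∀ g, α^[p] g = g) (w : FreeGroup X) (i : ZMod p) :
    orbitTuple α p (α w) i = orbitTuple α p w (i + 1) := by
  rw [orbitTuple_succ hα]
  change α^[i.val] (α w) = α (α^[i.val] w)
  rw [← iterate_succ_apply' α, iterate_succ_apply]

open Classical in
/-- The value of `f` on a tuple of edges that is a translate of a constant one, zero otherwise. -/
noncomputable def tupleWeight (α : FreeGroup X →* FreeGroup X) (f : FreeGroup X × X → ZMod p)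
    (t : ZMod p → FreeGroup X × X) : ZMod p :=
  if h : ∃ s : FreeGroup X × (FreeGroup X × X), ∀ i,
      t i = (orbitTuple α p s.1 i * s.2.1, s.2.2) then f h.choose.2
  else 0

theorem tupleWeight_eq (hα : ∀ g, α^[p] g = g) {f : FreeGroup X × X → ZMod p}
    (hf : ∀ a, α a = a → ∀ g x, f (a * g, x) = f (g, x)) {t : ZMod p → FreeGroup X × X}
    {q g : FreeGroup X} {x : X}
    (h : ∀ i, t i = (orbitTuple α p q i * g, x)) : tupleWeight α f t = f (g, x) := by
  have hex : ∃ s : FreeGroup X × (FreeGroup X × X), ∀ i,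
      t i = (orbitTuple α p s.1 i * s.2.1, s.2.2) :=
    ⟨(q, g, x), h⟩
  rw [tupleWeight, dif_pos hex]
  have hs := hex.choose_spec
  generalize hex.choose = s at hs ⊢
  obtain ⟨q', g', x'⟩ := s
  simp only at hs ⊢
  have h0 : ∀ i, orbitTuple α p (q⁻¹ * q') i = g * g'⁻¹ ∧ x' = x := by
    intro i
    have := (h i).symm.trans (hs i)
    rw [Prod.mk.injEq] at this
    refine ⟨?_, this.2.symm⟩
    rw [map_mul, map_inv, Pi.mul_apply, Pi.inv_apply, eq_mul_inv_iff_mul_eq, mul_assoc, ← this.1,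
      inv_mul_cancel_left]
  obtain ⟨h1, rfl⟩ := h0 0
  have h2 := (h0 (0 + 1)).1
  rw [orbitTuple_succ hα, h1] at h2
  have := hf _ h2 g' x'
  rwa [inv_mul_cancel_right, eq_comm] at this

theorem tupleWeight_translate (hα : ∀ g, α^[p] g = g) {f : FreeGroup X × X → ZMod p}
    (hf : ∀ a, α a = a → ∀ g x, f (a * g, x) = f (g, x)) (w : FreeGroup X)
    (t : ZMod p → FreeGroup X × X) :
    tupleWeight α f (fun i => (orbitTuple α p w i * (t i).1, (t i).2)) = tupleWeight α f t := by
  by_cases hex : ∃ s : FreeGroup X × (FreeGroup X × X), ∀ i,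
      t i = (orbitTuple α p s.1 i * s.2.1, s.2.2)
  · obtain ⟨⟨q, g, x⟩, h⟩ := hex
    rw [tupleWeight_eq hα hf h]
    refine tupleWeight_eq hα hf (q := w * q) fun i => ?_
    rw [h, map_mul, Pi.mul_apply, mul_assoc]
  · have hex' : ¬∃ s : FreeGroup X × (FreeGroup X × X), ∀ i,
        (orbitTuple α p w i * (t i).1, (t i).2) =
        (orbitTuple α p s.1 i * s.2.1, s.2.2) := by
      rintro ⟨⟨q, g, x⟩, h⟩
      refine hex ⟨⟨w⁻¹ * q, g, x⟩, fun i => ?_⟩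
      have := h i
      rw [Prod.mk.injEq] at this
      refine Prod.ext ?_ this.2
      simp only
      rw [map_mul, map_inv, Pi.mul_apply, Pi.inv_apply, mul_assoc, ← this.1, inv_mul_cancel_left]
    rw [tupleWeight, tupleWeight, dif_neg hex, dif_neg hex']

theorem tupleWeight_rotate (hα : ∀ g, α^[p] g = g) {f : FreeGroup X × X → ZMod p}
    (hf : ∀ a, α a = a → ∀ g x, f (a * g, x) = f (g, x)) (t : ZMod p → FreeGroup X × X) :
    tupleWeight α f (fun i => t (i + 1)) = tupleWeight α f t := by
  by_cases hex : ∃ s : FreeGroup X × (FreeGroup X × X), ∀ i,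
      t i = (orbitTuple α p s.1 i * s.2.1, s.2.2)
  · obtain ⟨⟨q, g, x⟩, h⟩ := hex
    rw [tupleWeight_eq hα hf h]
    refine tupleWeight_eq hα hf (q := α q) fun i => ?_
    rw [h, orbitTuple_map hα]
  · have hex' : ¬∃ s : FreeGroup X × (FreeGroup X × X), ∀ i, t (i + 1) =
        (orbitTuple α p s.1 i * s.2.1, s.2.2) := by
      rintro ⟨⟨q, g, x⟩, h⟩
      refine hex ⟨⟨α^[p - 1] q, g, x⟩, fun i => ?_⟩
      have := h (i - 1)
      rw [sub_add_cancel] at this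
      rw [this]
      simp only
      have h2 : α (α^[p - 1] q) = q := by
        rw [← iterate_succ_apply' α, Nat.succ_eq_add_one, Nat.sub_add_cancel hp.out.one_le, hα]
      nth_rw 1 [← h2]
      rw [orbitTuple_map hα, sub_add_cancel]
    rw [tupleWeight, tupleWeight, dif_neg hex, dif_neg hex']

variable (α)

/-- The product of the multiplicities of the edges `t i` in the paths from `α (t (i - 1)).1` to
`v i`. -/
noncomputable def pathProd (v : ZMod p → FreeGroup X) (t : ZMod p → FreeGroup X × X) : ZMod p :=
  ∏ i, ((FreeGroup.path (v i) (t i) - FreeGroup.path (α (t (i - 1)).1) (t i) : ℤ) : ZMod p)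

variable {α}

theorem pathProd_translate (hα : ∀ g, α^[p] g = g) (w : FreeGroup X) (v : ZMod p → FreeGroup X)
    (t : ZMod p → FreeGroup X × X) :
    pathProd α (orbitTuple α p w * v) (fun i => (orbitTuple α p w i * (t i).1, (t i).2)) =
      pathProd α v t := by
  refine Finset.prod_congr rfl fun i _ => ?_
  congr 1
  have h : α (orbitTuple α p w (i - 1)) = orbitTuple α p w i := by
    rw [← orbitTuple_succ hα, sub_add_cancel]
  simp only [Pi.mul_apply, map_mul, h, FreeGroup.path_mul, Finsupp.add_apply,
    FreeGroup.translate_apply, inv_mul_cancel_left]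
  ring

theorem pathProd_rotate (a : FreeGroup X) (t : ZMod p → FreeGroup X × X) :
    pathProd α (fun _ => a) (fun i => t (i + 1)) = pathProd α (fun _ => a) t := by
  refine Fintype.prod_equiv (Equiv.addRight 1) _ _ fun i => ?_
  simp

/-- Two path products differ at finitely many tuples only. -/
theorem finite_pathProd_ne (v v' : ZMod p → FreeGroup X) :
    {t | pathProd α v t ≠ pathProd α v' t}.Finite := by
  classical
  let S : Finset (FreeGroup X × X) := Finset.univ.biUnion fun i =>
    (FreeGroup.path (v i)).support ∪ (FreeGroup.path (v' i)).support
  let N : Finset (FreeGroup X × X) → Finset (FreeGroup X × X) := fun U =>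
    S ∪ U.biUnion fun e => (FreeGroup.path (α e.1)).support
  let U : Finset (FreeGroup X × X) := (Finset.range p).biUnion fun n => N^[n] S
  refine (Set.Finite.pi fun _ : ZMod p => U.finite_toSet).subset ?_
  intro t ht
  have hS : ∀ i, t i ∉ S → FreeGroup.path (v i) (t i) = 0 ∧ FreeGroup.path (v' i) (t i) = 0 := by
    intro i hi
    simp only [S, Finset.mem_biUnion, Finset.mem_univ, true_and, Finset.mem_union,
      Finsupp.mem_support_iff, not_exists, not_or, not_not] at hi
    exact hi i
  obtain ⟨m, hm⟩ : ∃ m, t m ∈ S := by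
    by_contra! h
    refine ht (Finset.prod_congr rfl fun i _ => ?_)
    rw [(hS i (h i)).1, (hS i (h i)).2]
  have hstep : ∀ i, t i ∈ S ∨ FreeGroup.path (α (t (i - 1)).1) (t i) ≠ 0 := by
    by_contra! h
    obtain ⟨i, h1, h2⟩ := h
    refine ht ?_
    rw [pathProd, pathProd, Finset.prod_eq_zero (Finset.mem_univ i),
      Finset.prod_eq_zero (Finset.mem_univ i)]
    · rw [(hS i h1).2, h2]
      simp
    · rw [(hS i h1).1, h2]
      simp
  have hN : ∀ n : ℕ, t (m + n) ∈ N^[n] S := by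
    intro n
    induction n with
    | zero => simpa using hm
    | succ n ih =>
      rw [iterate_succ_apply']
      rcases hstep (m + (n + 1 : ℕ)) with h | h
      · exact Finset.mem_union_left _ h
      · refine Finset.mem_union_right _ (Finset.mem_biUnion.mpr ⟨_, ih, ?_⟩)
        have h3 : m + ((n + 1 : ℕ) : ZMod p) - 1 = m + n := by
          push_cast
          ring
        rw [h3] at h
        exact Finsupp.mem_support_iff.mpr h
  intro i _
  have h4 := hN (i - m).val
  rw [ZMod.natCast_zmod_val, add_sub_cancel] at h4
  exact Finset.mem_biUnion.mpr ⟨_, Finset.mem_range.mpr (ZMod.val_lt _), h4⟩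

/-- Homomorphisms to `ZMod p` extend from the fixed subgroup of an automorphism of order `p`. -/
theorem exists_isDerOn_extension (hα : ∀ g, α^[p] g = g) {δ : FreeGroup X → ZMod p}
    (hδ : IsDerOn 1 (α.eqLocus (MonoidHom.id (FreeGroup X))) δ) :
    ∃ μ : FreeGroup X → ZMod p, IsDerOn 1 ⊤ μ ∧
      ∀ a ∈ α.eqLocus (MonoidHom.id (FreeGroup X)), μ a = δ a := by
  classical
  obtain ⟨τ, -, hτA, hτ⟩ := (α.eqLocus (MonoidHom.id (FreeGroup X))).exists_right_transversal
  let h : FreeGroup X → ZMod p := fun g => δ (g * (τ g)⁻¹)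
  have hh : ∀ a ∈ α.eqLocus (MonoidHom.id (FreeGroup X)), ∀ g, h (a * g) = δ a + h g := by
    intro a ha g
    simp only [h, hτA a ha, mul_assoc]
    simpa using hδ a ha _ (hτ g)
  let f : FreeGroup X × X → ZMod p := fun e => h (e.1 * FreeGroup.of e.2) - h e.1
  have hf : ∀ a, α a = a → ∀ g x, f (a * g, x) = f (g, x) := by
    intro a ha g x
    simp only [f, mul_assoc]
    rw [hh a ha, hh a ha]
    ring
  let Ψ : (ZMod p → FreeGroup X) → (ZMod p → FreeGroup X) → ZMod p := fun v v' =>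
    ∑ᶠ t, (pathProd α v t - pathProd α v' t) * tupleWeight α f t
  have hfin : ∀ v v', (support fun t =>
      (pathProd α v t - pathProd α v' t) * tupleWeight α f t).Finite := by
    intro v v'
    refine (finite_pathProd_ne (α := α) v v').subset fun t ht => ?_
    exact sub_ne_zero.mp (left_ne_zero_of_mul ht)
  have hΨ : ∀ v v' v'', Ψ v v'' = Ψ v v' + Ψ v' v'' := by
    intro v v' v''
    rw [← finsum_add_distrib (hfin v v') (hfin v' v'')]
    refine finsum_congr fun t => ?_
    ring
  have hΨw : ∀ w v v', Ψ (orbitTuple α p w * v) (orbitTuple α p w * v') = Ψ v v' := by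
    intro w v v'
    let e : (ZMod p → FreeGroup X × X) ≃ (ZMod p → FreeGroup X × X) :=
      { toFun := fun t i => (orbitTuple α p w i * (t i).1, (t i).2)
        invFun := fun t i => ((orbitTuple α p w i)⁻¹ * (t i).1, (t i).2)
        left_inv := fun t => by simp
        right_inv := fun t => by simp }
    refine (finsum_comp_equiv e).symm.trans (finsum_congr fun t => ?_)
    simp only [e, Equiv.coe_fn_mk]
    rw [pathProd_translate hα, pathProd_translate hα, tupleWeight_translate hα hf]
  refine ⟨fun q => Ψ (orbitTuple α p q) 1, fun q _ r _ => ?_, fun a ha => ?_⟩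
  · have := hΨw q (orbitTuple α p r) 1
    rw [mul_one] at this
    simp only [map_mul, MonoidHom.one_apply, one_mul]
    rw [hΨ _ (orbitTuple α p q), this, add_comm]
  · have hconst : orbitTuple α p a = fun _ => a := funext fun i => orbitTuple_of_fixed ha i
    have hone : (1 : ZMod p → FreeGroup X) = fun _ => 1 := rfl
    simp only [hconst, hone]
    let w : (ZMod p → FreeGroup X × X) → ZMod p := fun t =>
      (pathProd α (fun _ => a) t - pathProd α (fun _ => 1) t) * tupleWeight α f t
    let rot : (ZMod p → FreeGroup X × X) → (ZMod p → FreeGroup X × X) := fun t i => t (i + 1)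
    have hrot : ∀ n t i, rot^[n] t i = t (i + n) := by
      intro n
      induction n with
      | zero => simp
      | succ n ih =>
        intro t i
        rw [iterate_succ_apply, ih]
        simp only [rot]
        push_cast
        ring_nf
    have hne : ∀ t, pathProd α (fun _ => a) (rot t) = pathProd α (fun _ => a) t ∧
        pathProd α (fun _ => 1) (rot t) = pathProd α (fun _ => 1) t := fun t =>
      ⟨pathProd_rotate a t, pathProd_rotate 1 t⟩
    let s := (finite_pathProd_ne (α := α) (p := p) (fun _ => a) (fun _ => 1)).toFinset
    have hw : ∀ e : FreeGroup X × X, pathProd (p := p) α (fun _ => a) (fun _ => e) -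
        pathProd (p := p) α (fun _ => 1) (fun _ => e) = FreeGroup.path a e := by
      intro e
      simp only [pathProd, Finset.prod_const, Finset.card_univ, ZMod.card, ZMod.pow_card,
        FreeGroup.path_one]
      push_cast
      simp
    have hΨs : Ψ (fun _ => a) (fun _ => 1) = ∑ t ∈ s, w t := by
      refine finsum_eq_sum_of_support_subset _ fun t ht => ?_
      rw [Set.Finite.coe_toFinset]
      exact sub_ne_zero.mp (left_ne_zero_of_mul ht)
    rw [hΨs, sum_eq_sum_fixed s rot]
    · have h1 := FreeGroup.integral_path_sub h 1 a
      have h2 := hh a ha 1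
      simp only [one_mul] at h1
      rw [mul_one] at h2
      have h3 : δ a = ∑ e ∈ (FreeGroup.path a).support, (FreeGroup.path a e : ZMod p) * f e := by
        rw [FreeGroup.integral_eq_sum _ _ subset_rfl, h2, add_sub_cancel_right] at h1
        rw [← h1]
        exact Finset.sum_congr rfl fun e _ => zsmul_eq_mul _ _
      have hfix : ∀ t, rot t = t → t = fun _ => t 0 := by
        intro t ht
        funext i
        have h4 := hrot i.val t 0
        rw [iterate_fixed ht, zero_add, ZMod.natCast_zmod_val] at h4
        exact h4.symm
      have hwe : ∀ e : FreeGroup X × X, w (fun _ => e) = (FreeGroup.path a e : ZMod p) * f e := by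
        intro e
        simp only [w, hw]
        rw [tupleWeight_eq hα hf (q := 1) (g := e.1) (x := e.2) fun i => by simp]
      rw [h3, ← Finset.sum_filter_of_ne (p := fun e => (FreeGroup.path a e : ZMod p) ≠ 0)
        fun e _ he => left_ne_zero_of_mul he]
      refine Finset.sum_bij' (fun t _ => t 0) (fun e _ => fun _ => e) ?_ ?_ ?_ ?_ ?_
      · intro t ht
        obtain ⟨ht1, ht2⟩ := Finset.mem_filter.mp ht
        have h5 : pathProd α (fun _ => a) t ≠ pathProd α (fun _ => 1) t :=
          (Set.Finite.mem_toFinset _).mp ht1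
        rw [hfix t ht2, ← sub_ne_zero, hw] at h5
        refine Finset.mem_filter.mpr ⟨Finsupp.mem_support_iff.mpr fun h0 => h5 ?_, h5⟩
        rw [h0, Int.cast_zero]
      · intro e he
        refine Finset.mem_filter.mpr ⟨(Set.Finite.mem_toFinset _).mpr ?_, rfl⟩
        rw [Set.mem_ofPred_eq, ← sub_ne_zero, hw]
        exact (Finset.mem_filter.mp he).2
      · intro t ht
        exact (hfix t (Finset.mem_filter.mp ht).2).symm
      · intro e _
        rfl
      · intro t ht
        rw [← hwe, ← hfix t (Finset.mem_filter.mp ht).2]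
    · intro t
      funext i
      rw [hrot, CharP.cast_eq_zero, add_zero]
    · intro t ht
      have ht := (Set.Finite.mem_toFinset _).mp ht
      refine (Set.Finite.mem_toFinset _).mpr ?_
      rw [Set.mem_ofPred_eq, (hne t).1, (hne t).2]
      exact ht
    · intro t
      simp only [w]
      rw [(hne t).1, (hne t).2]
      exact congrArg _ (tupleWeight_rotate hα hf t)

end FiniteOrder

theorem inert_fixed_of_prime_order {p : ℕ} [Fact p.Prime] {X : Type} [Fintype X] [Encodable X]
    {α : FreeGroup X →* FreeGroup X} (hα : ∀ g, α^[p] g = g) :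
    Inert (α.eqLocus (MonoidHom.id (FreeGroup X))) := by
  refine inert_of_forall_isPartialBasis (ZMod p) fun m c hc =>
    ⟨ZMod p, inferInstance, inferInstance, 1, ?_⟩
  rw [Submodule.eq_bot_iff]
  intro d hd
  funext j₀
  obtain ⟨δ, h1, h2⟩ := hc.exists_isDerOn (1 : FreeGroup X →* ZMod p) j₀
  obtain ⟨μ, hμ, hμδ⟩ := exists_isDerOn_extension hα h1
  have := hd μ hμ
  simpa [hμδ _ (hc.mem _), h2] using this

section SingleEndomorphism

theorem HasFreeRank.map {G G' : Type*} [Group G] [Group G'] {H : Subgroup G} {m : ℕ}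
    (h : HasFreeRank H m) {η : G →* G'} (hη : Injective η) : HasFreeRank (H.map η) m := by
  obtain ⟨θ, hθ, rfl⟩ := h
  exact ⟨η.comp θ, hη.comp hθ, MonoidHom.range_comp η θ⟩

theorem Inert.map {G G' : Type*} [Group G] [Group G'] {η : G →* G'} (hη : Injective η)
    (hr : Inert η.range) {A : Subgroup G} (hA : Inert A) : Inert (A.map η) := by
  intro H m hH
  obtain ⟨j, hj, θ, hθ, hθr⟩ := hr H m hH
  obtain ⟨θ', rfl⟩ := MonoidHom.exists_comp_eq hη (hθr.le.trans inf_le_right)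
  obtain ⟨i, hi, h⟩ := hA θ'.range j ⟨θ', Injective.of_comp (f := η) hθ, rfl⟩
  refine ⟨i, hi.trans hj, ?_⟩
  have h1 := h.map hη
  rw [Subgroup.map_inf _ _ _ hη, ← MonoidHom.range_comp, hθr, inf_assoc,
    inf_eq_right.mpr (Subgroup.map_le_range η A)] at h1
  exact h1

/-- An endomorphism preserving an inert subgroup that contains its fixed points can be studied on
that subgroup. -/
theorem exists_restriction_of_inert {n : ℕ} {φ : FreeGroup (Fin n) →* FreeGroup (Fin n)}
    {B : Subgroup (FreeGroup (Fin n))} (hB : Inert B) (hφ : ∀ g ∈ B, φ g ∈ B)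
    (hfix : φ.eqLocus (MonoidHom.id _) ≤ B) :
    ∃ (b : ℕ) (η : FreeGroup (Fin b) →* FreeGroup (Fin n))
      (α : FreeGroup (Fin b) →* FreeGroup (Fin b)), Injective η ∧ η.range = B ∧
      (∀ N w, η (α^[N] w) = φ^[N] (η w)) ∧
      (Inert (α.eqLocus (MonoidHom.id _)) → Inert (φ.eqLocus (MonoidHom.id _))) := by
  obtain ⟨b, -, η, hη, hr⟩ := hB ⊤ n
    ⟨MonoidHom.id _, injective_id, MonoidHom.range_eq_top.mpr surjective_id⟩
  rw [top_inf_eq] at hr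
  obtain ⟨α, hα⟩ := MonoidHom.exists_comp_eq hη (f := φ.comp η) (by
    rintro _ ⟨w, rfl⟩
    rw [hr]
    exact hφ _ (hr ▸ ⟨w, rfl⟩))
  have hα' : ∀ w, η (α w) = φ (η w) := DFunLike.congr_fun hα
  refine ⟨b, η, α, hη, hr, fun N w =>
    (Function.Semiconj.iterate_right (f := η) (ga := α) (gb := φ) hα' N) w, fun h => ?_⟩
  have : φ.eqLocus (MonoidHom.id _) = (α.eqLocus (MonoidHom.id _)).map η := by
    ext g
    constructor
    · intro hg
      obtain ⟨w, rfl⟩ := hr.ge (hfix hg)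
      exact ⟨w, hη ((hα' w).trans hg), rfl⟩
    · rintro ⟨w, hw, rfl⟩
      exact (hα' w).symm.trans (congrArg η hw)
  rw [this]
  exact Inert.map hη (hr ▸ hB) h

theorem inert_fixed_of_finite_order (N : ℕ) : ∀ {n : ℕ}
    {α : FreeGroup (Fin n) →* FreeGroup (Fin n)}, 0 < N → (∀ g, α^[N] g = g) →
      Inert (α.eqLocus (MonoidHom.id _)) := by
  induction N using Nat.strong_induction_on with
  | _ N ih =>
    intro n α hN hα
    by_cases h1 : N = 1
    · have : α.eqLocus (MonoidHom.id _) = ⊤ := by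
        rw [eq_top_iff]
        intro g _
        have := hα g
        rwa [h1] at this
      rw [this]
      intro H m hH
      exact ⟨m, le_rfl, by rwa [inf_top_eq]⟩
    · obtain ⟨p, hp, N', rfl⟩ := Nat.exists_prime_and_dvd h1
      have : Fact p.Prime := ⟨hp⟩
      have hN' : 0 < N' := Nat.pos_of_mul_pos_left hN
      have hB := inert_fixed_of_prime_order (p := p) (α := α.iter N') fun g => by
        change (α^[N'])^[p] g = g
        rw [← iterate_mul, mul_comm, hα]
      obtain ⟨b, η, β, hη, hr, hβ, hconcl⟩ := exists_restriction_of_inert (φ := α) hB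
        (fun g hg => by
          have hg : α^[N'] g = g := hg
          change α^[N'] (α g) = α g
          rw [← iterate_succ_apply, iterate_succ_apply', hg])
        (fun g hg => iterate_fixed hg N')
      refine hconcl (ih N' (lt_mul_of_one_lt_left hN' hp.one_lt) hN' fun w => hη ?_)
      rw [hβ]
      exact hr.le ⟨w, rfl⟩

theorem inert_fixed {n : ℕ} (φ : FreeGroup (Fin n) →* FreeGroup (Fin n)) :
    Inert (φ.eqLocus (MonoidHom.id _)) := by
  obtain ⟨b, η, α, hη, hr, hα, hconcl⟩ := exists_restriction_of_inert (φ := φ)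
    (inert_periodicSubgroup φ)
    (fun g ⟨M, hM, hMg⟩ => ⟨M, hM, by
      have hMg : φ^[M] g = g := hMg
      change φ^[M] (φ g) = φ g
      rw [← iterate_succ_apply, iterate_succ_apply', hMg]⟩)
    (fun g hg => ⟨1, Nat.one_pos, hg⟩)
  obtain ⟨M, hM, hMη⟩ := exists_common_period (φ := φ) (c := fun i => η (FreeGroup.of i))
    fun i => hr.le ⟨_, rfl⟩
  refine hconcl (inert_fixed_of_finite_order M hM fun g => ?_)
  have : α.iter M = MonoidHom.id _ := FreeGroup.ext_hom _ _ fun i => hη (by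
    rw [MonoidHom.iter_apply, hα, hMη, MonoidHom.id_apply])
  exact DFunLike.congr_fun this g

end SingleEndomorphism

section Families

/-- The rank does not grow when passing to the intersection of a descending sequence. -/
theorem hasFreeRank_iInf_of_antitone {X : Type} [Fintype X] [Encodable X]
    {H : ℕ → Subgroup (FreeGroup X)} (hH : Antitone H) {m : ℕ}
    (hr : ∀ i, ∃ j ≤ m, HasFreeRank (H i) j) : ∃ j ≤ m, HasFreeRank (⨅ i, H i) j := by
  classical
  obtain ⟨_, _, _⟩ := FreeGroup.exists_biOrder X
  refine (hasFreeRank_or_isPartialBasis (⨅ i, H i) m).resolve_right ?_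
  rintro ⟨c, hc⟩
  choose r hrm α hα hαr using hr
  have hcH : ∀ i j, c j ∈ (α i).range := fun i j => hαr i ▸ iInf_le H i (hc.mem j)
  choose b hb using hcH
  have hbc : ∀ i, α i ∘ b i = c := fun i => funext (hb i)
  let K : ℕ → Submodule (MN ℚ (FreeGroup X)) (Fin (m + 1) → MN ℚ (FreeGroup X)) := fun i =>
    DerRel (MN.of ℚ (FreeGroup X)) (H i) c
  have hKα : ∀ i, K i = DerRel ((MN.of ℚ (FreeGroup X)).comp (α i)) ⊤ (b i) := by
    intro i
    rw [← rel_range _ (hα i), hbc, hαr]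
  have hK : Antitone K := fun i j hij => rel_mono _ (hH hij) _
  obtain ⟨i₀, hi₀⟩ := IsArtinian.monotone_stabilizes ⟨fun i => OrderDual.toDual (K i), hK⟩
  have hi₀ : ∀ i, i₀ ≤ i → K i₀ = K i := hi₀
  have hne : K i₀ ≠ ⊥ := by
    rw [hKα]
    exact rel_top_ne_bot _ _ (by simpa using Nat.lt_succ_of_le (hrm i₀))
  obtain ⟨d, hd, j₀, hj₀, hmin⟩ := exists_minimal_vector hne
  have hproj : ∀ i, i₀ ≤ i → ∀ j, MN.proj (H i) (d j) = d j := by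
    intro i hi
    have h1 : d ∈ K i := hi₀ i hi ▸ hd
    rw [hKα] at h1
    have h2 := MN.proj_mem_rel_top (hαr i).le h1
    rw [← hKα, ← hi₀ i hi] at h2
    have h3 := hmin _ h2 fun j hj => by simp [hj]
    simp only [hj₀, MN.proj_one, one_smul] at h3
    exact congrFun h3
  have hprojC : ∀ j, MN.proj (⨅ i, H i) (d j) = d j := by
    intro j
    rw [MN.proj_eq_self_iff]
    intro a ha
    refine Subgroup.mem_iInf.mpr fun i => hH (le_max_left i i₀) ?_
    exact MN.proj_eq_self_iff.mp (hproj _ (le_max_right i i₀) j) a ha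
  have hd0 : d = 0 := by
    refine MN.eq_zero_of_mem_rel (hα i₀) (H := ⨅ i, H i) (c := c)
      (fun j => ⟨⟨b i₀ j, hb i₀ j⟩, hc.mem j⟩) (fun j₁ => ?_) ?_ ?_
    · obtain ⟨δ, h1, h2⟩ := hc.exists_isDerOn (MN.of ℚ (FreeGroup X)) j₁
      exact ⟨δ, h1.mono inf_le_right, h2⟩
    · rw [hαr]
      exact hd
    · intro y hy a ha
      exact MN.proj_eq_self_iff.mp
        (MN.proj_eq_self_of_mem_closure inf_le_right hprojC hy) a ha.1
  rw [hd0] at hj₀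
  exact zero_ne_one hj₀

theorem inert_fixedSubgroup {n : ℕ} {ι : Type*}
    (S : ι → (FreeGroup (Fin n) →* FreeGroup (Fin n))) : Inert (fixedSubgroup S) := by
  intro H m hH
  have : Countable (FreeGroup (Fin n)) := (FreeGroup.toWord_injective (α := Fin n)).countable
  have : Countable (FreeGroup (Fin n) →* FreeGroup (Fin n)) :=
    (FreeGroup.lift (α := Fin n) (β := FreeGroup (Fin n))).symm.injective.countable
  rcases isEmpty_or_nonempty ι with hι | hι
  · have : fixedSubgroup S = ⊤ := eq_top_iff.mpr fun g _ i => isEmptyElim i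
    exact ⟨m, le_rfl, by rwa [this, inf_top_eq]⟩
  obtain ⟨φ, hφ⟩ := (Set.to_countable (Set.range S)).exists_eq_range (Set.range_nonempty S)
  let A : ℕ → Subgroup (FreeGroup (Fin n)) := fun i =>
    H ⊓ ⨅ l : Fin i, (φ l).eqLocus (MonoidHom.id _)
  have hA : Antitone A := by
    refine fun i j hij => inf_le_inf_left _ (le_iInf fun l => ?_)
    exact iInf_le (fun l : Fin j => (φ l).eqLocus (MonoidHom.id _)) (Fin.castLE hij l)
  have hrank : ∀ i, ∃ j ≤ m, HasFreeRank (A i) j := by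
    intro i
    induction i with
    | zero => exact ⟨m, le_rfl, by simpa [A] using hH⟩
    | succ i ih =>
      obtain ⟨j, hj, h⟩ := ih
      obtain ⟨j', hj', h'⟩ := inert_fixed (φ i) (A i) j h
      refine ⟨j', hj'.trans hj, ?_⟩
      convert h' using 1
      ext g
      simp [A, Subgroup.mem_iInf, Fin.forall_fin_succ', and_assoc]
  have hinf : ⨅ i, A i = H ⊓ fixedSubgroup S := by
    ext g
    simp only [A, Subgroup.mem_iInf, Subgroup.mem_inf]
    constructor
    · intro h
      refine ⟨(h 0).1, fun i => ?_⟩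
      obtain ⟨l, hl⟩ := hφ.le ⟨i, rfl⟩
      rw [← hl]
      exact (h (l + 1)).2 (Fin.last l)
    · rintro ⟨h1, h2⟩ i
      refine ⟨h1, fun l => ?_⟩
      obtain ⟨i', hi'⟩ := hφ.ge ⟨l, rfl⟩
      change φ l g = g
      rw [← hi']
      exact h2 i'
  rw [← hinf]
  exact hasFreeRank_iInf_of_antitone hA hrank

end Families

theorem rank_inter_fix_le {n : ℕ} (hn : 2 ≤ n) {ι : Type*}
    (S : ι → (FreeGroup (Fin n) →* FreeGroup (Fin n)))
    (H : Subgroup (FreeGroup (Fin n)))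
    (m : ℕ) (hm : m ≤ 3) (hH : HasFreeRank H m) :
    ∃ j ≤ m, HasFreeRank (H ⊓ fixedSubgroup S) j :=
  inert_fixedSubgroup S H m hH
end
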